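/- arXiv:2209.02171 — 2 statements merged into one kernel-verified Lean document; each statement's English description precedes it below -/
import Mathlib

section
/- Let F be a finite field with q elements of odd characteristic and let a₁, a₂, b₁, b₂ ∈ Fˣ satisfy a₁ ≠ a₂, b₁ ≠ b₂, a₁a₂b₁b₂ = 1, and a_i b_j ≠ 1 for all i, j ∈ {1,2}. Let C₁, C₂ be the conjugacy classes of diag(a₁,a₂) and diag(b₁,b₂) in GL₂(F) and let C₃ = C₄ be the regular unipotent conjugacy class. Then the number of quadruples (S₁, S₂, S₃, S₄) ∈ C₁ × C₂ × C₃ × C₄ with S₁S₂S₃S₄ = 1 equals (q³ − q)(q² + 2q − 1). -/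
/-!
The class of `diag(a₁, a₂)` consists of all matrices with the same trace and determinant, so by
simultaneous conjugation it is enough to fix `S₁ = D := diag(a₁, a₂)` and count the triples
`(X, U, V)` with `D X U V = 1`. Given `X`, this is the number of regular unipotent `U` such that
`M U` is regular unipotent, where `M := D X`; since `det M = 1`, the only real condition is
`tr (M U) = 2`.

A regular unipotent matrix is `1 + c N_v`, for a unique line `[v]` and a unique unit `c`, where
`N_v u := (v ∧ u) v` for the area form `∧` on `F²`. As `tr (M N_v) = v ∧ M v`, the number of `U`
depends only on `tr M` and on the number of `M`-stable lines. Summing the latter over `X` amounts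
to counting, for each line `[v]`, the `X` which send `v` into the line of `D⁻¹ v`. The former is
where genericity enters: `tr (D X) = 2` would prescribe the entry `X₀₀`, and the prescribed value is
not an eigenvalue of `X`.
-/

open Finset Matrix
open scoped LinearAlgebra.Projectivization

namespace GL2Count

section CommRing

variable {R : Type*} [CommRing R]

/-- The area form `v ∧ w`. Over a field, the line `[v]` is stable under `M` iff `v ∧ M v = 0`. -/
def wedge (v w : Fin 2 → R) : R := v 0 * w 1 - v 1 * w 0

lemma wedge_self (v : Fin 2 → R) : wedge v v = 0 := by
  rw [wedge]; ring

lemma wedge_mulVec_right (A : Matrix (Fin 2) (Fin 2) R) (v w : Fin 2 → R) :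
    wedge v (A *ᵥ w) = wedge (A.adjugate *ᵥ v) w := by
  simp only [wedge, adjugate_fin_two, mulVec, dotProduct, Fin.sum_univ_two, of_apply, cons_val',
    cons_val_zero, cons_val_one, cons_val_fin_one]
  ring

/-- The matrix of `u ↦ (v ∧ u) v`. Over a field, the nonzero nilpotent `2 × 2` matrices are the unit
multiples of these, with kernel and image the line `[v]`. -/
def rankOneNilpotent (v : Fin 2 → R) : Matrix (Fin 2) (Fin 2) R := vecMulVec v ![-v 1, v 0]

lemma rankOneNilpotent_eq (v : Fin 2 → R) :
    rankOneNilpotent v = !![-(v 0 * v 1), v 0 ^ 2; -v 1 ^ 2, v 0 * v 1] := by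
  ext i j
  fin_cases i <;> fin_cases j <;> simp [rankOneNilpotent, vecMulVec_apply] <;> ring

lemma trace_mul_rankOneNilpotent (M : Matrix (Fin 2) (Fin 2) R) (v : Fin 2 → R) :
    (M * rankOneNilpotent v).trace = wedge v (M *ᵥ v) := by
  rw [rankOneNilpotent, mul_vecMulVec, trace_vecMulVec, wedge, dotProduct, Fin.sum_univ_two]
  simp only [cons_val_zero, cons_val_one]
  ring

lemma trace_rankOneNilpotent (v : Fin 2 → R) : (rankOneNilpotent v).trace = 0 := by
  simpa [wedge_self] using trace_mul_rankOneNilpotent 1 v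

lemma det_rankOneNilpotent (v : Fin 2 → R) : (rankOneNilpotent v).det = 0 :=
  det_vecMulVec _ _

lemma rankOneNilpotent_mulVec (v u : Fin 2 → R) : rankOneNilpotent v *ᵥ u = wedge v u • v := by
  rw [rankOneNilpotent, vecMulVec_mulVec, op_smul_eq_smul, wedge, dotProduct, Fin.sum_univ_two]
  simp only [cons_val_zero, cons_val_one]
  congr 1
  ring

lemma rankOneNilpotent_smul (a : R) (v : Fin 2 → R) :
    rankOneNilpotent (a • v) = a ^ 2 • rankOneNilpotent v := by
  ext i j
  fin_cases i <;> fin_cases j <;> simp [rankOneNilpotent_eq] <;> ring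

lemma rankOneNilpotent_mulVec_of_nilpotent {N : Matrix (Fin 2) (Fin 2) R} (htrace : N.trace = 0)
    (hdet : N.det = 0) (u : Fin 2 → R) :
    rankOneNilpotent (N *ᵥ u) = wedge (N *ᵥ u) u • N := by
  rw [trace_fin_two] at htrace
  rw [det_fin_two] at hdet
  ext i j
  fin_cases i <;> fin_cases j <;>
    simp [rankOneNilpotent_eq, wedge, mulVec, dotProduct] <;> grind

variable {n : Type*} [Fintype n] [DecidableEq n]

lemma mul_eq_one_iff_eq_adjugate {X Y : Matrix n n R} (hX : X.det = 1) :
    X * Y = 1 ↔ Y = X.adjugate := by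
  constructor
  · intro h
    rw [← mul_one X.adjugate, ← h, ← mul_assoc, adjugate_mul, hX, one_smul, one_mul]
  · rintro rfl
    rw [mul_adjugate, hX, one_smul]

lemma trace_eq_and_det_eq_of_isConj {A X : Matrix n n R} (h : IsConj A X) :
    X.trace = A.trace ∧ X.det = A.det := by
  obtain ⟨P, hP⟩ := h
  rw [← (Units.mul_inv_eq_iff_eq_mul P).mpr hP]
  exact ⟨trace_units_conj P A, det_units_conj P A⟩

lemma eq_scalar_of_isConj_scalar {A : Matrix n n R} {c : R}
    (h : IsConj A (scalar n c)) : A = scalar n c := by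
  obtain ⟨P, hP⟩ := h
  apply P.isUnit.mul_left_cancel
  rw [hP.eq, (scalar_commute c (fun r ↦ mul_comm _ _) _).eq]

end CommRing

section Field

variable {F : Type*} [Field F]

/-! ### Conjugacy classes of `2 × 2` matrices -/

lemma exists_wedge_mulVec_ne_zero {A : Matrix (Fin 2) (Fin 2) F}
    (hA : A ∉ Set.range (scalar (Fin 2))) : ∃ v, wedge v (A *ᵥ v) ≠ 0 := by
  by_contra! h
  have h10 : A 1 0 = 0 := by simpa [wedge, mulVec, dotProduct] using h ![1, 0]
  have h01 : A 0 1 = 0 := by simpa [wedge, mulVec, dotProduct] using h ![0, 1]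
  have h11 : A 1 1 - A 0 0 = 0 := by simpa [wedge, mulVec, dotProduct, h10, h01] using h ![1, 1]
  refine hA ⟨A 0 0, ?_⟩
  ext i j
  fin_cases i <;> fin_cases j <;> simp [h10, h01, sub_eq_zero.mp h11]

-- In the basis `v, A v`, the matrix `A` becomes its companion matrix.
lemma isConj_companion {A : Matrix (Fin 2) (Fin 2) F} {v : Fin 2 → F}
    (hv : wedge v (A *ᵥ v) ≠ 0) : IsConj !![0, -A.det; 1, A.trace] A := by
  let P : Matrix (Fin 2) (Fin 2) F := !![v 0, (A *ᵥ v) 0; v 1, (A *ᵥ v) 1]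
  have hP : P.det ≠ 0 := by
    rw [det_fin_two_of]
    convert hv using 1
    rw [wedge]
    ring
  refine ⟨GeneralLinearGroup.mkOfDetNeZero P hP, ?_⟩
  change P * _ = A * P
  ext i j
  fin_cases i <;> fin_cases j <;>
    simp [P, mul_apply, mulVec, dotProduct, det_fin_two, trace_fin_two] <;> ring

lemma isConj_iff_trace_det {A X : Matrix (Fin 2) (Fin 2) F} (hA : A ∉ Set.range (scalar (Fin 2))) :
    IsConj A X ↔ X ∉ Set.range (scalar (Fin 2)) ∧ X.trace = A.trace ∧ X.det = A.det := by
  constructor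
  · refine fun h ↦ ⟨?_, trace_eq_and_det_eq_of_isConj h⟩
    rintro ⟨c, rfl⟩
    exact hA ⟨c, (eq_scalar_of_isConj_scalar h).symm⟩
  · rintro ⟨hX, htrace, hdet⟩
    obtain ⟨v, hv⟩ := exists_wedge_mulVec_ne_zero hA
    obtain ⟨w, hw⟩ := exists_wedge_mulVec_ne_zero hX
    exact (isConj_companion hv).symm.trans (htrace ▸ hdet ▸ isConj_companion hw)

lemma isConj_diagonal_iff {a b : F} (hab : a ≠ b) {X : Matrix (Fin 2) (Fin 2) F} :
    IsConj (diagonal ![a, b]) X ↔ X.trace = a + b ∧ X.det = a * b := by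
  have not_scalar {Y : Matrix (Fin 2) (Fin 2) F} (htrace : Y.trace = a + b)
      (hdet : Y.det = a * b) : Y ∉ Set.range (scalar (Fin 2)) := by
    rintro ⟨c, rfl⟩
    rw [trace_fin_two] at htrace
    rw [det_fin_two] at hdet
    simp only [scalar_apply, diagonal_apply_eq, diagonal_apply] at htrace hdet
    have hsq : (a - b) ^ 2 = 0 := by grind
    exact hab (sub_eq_zero.mp (pow_eq_zero_iff two_ne_zero |>.mp hsq))
  have htrace : (diagonal ![a, b]).trace = a + b := by simp
  have hdet : (diagonal ![a, b]).det = a * b := by simp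
  rw [isConj_iff_trace_det (not_scalar htrace hdet), htrace, hdet]
  exact and_iff_right_of_imp fun h ↦ not_scalar h.1 h.2

lemma isConj_unipotent_iff {X : Matrix (Fin 2) (Fin 2) F} :
    IsConj !![1, 1; 0, 1] X ↔ X.trace = 2 ∧ X.det = 1 ∧ X ≠ 1 := by
  have hA : !![1, 1; 0, 1] ∉ Set.range (scalar (Fin 2) : F →+* Matrix (Fin 2) (Fin 2) F) := by
    rintro ⟨c, hc⟩
    simpa using congrFun₂ hc 0 1
  rw [isConj_iff_trace_det hA, trace_fin_two_of, det_fin_two_of, one_add_one_eq_two, mul_zero,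
    mul_one, sub_zero, and_comm, and_assoc]
  refine and_congr_right fun htrace ↦ and_congr_right fun hdet ↦ not_congr ⟨?_, ?_⟩
  · rintro ⟨c, rfl⟩
    rw [trace_fin_two] at htrace
    rw [det_fin_two] at hdet
    simp only [scalar_apply, diagonal_apply_eq, diagonal_apply] at htrace hdet
    have hsq : (c - 1) ^ 2 = 0 := by grind
    rw [sub_eq_zero.mp (pow_eq_zero_iff two_ne_zero |>.mp hsq), map_one]
  · rintro rfl
    exact ⟨1, map_one _⟩

/-! ### Nilpotent matrices and lines -/

lemma mk_eq_mk_iff_wedge_eq_zero {v w : Fin 2 → F} (hv : v ≠ 0) (hw : w ≠ 0) :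
    Projectivization.mk F v hv = Projectivization.mk F w hw ↔ wedge v w = 0 := by
  rw [Projectivization.mk_eq_mk_iff']
  constructor
  · rintro ⟨a, rfl⟩
    simp only [wedge, Pi.smul_apply, smul_eq_mul]
    ring
  · intro h
    have hvw : v 0 * w 1 = v 1 * w 0 := sub_eq_zero.mp h
    obtain ⟨i, hi⟩ := Function.ne_iff.mp hw
    refine ⟨v i / w i, funext fun j ↦ ?_⟩
    rw [Pi.smul_apply, smul_eq_mul, div_mul_eq_mul_div, div_eq_iff hi]
    fin_cases i <;> fin_cases j <;> grind

lemma eq_mk_iff_wedge_rep_eq_zero (L : ℙ F (Fin 2 → F)) {w : Fin 2 → F} (hw : w ≠ 0) :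
    L = Projectivization.mk F w hw ↔ wedge L.rep w = 0 := by
  rw [← mk_eq_mk_iff_wedge_eq_zero L.rep_nonzero hw, L.mk_rep]

lemma rankOneNilpotent_ne_zero {v : Fin 2 → F} (hv : v ≠ 0) : rankOneNilpotent v ≠ 0 := by
  refine fun h ↦ hv (funext fun i ↦ ?_)
  rw [rankOneNilpotent_eq] at h
  have h01 := congrFun₂ h 0 1
  have h10 := congrFun₂ h 1 0
  fin_cases i <;> simp_all

lemma smul_rankOneNilpotent_rep_injective :
    Function.Injective fun p : ℙ F (Fin 2 → F) × Fˣ ↦ (p.2 : F) • rankOneNilpotent p.1.rep := by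
  rintro ⟨L, c⟩ ⟨L', c'⟩ (h : (c : F) • _ = (c' : F) • _)
  obtain rfl : L = L' := by
    have hL' : ((c : F) * wedge L.rep L'.rep) • L.rep = 0 := by
      rw [mul_smul, ← rankOneNilpotent_mulVec, ← smul_mulVec, h, smul_mulVec,
        rankOneNilpotent_mulVec, wedge_self, zero_smul, smul_zero]
    rw [← L'.mk_rep, eq_mk_iff_wedge_rep_eq_zero]
    exact (mul_eq_zero_iff_left c.ne_zero).mp ((smul_eq_zero_iff_left L.rep_nonzero).mp hL')
  rw [Units.ext (smul_left_injective F (rankOneNilpotent_ne_zero L.rep_nonzero) h)]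

lemma exists_eq_smul_rankOneNilpotent_rep {N : Matrix (Fin 2) (Fin 2) F} (htrace : N.trace = 0)
    (hdet : N.det = 0) (hN : N ≠ 0) :
    ∃ (L : ℙ F (Fin 2 → F)) (c : Fˣ), (c : F) • rankOneNilpotent L.rep = N := by
  obtain ⟨u, hu⟩ : ∃ u, N *ᵥ u ≠ 0 := by
    by_contra! h
    exact hN (ext_of_mulVec_single fun i ↦ by rw [h, zero_mulVec])
  have hNu := rankOneNilpotent_mulVec_of_nilpotent htrace hdet u
  have hwedge : wedge (N *ᵥ u) u ≠ 0 :=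
    fun h ↦ rankOneNilpotent_ne_zero hu (by rw [hNu, h, zero_smul])
  obtain ⟨a, ha⟩ := Projectivization.exists_smul_eq_mk_rep F (N *ᵥ u) hu
  refine ⟨Projectivization.mk F (N *ᵥ u) hu, (a ^ 2 * Units.mk0 _ hwedge)⁻¹, ?_⟩
  rw [← ha, Units.smul_def, rankOneNilpotent_smul, hNu, smul_smul, smul_smul]
  convert one_smul F N
  rw [mul_assoc]
  exact Units.inv_mul (a ^ 2 * Units.mk0 _ hwedge)

end Field

section Finite

variable {F : Type*} [Field F] [Fintype F]

noncomputable instance : Fintype (ℙ F (Fin 2 → F)) := Fintype.ofFinite _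

lemma card_projectiveLine : (Fintype.card (ℙ F (Fin 2 → F)) : ℤ) = Fintype.card F + 1 := by
  rw [← Nat.card_eq_fintype_card,
    Projectivization.card_of_finrank_two F _ (Module.finrank_fin_fun F), Nat.card_eq_fintype_card,
    Nat.cast_add, Nat.cast_one]

variable [DecidableEq F]

lemma card_units_mul_eq (x k : F) :
    (#{c : Fˣ | (c : F) * x = k} : ℤ) =
      if x = 0 then if k = 0 then (Fintype.card F : ℤ) - 1 else 0 else if k = 0 then 0 else 1 := by
  have hunits : (Fintype.card Fˣ : ℤ) = Fintype.card F - 1 := by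
    rw [Fintype.card_units, Nat.cast_sub Fintype.card_pos, Nat.cast_one]
  rw [← hunits]
  split_ifs with hx hk hk
  · simp [hx, hk]
  · simp [hx, Ne.symm hk]
  · simp [hx, hk]
  · have hc (c : Fˣ) : (c : F) * x = k ↔ c = Units.mk0 (k / x) (div_ne_zero hk hx) := by
      rw [← Units.val_inj, Units.val_mk0, eq_div_iff hx]
    simp [hc, filter_eq']

/-! ### Matrices of given trace and determinant -/

/-- The `2 × 2` matrices with characteristic polynomial `T² - t T + d`: a single conjugacy class if
that polynomial has distinct roots. -/
def traceDet (t d : F) : Finset (Matrix (Fin 2) (Fin 2) F) := {X | X.trace = t ∧ X.det = d}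

lemma mem_traceDet {t d : F} {X : Matrix (Fin 2) (Fin 2) F} :
    X ∈ traceDet t d ↔ X.trace = t ∧ X.det = d := by
  rw [traceDet, mem_filter_univ]

/-- The common eigenvalues in `F` of the matrices in `traceDet t d`: the roots of `T² - t T + d`. -/
def eigenvalues (t d : F) : Finset F := {x | x * (t - x) = d}

lemma mem_eigenvalues {t d x : F} : x ∈ eigenvalues t d ↔ x * (t - x) = d := by
  rw [eigenvalues, mem_filter_univ]

lemma eigenvalues_add_mul (a b : F) : eigenvalues (a + b) (a * b) = {a, b} := by
  ext x
  rw [mem_eigenvalues, mem_insert, mem_singleton, ← sub_eq_zero (a := x) (b := a),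
    ← sub_eq_zero (a := x) (b := b), ← mul_eq_zero]
  constructor <;> intro h <;> linear_combination -h

lemma card_mul_eq (k : F) :
    (#{p : F × F | p.1 * p.2 = k} : ℤ) =
      Fintype.card F - 1 + if k = 0 then (Fintype.card F : ℤ) else 0 := by
  have card_fiber (y : F) : (#{z : F | y * z = k} : ℤ) =
      if y = 0 then if k = 0 then (Fintype.card F : ℤ) else 0 else 1 := by
    obtain rfl | hy := eq_or_ne y 0
    · obtain rfl | hk := eq_or_ne k 0
      · simp
      · simp [hk, hk.symm]
    · have hz (z : F) : y * z = k ↔ z = k / y := by rw [eq_div_iff hy, mul_comm]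
      simp [hz, hy, filter_eq']
  rw [card_filter, Fintype.sum_prod_type]
  simp only [← card_filter, Nat.cast_sum, card_fiber]
  rw [← add_sum_erase _ _ (mem_univ (0 : F)), if_pos rfl, add_comm,
    sum_congr rfl fun y hy ↦ if_neg (ne_of_mem_erase hy), sum_const, card_erase_of_mem (mem_univ _),
    card_univ, nsmul_one, Nat.cast_sub Fintype.card_pos, Nat.cast_one]

lemma card_traceDet_filter_apply_zero_zero (t d x : F) :
    (#{X ∈ traceDet t d | X 0 0 = x} : ℤ) =
      Fintype.card F - 1 + if x ∈ eigenvalues t d then (Fintype.card F : ℤ) else 0 := by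
  have hcard : #{X ∈ traceDet t d | X 0 0 = x} = #{p : F × F | p.1 * p.2 = x * (t - x) - d} := by
    refine card_nbij' (fun X ↦ (X 0 1, X 1 0)) (fun p ↦ !![x, p.1; p.2, t - x]) ?_ ?_ ?_ ?_
    · intro X hX
      simp only [coe_filter, mem_traceDet, trace_fin_two, det_fin_two, mem_univ, true_and,
        Set.mem_ofPred_eq] at hX ⊢
      grind
    · intro p hp
      simp only [coe_filter, mem_traceDet, trace_fin_two_of, det_fin_two_of, mem_univ, true_and,
        Set.mem_ofPred_eq, of_apply, cons_val', cons_val_zero, cons_val_fin_one] at hp ⊢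
      grind
    · intro X hX
      simp only [coe_filter, mem_traceDet, trace_fin_two, Set.mem_ofPred_eq] at hX
      ext i j
      fin_cases i <;> fin_cases j <;> simp <;> grind
    · intro p _
      rfl
  simp only [hcard, card_mul_eq, mem_eigenvalues, sub_eq_zero]

lemma card_traceDet (t d : F) :
    (#(traceDet t d) : ℤ) = Fintype.card F * (Fintype.card F - 1 + #(eigenvalues t d)) := by
  rw [card_eq_sum_card_fiberwise (f := fun X ↦ X 0 0) (t := univ) fun _ _ ↦ mem_univ _]
  push_cast
  simp only [card_traceDet_filter_apply_zero_zero, sum_add_distrib, sum_const, card_univ,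
    sum_ite_mem, univ_inter, nsmul_eq_mul]
  ring

lemma card_traceDet_filter_mulVec_of_wedge_ne_zero {t d : F} (hd : d ≠ 0) {v w : Fin 2 → F}
    (hvw : wedge w v ≠ 0) :
    (#{X ∈ traceDet t d | wedge w (X *ᵥ v) = 0} : ℤ) = Fintype.card F - 1 := by
  have hdet : det !![v 0, w 0; v 1, w 1] ≠ 0 := by
    rw [det_fin_two_of]
    convert neg_ne_zero.mpr hvw using 1
    rw [wedge]
    ring
  let P := GeneralLinearGroup.mkOfDetNeZero _ hdet
  have hPcol (Y : Matrix (Fin 2) (Fin 2) F) :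
      wedge w ((P.1 * Y * (P⁻¹).1) *ᵥ v) = Y 0 0 * wedge w v := by
    have hP (y : Fin 2 → F) : P.1 *ᵥ y = y 0 • v + y 1 • w := by
      ext i
      fin_cases i <;> simp [P, GeneralLinearGroup.mkOfDetNeZero, mulVec, dotProduct] <;> ring
    have hv : v = P.1 *ᵥ ![1, 0] := by simp [hP]
    conv_lhs => rw [hv, mulVec_mulVec, P.inv_mul_cancel_right, ← mulVec_mulVec, hP]
    simp only [wedge, mulVec, dotProduct, Fin.sum_univ_two, Pi.add_apply, Pi.smul_apply,
      smul_eq_mul, cons_val_zero, cons_val_one]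
    ring
  have h0 : (0 : F) ∉ eigenvalues t d := by
    rw [mem_eigenvalues, zero_mul]
    exact hd.symm
  have hcard := card_traceDet_filter_apply_zero_zero t d 0
  rw [if_neg h0, add_zero] at hcard
  rw [← hcard]
  congr 1
  symm
  refine card_equiv (MulAction.toPerm (ConjAct.toConjAct P)) fun Y ↦ ?_
  simp only [mem_filter, mem_traceDet, MulAction.toPerm_apply, ConjAct.units_smul_def,
    ConjAct.ofConjAct_toConjAct, trace_units_conj, det_units_conj, hPcol, mul_eq_zero, hvw,
    or_false]

/-! ### Stable lines -/

lemma card_filter_wedge_rep_eq_zero {u : Fin 2 → F} (hu : u ≠ 0) :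
    #{L : ℙ F (Fin 2 → F) | wedge L.rep u = 0} = 1 := by
  rw [card_eq_one]
  refine ⟨Projectivization.mk F u hu, ?_⟩
  ext L
  rw [mem_filter_univ, mem_singleton, eq_mk_iff_wedge_rep_eq_zero]

/-- The lines of `F²` stable under `M`. -/
noncomputable def eigenlines (M : Matrix (Fin 2) (Fin 2) F) : Finset (ℙ F (Fin 2 → F)) :=
  {L | wedge L.rep (M *ᵥ L.rep) = 0}

lemma mem_eigenlines {M : Matrix (Fin 2) (Fin 2) F} {L : ℙ F (Fin 2 → F)} :
    L ∈ eigenlines M ↔ wedge L.rep (M *ᵥ L.rep) = 0 := by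
  rw [eigenlines, mem_filter_univ]

lemma sum_ite_eigenlines (M : Matrix (Fin 2) (Fin 2) F) (x y : ℤ) :
    ∑ L : ℙ F (Fin 2 → F), (if wedge L.rep (M *ᵥ L.rep) = 0 then x else y) =
      #(eigenlines M) * x + (Fintype.card F + 1 - #(eigenlines M)) * y := by
  classical
  rw [sum_ite, sum_const, sum_const, filter_not, ← eigenlines,
    card_sdiff_of_subset (subset_univ _), card_univ, nsmul_eq_mul, nsmul_eq_mul,
    Nat.cast_sub (card_le_univ _), card_projectiveLine]

lemma card_eigenlines_diagonal {a b : F} (hab : a ≠ b) :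
    #(eigenlines (diagonal ![a, b])) = 2 := by
  classical
  have h0 : (![1, 0] : Fin 2 → F) ≠ 0 := by simp
  have h1 : (![0, 1] : Fin 2 → F) ≠ 0 := by simp
  have heq : eigenlines (diagonal ![a, b]) =
      {Projectivization.mk F ![1, 0] h0, Projectivization.mk F ![0, 1] h1} := by
    ext L
    rw [mem_eigenlines, mem_insert, mem_singleton, eq_mk_iff_wedge_rep_eq_zero,
      eq_mk_iff_wedge_rep_eq_zero]
    have hwedge : wedge L.rep (diagonal ![a, b] *ᵥ L.rep) = (b - a) * (L.rep 0 * L.rep 1) := by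
      simp only [wedge, mulVec_diagonal, cons_val_zero, cons_val_one]
      ring
    rw [hwedge]
    simp [wedge, sub_ne_zero.mpr hab.symm, or_comm]
  rw [heq, card_pair]
  rw [Ne, mk_eq_mk_iff_wedge_eq_zero]
  simp [wedge]

lemma card_traceDet_filter_mulVec_of_wedge_eq_zero {t d : F} (hd : d ≠ 0) {v w : Fin 2 → F}
    (hv : v ≠ 0) (hw : w ≠ 0) (hwv : wedge w v = 0) :
    (#{X ∈ traceDet t d | wedge w (X *ᵥ v) = 0} : ℤ) = Fintype.card F * #(eigenvalues t d) := by
  classical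
  have hXv {X} (hX : X ∈ traceDet t d) : X *ᵥ v ≠ 0 :=
    fun h ↦ hv (eq_zero_of_mulVec_eq_zero (by rwa [(mem_traceDet.mp hX).2]) h)
  -- Each `X` sends `v` to exactly one line, and all lines other than `[w]` are already counted.
  have hsum : ∑ L : ℙ F (Fin 2 → F), #{X ∈ traceDet t d | wedge L.rep (X *ᵥ v) = 0} =
      #(traceDet t d) := by
    rw [card_eq_sum_ones, ← sum_congr rfl fun X hX ↦ card_filter_wedge_rep_eq_zero (hXv hX)]
    exact (sum_card_bipartiteAbove_eq_sum_card_bipartiteBelow _).symm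
  have hw_line : #{X ∈ traceDet t d | wedge (Projectivization.mk F w hw).rep (X *ᵥ v) = 0} =
      #{X ∈ traceDet t d | wedge w (X *ᵥ v) = 0} := by
    congr 1
    refine filter_congr fun X hX ↦ ?_
    rw [← eq_mk_iff_wedge_rep_eq_zero _ (hXv hX), mk_eq_mk_iff_wedge_eq_zero]
  have hother (L : ℙ F (Fin 2 → F)) (hL : L ∈ univ.erase (Projectivization.mk F w hw)) :
      (#{X ∈ traceDet t d | wedge L.rep (X *ᵥ v) = 0} : ℤ) = Fintype.card F - 1 := by
    refine card_traceDet_filter_mulVec_of_wedge_ne_zero hd fun h ↦ ne_of_mem_erase hL ?_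
    rw [(mk_eq_mk_iff_wedge_eq_zero hw hv).mpr hwv]
    exact (eq_mk_iff_wedge_rep_eq_zero L hv).mpr h
  rw [← add_sum_erase _ _ (mem_univ (Projectivization.mk F w hw)), hw_line] at hsum
  have hcast := congrArg (Nat.cast : ℕ → ℤ) hsum
  rw [Nat.cast_add, Nat.cast_sum, sum_congr rfl hother, sum_const, card_erase_of_mem (mem_univ _),
    card_univ, nsmul_eq_mul, Nat.cast_sub Fintype.card_pos, card_projectiveLine,
    card_traceDet] at hcast
  push_cast at hcast
  linear_combination hcast

lemma sum_card_eigenlines_mul {A : Matrix (Fin 2) (Fin 2) F} (hA : A.det ≠ 0) {t d : F}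
    (hd : d ≠ 0) :
    ∑ X ∈ traceDet t d, (#(eigenlines (A * X)) : ℤ) =
      #(eigenlines A) * (Fintype.card F * #(eigenvalues t d)) +
        (Fintype.card F + 1 - #(eigenlines A)) * (Fintype.card F - 1) := by
  have hadj {v : Fin 2 → F} (hv : v ≠ 0) : A.adjugate *ᵥ v ≠ 0 := by
    refine fun h ↦ hv (eq_zero_of_mulVec_eq_zero ?_ h)
    rw [det_adjugate]
    exact pow_ne_zero _ hA
  have hcard (L : ℙ F (Fin 2 → F)) :
      (#{X ∈ traceDet t d | wedge L.rep ((A * X) *ᵥ L.rep) = 0} : ℤ) =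
        if wedge L.rep (A *ᵥ L.rep) = 0 then (Fintype.card F * #(eigenvalues t d) : ℤ)
        else Fintype.card F - 1 := by
    simp only [← mulVec_mulVec, wedge_mulVec_right A]
    split_ifs with hL
    · exact card_traceDet_filter_mulVec_of_wedge_eq_zero hd L.rep_nonzero (hadj L.rep_nonzero) hL
    · exact card_traceDet_filter_mulVec_of_wedge_ne_zero hd hL
  rw [← sum_ite_eigenlines, ← sum_congr rfl fun L _ ↦ hcard L]
  exact_mod_cast sum_card_bipartiteAbove_eq_sum_card_bipartiteBelow _

/-! ### Regular unipotent matrices -/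

lemma card_nilpotent_filter_trace_mul (M : Matrix (Fin 2) (Fin 2) F) (k : F) :
    (#{N ∈ (traceDet 0 0).erase 0 | (M * N).trace = k} : ℤ) =
      if k = 0 then (Fintype.card F - 1) * (#(eigenlines M) : ℤ)
      else Fintype.card F + 1 - #(eigenlines M) := by
  have hcard : #{N ∈ (traceDet 0 0).erase 0 | (M * N).trace = k} =
      #{p : ℙ F (Fin 2 → F) × Fˣ | p.2 * wedge p.1.rep (M *ᵥ p.1.rep) = k} := by
    symm
    have htrace (p : ℙ F (Fin 2 → F) × Fˣ) : (M * (p.2 : F) • rankOneNilpotent p.1.rep).trace =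
        p.2 * wedge p.1.rep (M *ᵥ p.1.rep) := by
      rw [mul_smul_comm, trace_smul, trace_mul_rankOneNilpotent, smul_eq_mul]
    refine card_bij (fun p _ ↦ (p.2 : F) • rankOneNilpotent p.1.rep) (fun p hp ↦ ?_)
      (fun _ _ _ _ h ↦ smul_rankOneNilpotent_rep_injective h) (fun N hN ↦ ?_)
    · rw [mem_filter_univ] at hp
      rw [mem_filter, mem_erase, mem_traceDet, htrace, trace_smul, trace_rankOneNilpotent, det_smul,
        det_rankOneNilpotent, smul_zero, mul_zero]
      exact ⟨⟨smul_ne_zero p.2.ne_zero (rankOneNilpotent_ne_zero p.1.rep_nonzero), rfl, rfl⟩, hp⟩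
    · rw [mem_filter, mem_erase, mem_traceDet] at hN
      obtain ⟨L, c, rfl⟩ := exists_eq_smul_rankOneNilpotent_rep hN.1.2.1 hN.1.2.2 hN.1.1
      exact ⟨(L, c), by rw [mem_filter_univ, ← htrace]; exact hN.2, rfl⟩
  rw [hcard, card_filter, Fintype.sum_prod_type]
  simp only [← card_filter, Nat.cast_sum, card_units_mul_eq, sum_ite_eigenlines]
  split_ifs <;> ring

/-- The regular unipotent conjugacy class of `GL₂(F)`, as a set of matrices. -/
def regularUnipotents (F : Type*) [Field F] [Fintype F] [DecidableEq F] :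
    Finset (Matrix (Fin 2) (Fin 2) F) := (traceDet 2 1).erase 1

lemma mem_regularUnipotents {X : Matrix (Fin 2) (Fin 2) F} :
    X ∈ regularUnipotents F ↔ X ≠ 1 ∧ X.trace = 2 ∧ X.det = 1 := by
  rw [regularUnipotents, mem_erase, mem_traceDet]

lemma add_one_mem_regularUnipotents_iff {N : Matrix (Fin 2) (Fin 2) F} :
    N + 1 ∈ regularUnipotents F ↔ N ∈ (traceDet 0 0).erase 0 := by
  have htrace : (N + 1).trace = 2 ↔ N.trace = 0 := by
    rw [trace_add, trace_one, Fintype.card_fin, Nat.cast_two, add_eq_right]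
  have hdet : (N + 1).det = N.det + N.trace + 1 := by
    simp only [det_fin_two, trace_fin_two, Matrix.add_apply, one_apply_eq, one_apply_ne zero_ne_one,
      one_apply_ne one_ne_zero]
    ring
  rw [mem_regularUnipotents, mem_erase, mem_traceDet, Ne, add_eq_right, htrace, hdet]
  refine and_congr_right fun _ ↦ and_congr_right fun h ↦ ?_
  rw [h, add_zero, add_eq_right]

lemma adjugate_mem_regularUnipotents_iff {X : Matrix (Fin 2) (Fin 2) F} :
    X.adjugate ∈ regularUnipotents F ↔ X ∈ regularUnipotents F := by
  have hone : X.adjugate = 1 ↔ X = 1 := by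
    refine ⟨fun h ↦ ?_, fun h ↦ by rw [h, adjugate_one]⟩
    simpa [h] using (adjugate_adjugate' X).symm
  have htrace : X.adjugate.trace = X.trace := by
    rw [trace_fin_two, trace_fin_two, add_comm]
    simp [adjugate_fin_two]
  have hdet : X.adjugate.det = X.det := by simp [det_adjugate]
  rw [mem_regularUnipotents, mem_regularUnipotents, Ne, hone, htrace, hdet]

lemma card_regularUnipotents_filter_trace_mul (M : Matrix (Fin 2) (Fin 2) F) (k : F) :
    (#{U ∈ regularUnipotents F | (M * U).trace = k} : ℤ) =
      if k = M.trace then (Fintype.card F - 1) * (#(eigenlines M) : ℤ)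
      else Fintype.card F + 1 - #(eigenlines M) := by
  have hcard : #{U ∈ regularUnipotents F | (M * U).trace = k} =
      #{N ∈ (traceDet 0 0).erase 0 | (M * N).trace = k - M.trace} := by
    symm
    refine card_equiv (Equiv.addRight 1) fun N ↦ ?_
    rw [mem_filter, mem_filter, Equiv.coe_addRight, add_one_mem_regularUnipotents_iff, mul_add,
      mul_one, trace_add, eq_sub_iff_add_eq]
  simp only [hcard, card_nilpotent_filter_trace_mul, sub_eq_zero]

lemma card_eigenlines_of_mem_regularUnipotents {M : Matrix (Fin 2) (Fin 2) F}
    (hM : M ∈ regularUnipotents F) : #(eigenlines M) = 1 := by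
  rw [← sub_add_cancel M 1, add_one_mem_regularUnipotents_iff, mem_erase, mem_traceDet] at hM
  obtain ⟨L₀, c, hL₀⟩ := exists_eq_smul_rankOneNilpotent_rep hM.2.1 hM.2.2 hM.1
  rw [card_eq_one]
  refine ⟨L₀, ?_⟩
  ext L
  have hwedge : wedge L.rep (M *ᵥ L.rep) = -(c : F) * wedge L.rep L₀.rep ^ 2 := by
    rw [← sub_add_cancel M 1, ← hL₀, add_mulVec, smul_mulVec, rankOneNilpotent_mulVec, one_mulVec]
    simp only [wedge, Pi.add_apply, Pi.smul_apply, smul_eq_mul]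
    ring
  rw [mem_eigenlines, mem_singleton, hwedge, mul_eq_zero_iff_left (neg_ne_zero.mpr c.ne_zero),
    sq_eq_zero_iff, ← eq_mk_iff_wedge_rep_eq_zero L L₀.rep_nonzero, L₀.mk_rep]

lemma card_regularUnipotents_filter_mul_mem {M : Matrix (Fin 2) (Fin 2) F} (hdet : M.det = 1)
    (hM : M ≠ 1) :
    (#{U ∈ regularUnipotents F | M * U ∈ regularUnipotents F} : ℤ) =
      Fintype.card F + 1 - #(eigenlines M) - if M.trace = 2 then 2 else 0 := by
  have herase : ({U ∈ regularUnipotents F | M * U ∈ regularUnipotents F} : Finset _) =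
      {U ∈ regularUnipotents F | (M * U).trace = 2}.erase M.adjugate := by
    ext U
    simp only [mem_filter, mem_erase, mem_regularUnipotents (X := M * U), det_mul, hdet, Ne,
      mul_eq_one_iff_eq_adjugate hdet, one_mul]
    have hUdet : U ∈ regularUnipotents F → U.det = 1 := fun h ↦ (mem_regularUnipotents.mp h).2.2
    tauto
  by_cases htrace : M.trace = 2
  · have hMmem : M ∈ regularUnipotents F := mem_regularUnipotents.mpr ⟨hM, htrace, hdet⟩
    have hadj : M.adjugate ∈ ({U ∈ regularUnipotents F | (M * U).trace = 2} : Finset _) := by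
      rw [mem_filter, mul_adjugate, hdet, one_smul, trace_one, Fintype.card_fin, Nat.cast_two]
      exact ⟨adjugate_mem_regularUnipotents_iff.mpr hMmem, rfl⟩
    rw [herase, card_erase_of_mem hadj, Nat.cast_sub (card_pos.mpr ⟨_, hadj⟩),
      card_regularUnipotents_filter_trace_mul, if_pos htrace.symm, if_pos htrace,
      card_eigenlines_of_mem_regularUnipotents hMmem]
    ring
  · have hadj : M.adjugate ∉ ({U ∈ regularUnipotents F | (M * U).trace = 2} : Finset _) := by
      refine fun h ↦ htrace ?_
      have hMmem := adjugate_mem_regularUnipotents_iff.mp (mem_of_mem_filter _ h)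
      exact (mem_regularUnipotents.mp hMmem).2.1
    rw [herase, erase_eq_of_notMem hadj, card_regularUnipotents_filter_trace_mul,
      if_neg (Ne.symm htrace), if_neg htrace, sub_zero]

lemma card_regularUnipotents_product_filter_mul_eq_one {M : Matrix (Fin 2) (Fin 2) F}
    (hdet : M.det = 1) :
    #{p ∈ regularUnipotents F ×ˢ regularUnipotents F | M * p.1 * p.2 = 1} =
      #{U ∈ regularUnipotents F | M * U ∈ regularUnipotents F} := by
  have hiff (U V : Matrix (Fin 2) (Fin 2) F) (hU : U ∈ regularUnipotents F) :
      M * U * V = 1 ↔ V = (M * U).adjugate :=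
    mul_eq_one_iff_eq_adjugate (by rw [det_mul, hdet, (mem_regularUnipotents.mp hU).2.2, one_mul])
  refine card_nbij' Prod.fst (fun U ↦ (U, (M * U).adjugate)) ?_ ?_ ?_ fun _ _ ↦ rfl
  · rintro ⟨U, V⟩ h
    simp only [coe_filter, mem_product, Set.mem_ofPred_eq] at h ⊢
    obtain ⟨⟨hU, hV⟩, hUV⟩ := h
    rw [hiff U V hU] at hUV
    exact ⟨hU, adjugate_mem_regularUnipotents_iff.mp (hUV ▸ hV)⟩
  · intro U h
    simp only [coe_filter, mem_product, Set.mem_ofPred_eq] at h ⊢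
    exact ⟨⟨h.1, adjugate_mem_regularUnipotents_iff.mpr h.2⟩, (hiff U _ h.1).mpr rfl⟩
  · rintro ⟨U, V⟩ h
    simp only [coe_filter, mem_product, Set.mem_ofPred_eq] at h
    exact Prod.ext rfl ((hiff U V h.1.1).mp h.2).symm

/-! ### Counting the quadruples -/

lemma card_traceDet_filter_trace_diagonal_mul {a₁ a₂ : F} (ha : a₁ ≠ a₂) (t d k : F) :
    (#{X ∈ traceDet t d | (diagonal ![a₁, a₂] * X).trace = k} : ℤ) =
      Fintype.card F - 1 +
        if (k - a₂ * t) / (a₁ - a₂) ∈ eigenvalues t d then (Fintype.card F : ℤ) else 0 := by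
  rw [← card_traceDet_filter_apply_zero_zero]
  congr 2
  refine filter_congr fun X hX ↦ ?_
  have ht := (mem_traceDet.mp hX).1
  rw [trace_fin_two] at ht
  rw [eq_div_iff (sub_ne_zero.mpr ha), trace_fin_two]
  simp only [diagonal_mul, cons_val_zero, cons_val_one]
  constructor <;> intro h
  · linear_combination h - a₂ * ht
  · linear_combination h + a₂ * ht

lemma diagonal_mul_ne_one {a₁ a₂ b₁ b₂ : F} (h11 : a₁ * b₁ ≠ 1) (h12 : a₁ * b₂ ≠ 1)
    {X : Matrix (Fin 2) (Fin 2) F} (hX : X ∈ traceDet (b₁ + b₂) (b₁ * b₂)) :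
    diagonal ![a₁, a₂] * X ≠ 1 := by
  intro h
  have h00 : a₁ * X 0 0 = 1 := by simpa using congrFun₂ h 0 0
  have h01 : X 0 1 = 0 := by
    have ha₁ : a₁ ≠ 0 := left_ne_zero_of_mul_eq_one h00
    simpa [ha₁] using congrFun₂ h 0 1
  have hmem : X 0 0 ∈ eigenvalues (b₁ + b₂) (b₁ * b₂) := by
    rw [mem_traceDet, trace_fin_two, det_fin_two, h01] at hX
    rw [mem_eigenvalues, ← hX.1, ← hX.2]
    ring
  rw [eigenvalues_add_mul, mem_insert, mem_singleton] at hmem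
  obtain h | h := hmem
  · exact h11 (h ▸ h00)
  · exact h12 (h ▸ h00)

lemma card_traceDet_filter_trace_diagonal_mul_eq_two {a₁ a₂ b₁ b₂ : F} (ha : a₁ ≠ a₂)
    (hprod : a₁ * a₂ * b₁ * b₂ = 1) (h11 : a₁ * b₁ ≠ 1) (h12 : a₁ * b₂ ≠ 1) :
    (#{X ∈ traceDet (b₁ + b₂) (b₁ * b₂) | (diagonal ![a₁, a₂] * X).trace = 2} : ℤ) =
      Fintype.card F - 1 := by
  have hx : (2 - a₂ * (b₁ + b₂)) / (a₁ - a₂) ∉ eigenvalues (b₁ + b₂) (b₁ * b₂) := by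
    rw [eigenvalues_add_mul, mem_insert, mem_singleton, not_or, div_eq_iff (sub_ne_zero.mpr ha),
      div_eq_iff (sub_ne_zero.mpr ha)]
    -- Otherwise `a₁ * bᵢ` and its inverse have sum `2`, hence both are `1`.
    constructor <;> intro h
    · have hsq : (a₁ * b₁ - 1) ^ 2 = 0 := by linear_combination -hprod - a₁ * b₁ * h
      exact h11 (sub_eq_zero.mp (pow_eq_zero_iff two_ne_zero |>.mp hsq))
    · have hsq : (a₁ * b₂ - 1) ^ 2 = 0 := by linear_combination -hprod - a₁ * b₂ * h
      exact h12 (sub_eq_zero.mp (pow_eq_zero_iff two_ne_zero |>.mp hsq))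
  rw [card_traceDet_filter_trace_diagonal_mul ha, if_neg hx, add_zero]

lemma card_triples_diagonal_mul_eq_one {a₁ a₂ b₁ b₂ : F} (ha : a₁ ≠ a₂) (hb : b₁ ≠ b₂)
    (hprod : a₁ * a₂ * b₁ * b₂ = 1) (h11 : a₁ * b₁ ≠ 1) (h12 : a₁ * b₂ ≠ 1) :
    (#{p ∈ traceDet (b₁ + b₂) (b₁ * b₂) ×ˢ regularUnipotents F ×ˢ regularUnipotents F |
        diagonal ![a₁, a₂] * p.1 * p.2.1 * p.2.2 = 1} : ℤ) =
      (Fintype.card F - 1) * ((Fintype.card F : ℤ) ^ 2 + 2 * Fintype.card F - 1) := by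
  have hd : b₁ * b₂ ≠ 0 := right_ne_zero_of_mul_eq_one (mul_assoc (a₁ * a₂) b₁ b₂ ▸ hprod)
  have hD : (diagonal ![a₁, a₂]).det = a₁ * a₂ := by simp
  have hD0 : (diagonal ![a₁, a₂]).det ≠ 0 := by
    rw [hD]
    exact left_ne_zero_of_mul_eq_one (mul_assoc (a₁ * a₂) b₁ b₂ ▸ hprod)
  have hfiber (X : Matrix (Fin 2) (Fin 2) F) (hX : X ∈ traceDet (b₁ + b₂) (b₁ * b₂)) :
      (#{p ∈ regularUnipotents F ×ˢ regularUnipotents F |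
          diagonal ![a₁, a₂] * X * p.1 * p.2 = 1} : ℤ) =
        Fintype.card F + 1 - #(eigenlines (diagonal ![a₁, a₂] * X)) -
          if (diagonal ![a₁, a₂] * X).trace = 2 then 2 else 0 := by
    have hdet : (diagonal ![a₁, a₂] * X).det = 1 := by
      rw [det_mul, hD, (mem_traceDet.mp hX).2, ← hprod, mul_assoc (a₁ * a₂)]
    rw [card_regularUnipotents_product_filter_mul_eq_one hdet,
      card_regularUnipotents_filter_mul_mem hdet (diagonal_mul_ne_one h11 h12 hX)]
  rw [card_filter, sum_product]
  simp only [← card_filter, Nat.cast_sum]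
  rw [sum_congr rfl hfiber, sum_sub_distrib, sum_sub_distrib, sum_const, ← sum_filter, sum_const,
    sum_card_eigenlines_mul hD0 hd, card_eigenlines_diagonal ha, nsmul_eq_mul, nsmul_eq_mul,
    card_traceDet, card_traceDet_filter_trace_diagonal_mul_eq_two ha hprod h11 h12,
    eigenvalues_add_mul, card_pair hb]
  push_cast
  ring

end Finite

/-! ### Simultaneous conjugation -/

section Orbit

open MulAction

lemma card_subtype_mem_orbit_and {G α β : Type*} [Group G] [MulAction G α] [MulAction G β]
    {P : α → β → Prop} (hP : ∀ (g : G) x y, P (g • x) (g • y) ↔ P x y) (a : α) :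
    Nat.card {p : α × β // p.1 ∈ orbit G a ∧ P p.1 p.2} =
      Nat.card {x // x ∈ orbit G a} * Nat.card {y // P a y} := by
  choose g hg using fun x : {x // x ∈ orbit G a} ↦ mem_orbit_iff.mp x.2
  have hiff (x : {x // x ∈ orbit G a}) (y : β) : P x (g x • y) ↔ P a y := by
    conv_lhs => rw [← hg x, hP]
  rw [← Nat.card_prod]
  exact Nat.card_congr
    { toFun p := (⟨p.1.1, p.2.1⟩, ⟨(g ⟨p.1.1, p.2.1⟩)⁻¹ • p.1.2,
        (hiff ⟨p.1.1, p.2.1⟩ _).mp (by rw [smul_inv_smul]; exact p.2.2)⟩)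
      invFun p := ⟨(p.1, g p.1 • p.2.1), p.1.2, (hiff p.1 p.2).mpr p.2.2⟩
      left_inv p := Subtype.ext (Prod.ext rfl (smul_inv_smul _ _))
      right_inv p := Prod.ext rfl (Subtype.ext (inv_smul_smul _ _)) }

lemma isConj_iff_mem_orbit {M : Type*} [Monoid M] {a x : M} :
    IsConj a x ↔ x ∈ orbit (ConjAct Mˣ) a := by
  rw [mem_orbit_iff]
  exact exists_congr fun c ↦ (Units.mul_inv_eq_iff_eq_mul c).symm

lemma isConj_smul_iff {M : Type*} [Monoid M] (g : ConjAct Mˣ) {a x : M} :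
    IsConj a (g • x) ↔ IsConj a x := by
  rw [isConj_iff_mem_orbit, isConj_iff_mem_orbit, ← orbit_eq_iff, orbit_smul, orbit_eq_iff]

end Orbit

end GL2Count

open GL2Count in
theorem GL2_quadruple_count_two_ss_two_unipotent_general
    {F : Type*} [Field F] [Fintype F] {a₁ a₂ b₁ b₂ : F} (ha : a₁ ≠ a₂) (hb : b₁ ≠ b₂)
    (hprod : a₁ * a₂ * b₁ * b₂ = 1) (h11 : a₁ * b₁ ≠ 1) (h12 : a₁ * b₂ ≠ 1) :
    (Nat.card {x : Matrix (Fin 2) (Fin 2) F × Matrix (Fin 2) (Fin 2) F ×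
        Matrix (Fin 2) (Fin 2) F × Matrix (Fin 2) (Fin 2) F //
        IsConj (Matrix.diagonal ![a₁, a₂]) x.1 ∧
        IsConj (Matrix.diagonal ![b₁, b₂]) x.2.1 ∧
        IsConj (!![1, 1; 0, 1] : Matrix (Fin 2) (Fin 2) F) x.2.2.1 ∧
        IsConj (!![1, 1; 0, 1] : Matrix (Fin 2) (Fin 2) F) x.2.2.2 ∧
        x.1 * x.2.1 * x.2.2.1 * x.2.2.2 = 1} : ℤ) =
      ((Fintype.card F : ℤ) ^ 3 - Fintype.card F) *
        ((Fintype.card F : ℤ) ^ 2 + 2 * Fintype.card F - 1) := by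
  classical
  let P (S : Matrix (Fin 2) (Fin 2) F) (y : Matrix (Fin 2) (Fin 2) F ×
      Matrix (Fin 2) (Fin 2) F × Matrix (Fin 2) (Fin 2) F) : Prop :=
    IsConj (diagonal ![b₁, b₂]) y.1 ∧ IsConj !![1, 1; 0, 1] y.2.1 ∧ IsConj !![1, 1; 0, 1] y.2.2 ∧
      S * y.1 * y.2.1 * y.2.2 = 1
  have hP (g : ConjAct (Matrix (Fin 2) (Fin 2) F)ˣ) S y : P (g • S) (g • y) ↔ P S y := by
    simp only [P, Prod.smul_fst, Prod.smul_snd, isConj_smul_iff, ← smul_mul',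
      smul_eq_iff_eq_inv_smul, smul_one]
  have hsplit := card_subtype_mem_orbit_and hP (diagonal ![a₁, a₂])
  simp only [← isConj_iff_mem_orbit] at hsplit
  have hclass : Nat.card {S // IsConj (diagonal ![a₁, a₂]) S} = #(traceDet (a₁ + a₂) (a₁ * a₂)) :=
    Nat.subtype_card _ fun S ↦ by rw [isConj_diagonal_iff ha, mem_traceDet]
  have htriples : Nat.card {y // P (diagonal ![a₁, a₂]) y} = _ :=
    Nat.subtype_card {p ∈ traceDet (b₁ + b₂) (b₁ * b₂) ×ˢ regularUnipotents F ×ˢ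
      regularUnipotents F | diagonal ![a₁, a₂] * p.1 * p.2.1 * p.2.2 = 1} fun y ↦ by
        simp only [P, mem_filter, mem_product, isConj_diagonal_iff hb, isConj_unipotent_iff,
          mem_traceDet, mem_regularUnipotents]
        tauto
  rw [hsplit, hclass, htriples, Nat.cast_mul, card_traceDet, eigenvalues_add_mul, card_pair ha,
    card_triples_diagonal_mul_eq_one ha hb hprod h11 h12]
  push_cast
  ring

/-- Genus 0, four punctures, `GL₂`, two generic regular semisimple classes and two regular
unipotent classes: the number of quadruples `(S₁,S₂,S₃,S₄) ∈ C₁ × C₂ × C₃ × C₄` with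
`S₁S₂S₃S₄ = 1` is `(q³−q)(q²+2q−1)`. -/
theorem GL2_quadruple_count_two_ss_two_unipotent
    {F : Type*} [Field F] [Fintype F] (hchar : ringChar F ≠ 2)
    (q : ℕ) (hq : q = Fintype.card F)
    (a₁ a₂ b₁ b₂ : F)
    (ha0 : a₁ ≠ 0) (ha0' : a₂ ≠ 0) (hb0 : b₁ ≠ 0) (hb0' : b₂ ≠ 0)
    (ha : a₁ ≠ a₂) (hb : b₁ ≠ b₂)
    (hprod : a₁ * a₂ * b₁ * b₂ = 1)
    (hgen : ∀ i j : Fin 2, ![a₁, a₂] i * ![b₁, b₂] j ≠ 1) :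
    (Nat.card {x : Matrix (Fin 2) (Fin 2) F × Matrix (Fin 2) (Fin 2) F ×
        Matrix (Fin 2) (Fin 2) F × Matrix (Fin 2) (Fin 2) F //
        IsConj (Matrix.diagonal ![a₁, a₂]) x.1 ∧
        IsConj (Matrix.diagonal ![b₁, b₂]) x.2.1 ∧
        IsConj (!![1, 1; 0, 1] : Matrix (Fin 2) (Fin 2) F) x.2.2.1 ∧
        IsConj (!![1, 1; 0, 1] : Matrix (Fin 2) (Fin 2) F) x.2.2.2 ∧
        x.1 * x.2.1 * x.2.2.1 * x.2.2.2 = 1} : ℤ) =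
      ((q : ℤ) ^ 3 - q) * ((q : ℤ) ^ 2 + 2 * q - 1) := by
  subst hq
  exact GL2_quadruple_count_two_ss_two_unipotent_general ha hb hprod (hgen 0 0) (hgen 0 1)
end

section
/- Let F be a finite field with q elements whose characteristic is neither 2 nor 3, and let a₁,a₂,a₃, b₁,b₂,b₃ ∈ Fˣ be such that the a_i are pairwise distinct, the b_i are pairwise distinct, (a₁a₂a₃)(b₁b₂b₃) = 1, and a_i b_j ≠ 1 for all i, j ∈ {1,2,3}. Let C₁, C₂ be the conjugacy classes of diag(a₁,a₂,a₃) and diag(b₁,b₂,b₃) in GL₃(F) and let C₃ = C₄ be the regular unipotent conjugacy class. Then the number of quadruples (S₁, S₂, S₃, S₄) ∈ C₁ × C₂ × C₃ × C₄ with S₁S₂S₃S₄ = 1 equals (|GL₃(F)|/(q−1)) · (q²(q+1)²(q²+q+1)² − 9q²(q+1)² + 12q²). -/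
/-!
Summing a function on `GL₃(F)` over the right translates by the regular unipotent class `K` defines
an operator `T`, and the number of quadruples is `|C₁|` times the value at `diag(a)` of `T²` applied
to the indicator function of the class of `diag(β)`, where `βᵢ = bᵢ⁻¹`. That indicator function is,
up to a factor, parabolically induced from the point mass at `β` on the diagonal torus, and on
induced functions `T` can be computed before inducing.

On the torus the point mass splits into three parts. A function whose sums along all coroots vanish
is, after inflation to the Borel subgroup `B`, an eigenfunction of `T`: on a nontrivial Bruhat cell
averaging over the torus gives zero, and on `B` the eigenvalue is `|K ∩ B|`. A function
`ξ(tᵢ) δ(t₁t₂t₃)` with `∑ ξ = 0` is sent by `T` to the function `ξ(gᵢᵢ) δ(det g)` on the stabilizer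
`P` of a line, an eigenfunction with eigenvalue `|K ∩ P|`, and `δ(t₁t₂t₃)` is sent to a multiple of
`δ(det g)`, an eigenfunction with eigenvalue `|K|`. What makes the first step exact is that every
coset `g⁻¹B` meets `K` in the same number `q(q-1)²` of elements. Genericity means that only the
constant terms contribute at `diag(a)`: these are the summands `12 q²`, `-9 q²(q+1)²` and
`q²(q+1)²(q²+q+1)²`, in this order.
-/

namespace QuadrupleCount

open Matrix Finset
open scoped Classical MatrixGroups

section ConjugationInvariantSums

variable {G : Type*} [Group G] (K : Finset G)

/-- The operator on functions on a group that sums over the right translates by a finite set `K`;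
when `K` is stable under conjugation this is the action of the class sum of `K`. -/
def translateSum : (G → ℚ) →ₗ[ℚ] (G → ℚ) where
  toFun f g := ∑ u ∈ K, f (g * u)
  map_add' _ _ := funext fun _ => sum_add_distrib
  map_smul' c _ := funext fun _ => (mul_sum K _ c).symm

theorem translateSum_apply (f : G → ℚ) (g : G) : translateSum K f g = ∑ u ∈ K, f (g * u) := rfl

/-- The sum of all conjugates of a function on a finite group. For a function supported on a
subgroup `H` it is `|H|` times the induced class function. -/
def conjSum [Fintype G] : (G → ℚ) →ₗ[ℚ] (G → ℚ) where
  toFun f g := ∑ p, f (p⁻¹ * g * p)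
  map_add' _ _ := funext fun _ => sum_add_distrib
  map_smul' c _ := funext fun _ => (mul_sum univ _ c).symm

theorem conjSum_apply [Fintype G] (f : G → ℚ) (g : G) : conjSum f g = ∑ p, f (p⁻¹ * g * p) := rfl

theorem conjSum_conj [Fintype G] (f : G → ℚ) (g p : G) :
    conjSum f (p * g * p⁻¹) = conjSum f g := by
  simp only [conjSum_apply]
  exact Fintype.sum_equiv (Equiv.mulLeft p⁻¹) _ _ fun r => by
    simp only [Equiv.coe_mulLeft, _root_.mul_inv_rev, inv_inv, mul_assoc]

theorem conjSum_eq_of_isConj [Fintype G] (f : G → ℚ) {g h : G} (hgh : IsConj g h) :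
    conjSum f g = conjSum f h := by
  obtain ⟨p, rfl⟩ := isConj_iff.mp hgh
  exact (conjSum_conj f g p).symm

variable {K}

theorem sum_conj_of_conj_mem (hK : ∀ p, ∀ u ∈ K, p * u * p⁻¹ ∈ K) (f : G → ℚ) (p : G) :
    ∑ u ∈ K, f (p * u * p⁻¹) = ∑ u ∈ K, f u :=
  sum_nbij' (fun u => p * u * p⁻¹) (fun u => p⁻¹ * u * p) (fun u hu => hK p u hu)
    (fun u hu => by simpa only [inv_inv] using hK p⁻¹ u hu) (fun u _ => by group)
    (fun u _ => by group) fun _ _ => rfl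

theorem translateSum_conjSum [Fintype G] (hK : ∀ p, ∀ u ∈ K, p * u * p⁻¹ ∈ K) (f : G → ℚ) :
    translateSum K (conjSum f) = conjSum (translateSum K f) := by
  funext g
  simp only [translateSum_apply, conjSum_apply]
  rw [sum_comm]
  refine sum_congr rfl fun p _ => ?_
  rw [← sum_conj_of_conj_mem hK _ p]
  exact sum_congr rfl fun u _ => congrArg f (by group)

/-- Each `u ∈ K` satisfies `g * u = l c * (g * u') * r c` for the conjugate `u' = r c * u * (r c)⁻¹`
in `K`, so `translateSum K f g` may be averaged over the pairs `(l c, r c)`. -/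
theorem translateSum_eq_zero_of_sum_translates_eq_zero {ι : Type*} [Fintype ι] [Nonempty ι]
    (hK : ∀ p, ∀ u ∈ K, p * u * p⁻¹ ∈ K) {f : G → ℚ} {g : G} (l r : ι → G)
    (hlr : ∀ c, l c * g * r c = g) (hf : ∀ x, ∑ c, f (l c * x * r c) = 0) :
    translateSum K f g = 0 := by
  have translate (c : ι) : ∑ u ∈ K, f (l c * (g * u) * r c) = translateSum K f g := by
    rw [translateSum_apply, ← sum_conj_of_conj_mem hK _ (r c)]
    refine sum_congr rfl fun u _ => congrArg f ?_
    conv_rhs => rw [← hlr c]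
    group
  have total : (Fintype.card ι : ℚ) * translateSum K f g = 0 := by
    rw [← nsmul_eq_mul, ← card_univ, ← sum_const, ← sum_congr rfl fun c _ => translate c, sum_comm]
    exact sum_eq_zero fun u _ => hf _
  exact (mul_eq_zero.mp total).resolve_left (Nat.cast_ne_zero.mpr Fintype.card_ne_zero)

theorem translateSum_indicator {B H : Subgroup G} (hBH : B ≤ H) {f : G → ℚ}
    (hf : ∀ h ∈ H, ∀ u ∈ K, u ∈ H → f (h * u) = f h) {g : G} (hg : g ∈ H) :
    translateSum K ((B : Set G).indicator f) g = f g * #{u ∈ K | g * u ∈ B} := by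
  rw [translateSum_apply, mul_comm, ← nsmul_eq_mul, ← sum_const, sum_filter]
  refine sum_congr rfl fun u hu => ?_
  by_cases hgu : g * u ∈ B
  · rw [Set.indicator_of_mem hgu, if_pos hgu,
      hf g hg u hu ((H.mul_mem_cancel_left hg).mp (hBH hgu))]
  · rw [Set.indicator_of_notMem hgu, if_neg hgu]

theorem mul_card_eq_card_mul_of_equidistributed [Finite G] {B H : Subgroup G} (hBH : B ≤ H) {N : ℕ}
    (hN : ∀ g ∈ H, #{u ∈ K | g * u ∈ B} = N) :
    N * Nat.card H = Nat.card B * #{u ∈ K | u ∈ H} := by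
  have := Fintype.ofFinite G
  have card_fiber (u : G) (hu : u ∈ H) : #{g : G | g ∈ H ∧ g * u ∈ B} = Nat.card B := by
    rw [← SetLike.coe_sort_coe, Nat.card_eq_card_toFinset]
    refine card_nbij' (· * u) (· * u⁻¹) ?_ ?_ ?_ ?_ <;> intro g hg
    · simp_all
    · have : g ∈ B := by simpa using hg
      simpa [this] using H.mul_mem (hBH this) (H.inv_mem hu)
    · simp
    · simp
  calc N * Nat.card H = ∑ g : G with g ∈ H, #{u ∈ K | g * u ∈ B} := by
        rw [sum_congr rfl fun g hg => hN g (mem_filter.mp hg).2, sum_const, smul_eq_mul, mul_comm,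
          ← SetLike.coe_sort_coe, Nat.card_eq_card_toFinset]
        congr 2
        ext g
        simp
    _ = ∑ u ∈ K with u ∈ H, #{g : G | g ∈ H ∧ g * u ∈ B} := by
        simp only [card_eq_sum_ones]
        refine sum_comm' fun g u => ?_
        simp only [mem_filter, mem_univ, true_and]
        refine ⟨fun ⟨hg, hu, hgu⟩ => ⟨⟨hg, hgu⟩, hu, ?_⟩, fun ⟨⟨hg, hgu⟩, hu, _⟩ => ⟨hg, hu, hgu⟩⟩
        exact (H.mul_mem_cancel_left hg).mp (hBH hgu)
    _ = Nat.card B * #{u ∈ K | u ∈ H} := by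
        rw [sum_congr rfl fun u hu => card_fiber u (mem_filter.mp hu).2, sum_const, smul_eq_mul,
          mul_comm]

end ConjugationInvariantSums

section Quadruples

section Group

variable {G : Type*} [Group G]

theorem translateSum_conj {K : Finset G} (hK : ∀ p, ∀ u ∈ K, p * u * p⁻¹ ∈ K) {f : G → ℚ}
    (hf : ∀ g p, f (p * g * p⁻¹) = f g) (g p : G) :
    translateSum K f (p * g * p⁻¹) = translateSum K f g := by
  simp only [translateSum_apply]
  rw [← sum_conj_of_conj_mem hK _ p]
  exact sum_congr rfl fun u _ => (congrArg f (by group)).trans (hf (g * u) p)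

theorem isConj_inv_iff (s t : G) : IsConj s⁻¹ t ↔ IsConj s t⁻¹ := by
  simp only [isConj_iff, ← inv_inj (b := t), conj_inv, inv_inv]

theorem conj_mem_of_forall_mem_iff_isConj {K : Finset G} {j : G} (hK : ∀ u, u ∈ K ↔ IsConj j u)
    (p u : G) (hu : u ∈ K) : p * u * p⁻¹ ∈ K :=
  (hK _).mpr (((hK u).mp hu).trans (isConj_iff.mpr ⟨p, rfl⟩))

variable [Fintype G]

theorem mem_toFinset_conjugatesOf {s g : G} : g ∈ (conjugatesOf s).toFinset ↔ IsConj s g :=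
  Set.mem_toFinset

theorem card_filter_quadruples (s t j : G) :
    #{x : G × G × G × G | IsConj s x.1 ∧ IsConj t x.2.1 ∧ IsConj j x.2.2.1 ∧ IsConj j x.2.2.2 ∧
      x.1 * x.2.1 * x.2.2.1 * x.2.2.2 = 1} =
    #{x ∈ (conjugatesOf s).toFinset ×ˢ (conjugatesOf j).toFinset ×ˢ (conjugatesOf j).toFinset |
      x.1 * x.2.1 * x.2.2 ∈ conjugatesOf t⁻¹} := by
  have cyclic (g u v : G) : IsConj t (u * v * g)⁻¹ ↔ g * u * v ∈ conjugatesOf t⁻¹ := by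
    have rotate : IsConj (u * v * g) (g * u * v) := isConj_iff.mpr ⟨g, by group⟩
    rw [← isConj_inv_iff]
    exact ⟨fun h => h.trans rotate, fun h => h.trans rotate.symm⟩
  have solve {g h u v : G} (hprod : g * h * u * v = 1) : (u * v * g)⁻¹ = h :=
    inv_eq_of_mul_eq_one_right <| by
      simpa only [mul_assoc] using mul_eq_one_comm.mp (by simpa only [mul_assoc] using hprod :
        (g * h) * (u * v) = 1)
  refine card_nbij' (fun x => (x.1, x.2.2.1, x.2.2.2))
    (fun y => (y.1, (y.2.1 * y.2.2 * y.1)⁻¹, y.2.1, y.2.2)) ?_ ?_ ?_ ?_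
  · rintro ⟨g, h, u, v⟩ hx
    obtain ⟨hg, ht, hu, hv, hprod⟩ := (mem_filter.mp hx).2
    obtain rfl : (u * v * g)⁻¹ = h := solve hprod
    exact mem_filter.mpr ⟨by simp only [mem_product, mem_toFinset_conjugatesOf]; exact ⟨hg, hu, hv⟩,
      (cyclic g u v).mp ht⟩
  · rintro ⟨g, u, v⟩ hy
    obtain ⟨hmem, ht⟩ := mem_filter.mp hy
    simp only [mem_product, mem_toFinset_conjugatesOf] at hmem
    exact mem_filter.mpr ⟨mem_univ _, hmem.1, (cyclic g u v).mpr ht, hmem.2.1, hmem.2.2, by group⟩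
  · rintro ⟨g, h, u, v⟩ hx
    obtain ⟨-, -, -, -, hprod⟩ := (mem_filter.mp hx).2
    simp only [solve hprod]
  · exact fun _ _ => rfl

omit [Fintype G] in
theorem card_quadruples [Finite G] {K : Finset G} {j : G} (hK : ∀ u, u ∈ K ↔ IsConj j u) (s t : G) :
    (Nat.card {x : G × G × G × G // IsConj s x.1 ∧ IsConj t x.2.1 ∧ IsConj j x.2.2.1 ∧
      IsConj j x.2.2.2 ∧ x.1 * x.2.1 * x.2.2.1 * x.2.2.2 = 1} : ℚ) =
    Nat.card (conjugatesOf s) *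
      translateSum K (translateSum K ((conjugatesOf t⁻¹).indicator 1)) s := by
  have := Fintype.ofFinite G
  set f : G → ℚ := (conjugatesOf t⁻¹).indicator 1
  have hconj := conj_mem_of_forall_mem_iff_isConj hK
  have K_eq : (conjugatesOf j).toFinset = K :=
    Finset.ext fun u => mem_toFinset_conjugatesOf.trans (hK u).symm
  have f_conj (g p : G) : f (p * g * p⁻¹) = f g := by
    have mem_iff : p * g * p⁻¹ ∈ conjugatesOf t⁻¹ ↔ g ∈ conjugatesOf t⁻¹ :=
      ⟨fun h => h.trans (isConj_iff.mpr ⟨p⁻¹, by group⟩),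
        fun h => h.trans (isConj_iff.mpr ⟨p, rfl⟩)⟩
    simp only [f, Set.indicator_apply, mem_iff, Pi.one_apply]
  have constant_on_class : ∀ g ∈ (conjugatesOf s).toFinset,
      translateSum K (translateSum K f) g = translateSum K (translateSum K f) s := fun g hg => by
    obtain ⟨p, rfl⟩ := isConj_iff.mp (mem_toFinset_conjugatesOf.mp hg)
    exact translateSum_conj hconj (translateSum_conj hconj f_conj) s p
  calc _ = ∑ g ∈ (conjugatesOf s).toFinset, translateSum K (translateSum K f) g := by
        rw [Nat.card_eq_fintype_card, Fintype.card_subtype, card_filter_quadruples, K_eq,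
          card_filter, Nat.cast_sum, sum_product]
        simp only [sum_product, translateSum_apply, f, Set.indicator_apply, Nat.cast_ite,
          Nat.cast_one, Nat.cast_zero, Pi.one_apply]
    _ = _ := by
        rw [sum_congr rfl constant_on_class, sum_const, nsmul_eq_mul, Nat.card_eq_card_toFinset]

end Group

section Monoid

variable {M : Type*} [Monoid M]

theorem isConj_val_iff (s u : Mˣ) : IsConj (s : M) u ↔ IsConj s u := by
  refine ⟨fun ⟨c, hc⟩ => ?_, fun h => ?_⟩
  · exact isConj_iff.mpr ⟨c, Units.ext (by simp [hc.eq])⟩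
  · obtain ⟨c, rfl⟩ := isConj_iff.mp h
    exact ⟨c, by simp [SemiconjBy]⟩

theorem exists_unit_of_isConj {s : Mˣ} {x : M} (h : IsConj (s : M) x) : ∃ u : Mˣ, (u : M) = x := by
  obtain ⟨c, hc⟩ := h
  exact ⟨c * s * c⁻¹, by simp [hc.eq]⟩

theorem card_quadruples_val (s t j : Mˣ) :
    Nat.card {x : M × M × M × M // IsConj (s : M) x.1 ∧ IsConj (t : M) x.2.1 ∧
      IsConj (j : M) x.2.2.1 ∧ IsConj (j : M) x.2.2.2 ∧ x.1 * x.2.1 * x.2.2.1 * x.2.2.2 = 1} =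
    Nat.card {x : Mˣ × Mˣ × Mˣ × Mˣ // IsConj s x.1 ∧ IsConj t x.2.1 ∧ IsConj j x.2.2.1 ∧
      IsConj j x.2.2.2 ∧ x.1 * x.2.1 * x.2.2.1 * x.2.2.2 = 1} := by
  symm
  refine Nat.card_congr (Equiv.ofBijective (fun x => ⟨(x.1.1, x.1.2.1, x.1.2.2.1, x.1.2.2.2), ?_⟩)
    ⟨?_, ?_⟩)
  · simpa only [isConj_val_iff, ← Units.val_mul, Units.val_eq_one] using x.2
  · rintro ⟨⟨x₁, x₂, x₃, x₄⟩, _⟩ ⟨⟨y₁, y₂, y₃, y₄⟩, _⟩ hxy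
    simpa [Units.val_inj] using hxy
  · rintro ⟨⟨_, _, _, _⟩, h₁, h₂, h₃, h₄, hprod⟩
    obtain ⟨x₁, rfl⟩ := exists_unit_of_isConj h₁
    obtain ⟨x₂, rfl⟩ := exists_unit_of_isConj h₂
    obtain ⟨x₃, rfl⟩ := exists_unit_of_isConj h₃
    obtain ⟨x₄, rfl⟩ := exists_unit_of_isConj h₄
    simp only [isConj_val_iff, ← Units.val_mul, Units.val_eq_one] at h₁ h₂ h₃ h₄ hprod
    exact ⟨⟨(x₁, x₂, x₃, x₄), h₁, h₂, h₃, h₄, hprod⟩, rfl⟩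

end Monoid

end Quadruples

section Parabolic

variable {n α F : Type*} [Fintype n] [Field F]

section BlockTriangular

variable [DecidableEq n] [LinearOrder α]

variable (F) in
/-- The standard parabolic subgroup of invertible matrices that are block triangular for the
blocks `b ⁻¹' {a}`. -/
def parabolic (b : n → α) : Subgroup (GL n F) where
  carrier := {g | (g : Matrix n n F).BlockTriangular b}
  one_mem' := blockTriangular_one
  mul_mem' := BlockTriangular.mul
  inv_mem' {g} hg := by
    have : Invertible (g : Matrix n n F) := g.invertible
    simpa only [Set.mem_ofPred_eq, coe_units_inv] using blockTriangular_inv_of_blockTriangular hg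

omit [DecidableEq n] in
theorem blockTriangular_mul_apply_self {b : n → α} {M N : Matrix n n F} (hM : M.BlockTriangular b)
    (hN : N.BlockTriangular b) {i : n} (hi : ∀ j, b j = b i → j = i) :
    (M * N) i i = M i i * N i i := by
  rw [mul_apply]
  refine Fintype.sum_eq_single i fun j hj => ?_
  rcases lt_trichotomy (b j) (b i) with hlt | heq | hgt
  · rw [hM hlt, zero_mul]
  · exact absurd (hi j heq) hj
  · rw [hN hgt, mul_zero]

variable (F) in
/-- The stabilizer of the `i`-th coordinate line: a maximal parabolic subgroup. -/
def lineStabilizer (i : n) : Subgroup (GL n F) := parabolic F fun j => if j = i then 0 else 1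

theorem mem_lineStabilizer {i : n} {g : GL n F} :
    g ∈ lineStabilizer F i ↔ ∀ j ≠ i, (g : Matrix n n F) j i = 0 := by
  refine ⟨fun hg j hj => hg (by simp [hj]), fun hg j k hkj => ?_⟩
  obtain rfl : k = i := by by_contra hk; simp [hk] at hkj; split_ifs at hkj <;> omega
  exact hg j fun hj => by simp [hj] at hkj

theorem lineStabilizer_mul_apply_self {i : n} {g h : GL n F} (hg : g ∈ lineStabilizer F i)
    (hh : h ∈ lineStabilizer F i) :
    ((g * h : GL n F) : Matrix n n F) i i = (g : Matrix n n F) i i * (h : Matrix n n F) i i :=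
  blockTriangular_mul_apply_self hg hh fun j hj => by by_contra h; simp [h] at hj

theorem lineStabilizer_mul_inv_apply_self {i : n} {g : GL n F} (hg : g ∈ lineStabilizer F i) :
    (g : Matrix n n F) i i * ((g⁻¹ : GL n F) : Matrix n n F) i i = 1 := by
  rw [← lineStabilizer_mul_apply_self hg (inv_mem hg), mul_inv_cancel, Units.val_one, one_apply_eq]

end BlockTriangular

section Borel

variable [LinearOrder n]

variable (n F) in
/-- The Borel subgroup of upper triangular invertible matrices. -/
def borel : Subgroup (GL n F) := parabolic F (id : n → n)

theorem borel_le_lineStabilizer {i : n} (hi : ∀ j, i ≤ j) : borel n F ≤ lineStabilizer F i :=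
  fun _ hg => mem_lineStabilizer.mpr fun j hj => hg (lt_of_le_of_ne (hi j) hj.symm)

theorem diag_mul_of_mem_borel {g h : GL n F} (hg : g ∈ borel n F) (hh : h ∈ borel n F) :
    ((g * h : GL n F) : Matrix n n F).diag = (g : Matrix n n F).diag * (h : Matrix n n F).diag :=
  funext fun _ => blockTriangular_mul_apply_self hg hh fun _ => id

theorem diag_mul_diag_inv_of_mem_borel {g : GL n F} (hg : g ∈ borel n F) :
    (g : Matrix n n F).diag * ((g⁻¹ : GL n F) : Matrix n n F).diag = 1 := by
  rw [← diag_mul_of_mem_borel hg (inv_mem hg), mul_inv_cancel, Units.val_one, diag_one]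

/-- The inflation to the Borel subgroup of a function `θ` of the diagonal entries, extended by
zero. -/
noncomputable def borelInflation : ((n → F) → ℚ) →ₗ[ℚ] (GL n F → ℚ) where
  toFun θ := (borel n F : Set (GL n F)).indicator fun g => θ (g : Matrix n n F).diag
  map_add' _ _ := Set.indicator_add ..
  map_smul' c θ :=
    Set.indicator_const_smul (borel n F : Set (GL n F)) c fun g => θ (g : Matrix n n F).diag

theorem borelInflation_apply (θ : (n → F) → ℚ) (g : GL n F) :
    borelInflation θ g = if g ∈ borel n F then θ (g : Matrix n n F).diag else 0 :=
  Set.indicator_apply _ (fun g : GL n F => θ (g : Matrix n n F).diag) g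

theorem borelInflation_of_mem (θ : (n → F) → ℚ) {g : GL n F} (hg : g ∈ borel n F) :
    borelInflation θ g = θ (g : Matrix n n F).diag := (borelInflation_apply θ g).trans (if_pos hg)

theorem borelInflation_of_notMem (θ : (n → F) → ℚ) {g : GL n F} (hg : g ∉ borel n F) :
    borelInflation θ g = 0 := (borelInflation_apply θ g).trans (if_neg hg)

/-- The sum of all conjugates of `borelInflation θ`: up to the factor `|B|`, the character
parabolically induced from the class function `θ` of the diagonal torus. -/
noncomputable def torusInduction [Fintype F] : ((n → F) → ℚ) →ₗ[ℚ] (GL n F → ℚ) :=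
  conjSum ∘ₗ borelInflation

theorem torusInduction_apply [Fintype F] (θ : (n → F) → ℚ) :
    torusInduction θ = conjSum (borelInflation θ) := rfl

end Borel

section WeylElements

variable [DecidableEq n]

variable (F) in
/-- Permutation matrices: `permGL F σ` sends the `j`-th basis vector to the `σ j`-th one. -/
noncomputable def permGL : Equiv.Perm n →* GL n F := (permMatrixHom (R := F)).toHomUnits

theorem coe_permGL (σ : Equiv.Perm n) :
    (permGL F σ : Matrix n n F) = (σ⁻¹).toPEquiv.toMatrix := rfl

theorem permGL_apply (w : Equiv.Perm n) (i j : n) :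
    (permGL F w : Matrix n n F) i j = if i = w j then 1 else 0 := by
  rw [coe_permGL, PEquiv.toMatrix_apply]
  simp only [Equiv.Perm.inv_def, Equiv.toPEquiv_apply, Option.mem_def, Option.some.injEq,
    Equiv.symm_apply_eq]

theorem permGL_conj_coe (σ : Equiv.Perm n) (g : GL n F) :
    (((permGL F σ)⁻¹ * g * permGL F σ : GL n F) : Matrix n n F) =
      (g : Matrix n n F).submatrix σ σ := by
  rw [← map_inv, Units.val_mul, Units.val_mul, coe_permGL, coe_permGL, inv_inv,
    PEquiv.toMatrix_toPEquiv_mul, PEquiv.mul_toMatrix_toPEquiv]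
  rfl

/-- Elementary matrices `1 + c E_{ij}`. -/
def transvectionGL {i j : n} (hij : i ≠ j) (c : F) : GL n F where
  val := transvection i j c
  inv := transvection i j (-c)
  val_inv := by rw [transvection_mul_transvection_same _ _ hij, add_neg_cancel, transvection_zero]
  inv_val := by rw [transvection_mul_transvection_same _ _ hij, neg_add_cancel, transvection_zero]

theorem transvectionGL_inv {i j : n} (hij : i ≠ j) (c : F) :
    (transvectionGL hij c)⁻¹ = transvectionGL hij (-c) := Units.ext rfl

theorem transvectionGL_conj_apply {k l : n} (hkl : l ≠ k) (c : F) (g : GL n F) (i j : n) :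
    (((transvectionGL hkl c)⁻¹ * g * transvectionGL hkl c : GL n F) : Matrix n n F) i j =
      (g : Matrix n n F) i j + (if j = k then c * (g : Matrix n n F) i l else 0) -
      if i = l then c * ((g : Matrix n n F) k j + if j = k then c * (g : Matrix n n F) k l else 0)
      else 0 := by
  rw [transvectionGL_inv, Units.val_mul, Units.val_mul]
  simp only [transvectionGL]
  by_cases hj : j = k <;> by_cases hi : i = l
  · subst hj hi
    simp only [mul_transvection_apply_same, transvection_mul_apply_same, if_true]
    ring
  · subst hj
    simp only [mul_transvection_apply_same, transvection_mul_apply_of_ne _ _ _ _ hi, if_true,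
      if_neg hi, sub_zero]
  · subst hi
    simp only [mul_transvection_apply_of_ne _ _ _ _ hj, transvection_mul_apply_same, if_true,
      if_neg hj]
    ring
  · simp only [mul_transvection_apply_of_ne _ _ _ _ hj, transvection_mul_apply_of_ne _ _ _ _ hi,
      if_neg hj, if_neg hi, add_zero, sub_zero]

end WeylElements

end Parabolic

section WeylSymmetry

/-- If `h ↦ (m h)⁻¹ * h * m h` is an involution of `S` with `m` inverted along it, then
`p ↦ p * m (p⁻¹ * g * p)` matches the terms of the two sums of conjugates. -/
theorem conjSum_eq_of_twisted_conj {G : Type*} [Group G] [Fintype G] {S : Set G} {f f' : G → ℚ}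
    (m : G → G) (mem : ∀ h ∈ S, (m h)⁻¹ * h * m h ∈ S)
    (m_conj : ∀ h ∈ S, m ((m h)⁻¹ * h * m h) = (m h)⁻¹) (hf : ∀ h ∉ S, f h = 0)
    (hf' : ∀ h ∉ S, f' h = 0) (hff' : ∀ h ∈ S, f' ((m h)⁻¹ * h * m h) = f h) :
    conjSum f = conjSum f' := by
  funext g
  simp only [conjSum_apply]
  have conj_mul (p : G) : (p * m (p⁻¹ * g * p))⁻¹ * g * (p * m (p⁻¹ * g * p)) =
      (m (p⁻¹ * g * p))⁻¹ * (p⁻¹ * g * p) * m (p⁻¹ * g * p) := by group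
  have involutive (p : G) (hp : p⁻¹ * g * p ∈ S) :
      p * m (p⁻¹ * g * p) * m ((p * m (p⁻¹ * g * p))⁻¹ * g * (p * m (p⁻¹ * g * p))) = p := by
    rw [conj_mul, m_conj _ hp, mul_inv_cancel_right]
  rw [← sum_filter_of_ne fun p _ hp => not_imp_comm.mp (hf (p⁻¹ * g * p)) hp,
    ← sum_filter_of_ne fun p _ hp => not_imp_comm.mp (hf' (p⁻¹ * g * p)) hp]
  refine sum_nbij' (fun p => p * m (p⁻¹ * g * p)) (fun p => p * m (p⁻¹ * g * p)) ?_ ?_ ?_ ?_ ?_ <;>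
    intro p hp <;> have hp := (mem_filter.mp hp).2
  · exact mem_filter.mpr ⟨mem_univ _, by rw [conj_mul]; exact mem _ hp⟩
  · exact mem_filter.mpr ⟨mem_univ _, by rw [conj_mul]; exact mem _ hp⟩
  · exact involutive p hp
  · exact involutive p hp
  · rw [conj_mul, hff' _ hp]

variable {n F : Type*} [Fintype n] [LinearOrder n] [Field F]

/-- A matrix conjugating an upper triangular `h` to an upper triangular matrix whose diagonal
entries at adjacent positions `k ⋖ l` are exchanged. -/
noncomputable def diagSwapper {k l : n} (hkl : k ⋖ l) (h : GL n F) : GL n F :=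
  if (h : Matrix n n F) k l = 0 then permGL F (Equiv.swap k l)
  else transvectionGL hkl.lt.ne'
    (((h : Matrix n n F) l l - (h : Matrix n n F) k k) / (h : Matrix n n F) k l)

variable {k l : n} (hkl : k ⋖ l) {h : GL n F}

include hkl

omit [Fintype n] in
theorem swap_lt_swap_of_covBy {i j : n} (hji : j < i) (hne : ¬(i = l ∧ j = k)) :
    Equiv.swap k l j < Equiv.swap k l i := by
  have le_k (c : n) (hc : c < l) : c ≤ k := hkl.le_of_lt hc
  have l_le (c : n) (hc : k < c) : l ≤ c := hkl.ge_of_gt hc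
  have := hkl.lt
  simp only [Equiv.swap_apply_def]
  grind

theorem diagSwapper_conj_mem_borel (hh : h ∈ borel n F) :
    (diagSwapper hkl h)⁻¹ * h * diagSwapper hkl h ∈ borel n F := by
  intro i j (hji : j < i)
  have below {i j : n} (hji : j < i) : (h : Matrix n n F) i j = 0 := hh hji
  by_cases hx : (h : Matrix n n F) k l = 0
  · rw [diagSwapper, if_pos hx, permGL_conj_coe, submatrix_apply]
    by_cases hij : i = l ∧ j = k
    · rw [hij.1, hij.2, Equiv.swap_apply_left, Equiv.swap_apply_right, hx]
    · exact below (swap_lt_swap_of_covBy hkl hji hij)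
  · rw [diagSwapper, if_neg hx, transvectionGL_conj_apply, below hji]
    by_cases hj : j = k <;> by_cases hi : i = l
    · subst hi hj
      simp only [if_true]
      field_simp
      ring
    · subst hj
      have : l < i := lt_of_le_of_ne (hkl.ge_of_gt hji) (Ne.symm hi)
      simp [hi, below this]
    · subst hi
      have : j < k := lt_of_le_of_ne (hkl.le_of_lt hji) hj
      simp [hj, below this]
    · simp [hi, hj]

theorem diag_diagSwapper_conj (hh : h ∈ borel n F) :
    (((diagSwapper hkl h)⁻¹ * h * diagSwapper hkl h : GL n F) : Matrix n n F).diag =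
      (h : Matrix n n F).diag ∘ Equiv.swap k l := by
  funext i
  by_cases hx : (h : Matrix n n F) k l = 0
  · rw [diagSwapper, if_pos hx, permGL_conj_coe]
    rfl
  · have hlk : l ≠ k := hkl.lt.ne'
    have below : (h : Matrix n n F) l k = 0 := hh hkl.lt
    simp only [diagSwapper, if_neg hx, Matrix.diag_apply, transvectionGL_conj_apply,
      Function.comp_apply]
    rcases eq_or_ne i k with rfl | hik
    · rw [Equiv.swap_apply_left]; simp [hx, hlk.symm]
    rcases eq_or_ne i l with rfl | hil
    · rw [Equiv.swap_apply_right]; simp [hx, hik]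
    · rw [Equiv.swap_apply_of_ne_of_ne hik hil]; simp [hik, hil]

theorem diagSwapper_conj_apply (hh : h ∈ borel n F) :
    (((diagSwapper hkl h)⁻¹ * h * diagSwapper hkl h : GL n F) : Matrix n n F) k l =
      (h : Matrix n n F) k l := by
  by_cases hx : (h : Matrix n n F) k l = 0
  · rw [diagSwapper, if_pos hx, permGL_conj_coe, submatrix_apply, Equiv.swap_apply_left,
      Equiv.swap_apply_right, hx]
    exact hh hkl.lt
  · rw [diagSwapper, if_neg hx, transvectionGL_conj_apply, if_neg hkl.lt.ne', if_neg hkl.lt.ne]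
    ring

theorem diagSwapper_conj (hh : h ∈ borel n F) :
    diagSwapper hkl ((diagSwapper hkl h)⁻¹ * h * diagSwapper hkl h) = (diagSwapper hkl h)⁻¹ := by
  have entry := diagSwapper_conj_apply hkl hh
  have diag := diag_diagSwapper_conj hkl hh
  have at_k := congrFun diag k
  have at_l := congrFun diag l
  simp only [Matrix.diag_apply, Function.comp_apply, Equiv.swap_apply_left,
    Equiv.swap_apply_right] at at_k at_l
  rw [diagSwapper, entry, at_k, at_l]
  by_cases hx : (h : Matrix n n F) k l = 0
  · rw [if_pos hx, diagSwapper, if_pos hx, ← map_inv, Equiv.swap_inv]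
  · rw [if_neg hx, diagSwapper, if_neg hx, transvectionGL_inv]
    congr 1
    ring

theorem torusInduction_comp_swap [Fintype F] (θ : (n → F) → ℚ) :
    torusInduction (fun t => θ (t ∘ Equiv.swap k l)) = torusInduction θ := by
  refine conjSum_eq_of_twisted_conj (S := borel n F) (diagSwapper hkl)
    (fun h hh => diagSwapper_conj_mem_borel hkl hh) (fun h hh => diagSwapper_conj hkl hh)
    (fun h hh => borelInflation_of_notMem _ hh) (fun h hh => borelInflation_of_notMem _ hh)
    fun h hh => ?_
  rw [borelInflation_of_mem _ hh, borelInflation_of_mem _ (diagSwapper_conj_mem_borel hkl hh),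
    diag_diagSwapper_conj hkl hh]

omit hkl

theorem torusInduction_comp_perm {m : ℕ} [Fintype F] (θ : (Fin m → F) → ℚ)
    (σ : Equiv.Perm (Fin m)) : torusInduction (fun t => θ (t ∘ σ)) = torusInduction θ := by
  cases m with
  | zero => rw [Subsingleton.elim σ 1]; rfl
  | succ m =>
    have generated : σ ∈ Submonoid.closure
        (Set.range fun i : Fin m => Equiv.swap i.castSucc i.succ) :=
      Equiv.Perm.mclosure_swap_castSucc_succ m ▸ Submonoid.mem_top σ
    induction generated using Submonoid.closure_induction generalizing θ with
    | mem τ hτ =>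
      obtain ⟨i, rfl⟩ := hτ
      exact torusInduction_comp_swap (Fin.covBy_iff.mpr (Nat.covBy_iff_add_one_eq.mpr rfl)) θ
    | one => rfl
    | mul τ ρ _ _ hτ hρ => exact (hτ fun t => θ (t ∘ ρ)).trans (hρ θ)

end WeylSymmetry

section SemisimpleClasses

section Group

variable {G : Type*} [Group G]

theorem card_conjugatesOf_mul_card_centralizer (g : G) :
    Nat.card (conjugatesOf g) * Nat.card (Subgroup.centralizer {g}) = Nat.card G := by
  have orbit_eq : MulAction.orbit (ConjAct G) g = conjugatesOf g :=
    ConjAct.orbit_eq_carrier_conjClasses g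
  rw [Subgroup.nat_card_centralizer_nat_card_stabilizer, ← orbit_eq, mul_comm,
    Nat.card_coe_set_eq, ← MulAction.index_stabilizer, Subgroup.card_mul_index]
  rfl

end Group

open Polynomial in
theorem isConj_diagonal_of_charpoly_eq {n F : Type*} [Fintype n] [DecidableEq n] [Field F]
    {a : n → F} (ha : Function.Injective a) {M : Matrix n n F}
    (hM : M.charpoly = ∏ i, (X - C (a i))) : IsConj (diagonal a) M := by
  have exists_eigenvector (i : n) : ∃ v, Module.End.HasEigenvector M.toLin' (a i) v := by
    refine Module.End.HasEigenvalue.exists_hasEigenvector ?_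
    rw [Module.End.hasEigenvalue_iff_isRoot_charpoly, charpoly_toLin', hM, IsRoot.def, eval_prod]
    exact prod_eq_zero (mem_univ i) (by simp)
  choose v hv using exists_eigenvector
  have independent : LinearIndependent F v := Module.End.eigenvectors_linearIndependent' _ a ha v hv
  set P : Matrix n n F := (Matrix.of v)ᵀ
  have hP : IsUnit P := by
    rw [isUnit_transpose]
    exact linearIndependent_rows_iff_isUnit.mp independent
  refine ⟨hP.unit, Matrix.ext fun i j => ?_⟩
  have := congrFun (hv j).apply_eq_smul i
  rw [IsUnit.unit_spec, mul_diagonal, mul_comm]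
  exact this.symm

variable {n F : Type*} [Fintype n] [DecidableEq n] [Field F]

/-- The embedding of the diagonal torus. -/
noncomputable def diagGL : (n → Fˣ) →* GL n F :=
  ((diagonalRingHom n F : (n → F) →* Matrix n n F).comp
    ((Units.coeHom F).compLeft n)).toHomUnits

theorem coe_diagGL (a : n → Fˣ) :
    (diagGL a : Matrix n n F) = diagonal fun i => (a i : F) := rfl

theorem det_diagGL (a : n → Fˣ) : (diagGL a : Matrix n n F).det = ∏ i, (a i : F) := det_diagonal

theorem diagGL_mul_apply (a : n → Fˣ) (g : GL n F) (i j : n) :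
    ((diagGL a * g : GL n F) : Matrix n n F) i j = a i * (g : Matrix n n F) i j :=
  diagonal_mul _ _ i j

theorem mul_conj_diagGL_apply (a : n → Fˣ) (p : GL n F) (i j : n) :
    ((p : Matrix n n F) * (p⁻¹ * diagGL a * p : GL n F)) i j = a i * (p : Matrix n n F) i j := by
  rw [← Units.val_mul, mul_assoc, mul_inv_cancel_left, diagGL_mul_apply]

section Torus

variable {a : n → Fˣ} (ha : Function.Injective a)

include ha

theorem centralizer_diagGL :
    Subgroup.centralizer {diagGL a} = (diagGL (n := n) (F := F)).range := by
  ext g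
  rw [Subgroup.mem_centralizer_singleton_iff]
  refine ⟨fun hg => ?_, ?_⟩
  · have off_diag {i j : n} (hij : i ≠ j) : (g : Matrix n n F) i j = 0 := by
      have entry := congrArg (fun h : GL n F => (h : Matrix n n F) i j) hg
      simp only [diagGL_mul_apply, Units.val_mul, coe_diagGL, mul_diagonal] at entry
      have : (a i : F) - a j ≠ 0 := sub_ne_zero.mpr fun h => hij (ha (Units.ext h))
      refine (mul_eq_zero.mp ?_).resolve_left this
      linear_combination -entry
    have diag_ne_zero (i : n) : (g : Matrix n n F) i i ≠ 0 := fun hi =>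
      (isUnit_iff_isUnit_det _).mp g.isUnit |>.ne_zero <| det_eq_zero_of_row_eq_zero i fun j => by
        rcases eq_or_ne i j with rfl | hij
        exacts [hi, off_diag hij]
    refine ⟨fun i => Units.mk0 _ (diag_ne_zero i), Units.ext (Matrix.ext fun i j => ?_)⟩
    rcases eq_or_ne i j with rfl | hij
    · simp [coe_diagGL]
    · simp [coe_diagGL, hij, off_diag hij]
  · rintro ⟨b, rfl⟩
    rw [← map_mul, ← map_mul, mul_comm]

theorem card_conjugatesOf_diagGL [Fintype F] :
    Nat.card (conjugatesOf (diagGL a)) * (Fintype.card F - 1) ^ Fintype.card n =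
      Nat.card (GL n F) := by
  have diagGL_injective : Function.Injective (diagGL (n := n) (F := F)) := fun b c hbc =>
    funext fun i => Units.ext <| congrFun (diagonal_injective (congrArg Units.val hbc)) i
  rw [← card_conjugatesOf_mul_card_centralizer (diagGL a), centralizer_diagGL ha,
    Nat.card_congr (MonoidHom.ofInjective diagGL_injective).symm.toEquiv, Nat.card_fun,
    Nat.card_eq_fintype_card (α := Fˣ), Fintype.card_units, Nat.card_eq_fintype_card (α := n)]

end Torus

section LineStabilizer

variable {i : n} {a : n → Fˣ} {p : GL n F}

theorem conj_diagGL_column (hp : p⁻¹ * diagGL a * p ∈ lineStabilizer F i) (j : n) :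
    (p : Matrix n n F) j i * ((p⁻¹ * diagGL a * p : GL n F) : Matrix n n F) i i =
      a j * (p : Matrix n n F) j i := by
  rw [← mul_conj_diagGL_apply, mul_apply, Fintype.sum_eq_single i fun k hk => ?_]
  rw [mem_lineStabilizer.mp hp k hk, mul_zero]

theorem exists_conj_diagGL_apply_self_eq (hp : p⁻¹ * diagGL a * p ∈ lineStabilizer F i) :
    ∃ k, ((p⁻¹ * diagGL a * p : GL n F) : Matrix n n F) i i = a k := by
  obtain ⟨k, hk⟩ : ∃ k, (p : Matrix n n F) k i ≠ 0 := by
    by_contra! h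
    exact ((isUnit_iff_isUnit_det _).mp p.isUnit).ne_zero (det_eq_zero_of_column_eq_zero i h)
  exact ⟨k, mul_left_cancel₀ hk ((conj_diagGL_column hp k).trans (mul_comm _ _))⟩

theorem conj_diagGL_mem_lineStabilizer_iff (ha : Function.Injective a) (k : n) :
    (p⁻¹ * diagGL a * p ∈ lineStabilizer F i ∧
      ((p⁻¹ * diagGL a * p : GL n F) : Matrix n n F) i i = a k) ↔
      ∀ j ≠ k, (p : Matrix n n F) j i = 0 := by
  refine ⟨fun ⟨hp, hk⟩ j hj => ?_, fun hp => ?_⟩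
  · have column := conj_diagGL_column hp j
    rw [hk] at column
    have : (a k : F) - a j ≠ 0 := sub_ne_zero.mpr fun h => hj (ha (Units.ext h)).symm
    exact (mul_eq_zero.mp (by linear_combination column)).resolve_left this
  · have column (j : n) : ((p⁻¹ * diagGL a * p : GL n F) : Matrix n n F) j i =
        a k * (1 : Matrix n n F) j i := by
      rw [← Units.val_one, ← inv_mul_cancel p, mul_assoc, Units.val_mul, Units.val_mul (p⁻¹) p,
        mul_apply, mul_apply, mul_sum]
      refine sum_congr rfl fun l _ => ?_
      rw [diagGL_mul_apply]
      rcases eq_or_ne l k with rfl | hl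
      · ring
      · rw [hp l hl, mul_zero, mul_zero, mul_zero]
    refine ⟨mem_lineStabilizer.mpr fun j hj => ?_, ?_⟩
    · rw [column, one_apply_ne hj, mul_zero]
    · rw [column, one_apply_eq, mul_one]

theorem card_column_supported (i k : n) [Fintype F] :
    #{p : GL n F | ∀ j ≠ k, (p : Matrix n n F) j i = 0} = Nat.card (lineStabilizer F i) := by
  rw [← SetLike.coe_sort_coe, Nat.card_eq_card_toFinset]
  refine card_equiv (Equiv.mulLeft (permGL F (Equiv.swap i k))⁻¹) fun p => ?_
  have entry (j : n) : (((permGL F (Equiv.swap i k))⁻¹ * p : GL n F) : Matrix n n F) j i =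
      (p : Matrix n n F) (Equiv.swap i k j) i := by
    rw [← map_inv, Units.val_mul, coe_permGL, inv_inv, PEquiv.toMatrix_toPEquiv_mul]
    rfl
  simp only [mem_filter, mem_univ, true_and, Set.mem_toFinset, SetLike.mem_coe,
    mem_lineStabilizer, Equiv.coe_mulLeft, entry]
  refine ⟨fun hp j hj => hp _ fun h => hj ?_, fun hp j hj => ?_⟩
  · exact (Equiv.swap i k).injective (h.trans (Equiv.swap_apply_left i k).symm)
  · simpa only [Equiv.swap_apply_self] using hp (Equiv.swap i k j) fun h =>
      hj ((Equiv.swap i k).injective (h.trans (Equiv.swap_apply_right i k).symm))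

end LineStabilizer

end SemisimpleClasses

section SemisimpleValues

section Line

variable {n F : Type*} [Fintype n] [DecidableEq n] [Field F] [Fintype F]

/-- The function `g ↦ ξ (g i i) * δ (det g)` on the stabilizer of the `i`-th coordinate line,
extended by zero. -/
noncomputable def lineInflation (i : n) (ξ δ : F → ℚ) : GL n F → ℚ :=
  (lineStabilizer F i : Set (GL n F)).indicator fun g =>
    ξ ((g : Matrix n n F) i i) * δ (g : Matrix n n F).det

theorem conjSum_lineInflation_diagGL {a : n → Fˣ} (ha : Function.Injective a) (i : n)
    (ξ δ : F → ℚ) : conjSum (lineInflation i ξ δ) (diagGL a) =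
      Nat.card (lineStabilizer F i) * ((∑ k, ξ (a k)) * δ (∏ k, (a k : F))) := by
  have term (p : GL n F) : lineInflation i ξ δ (p⁻¹ * diagGL a * p) =
      ∑ k, if ∀ j ≠ k, (p : Matrix n n F) j i = 0 then ξ (a k) * δ (∏ k, (a k : F)) else 0 := by
    have det_eq : ((p⁻¹ * diagGL a * p : GL n F) : Matrix n n F).det = ∏ k, (a k : F) := by
      rw [← det_diagGL, Units.val_mul, Units.val_mul, det_units_conj']
    rw [lineInflation, Set.indicator_apply, det_eq]
    simp only [SetLike.mem_coe, ← conj_diagGL_mem_lineStabilizer_iff ha]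
    by_cases hp : p⁻¹ * diagGL a * p ∈ lineStabilizer F i
    · obtain ⟨k, hk⟩ := exists_conj_diagGL_apply_self_eq hp
      rw [if_pos hp, hk, Fintype.sum_eq_single k fun l hl => ?_]
      · rw [if_pos ⟨hp, rfl⟩]
      · exact if_neg fun h => hl (ha (Units.ext h.2)).symm
    · rw [if_neg hp]
      exact (sum_eq_zero fun k _ => if_neg fun h => hp h.1).symm
  rw [conjSum_apply, sum_congr rfl fun p _ => term p, sum_comm]
  simp only [← sum_filter, sum_const, card_column_supported, nsmul_eq_mul, ← mul_sum, ← sum_mul]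

end Line

section Borel

variable {n F : Type*} [Fintype n] [LinearOrder n] [Field F]

theorem isConj_diagGL_of_mem_borel {a : n → Fˣ} (ha : Function.Injective a) {g : GL n F}
    (hg : g ∈ borel n F) (hga : (g : Matrix n n F).diag = fun i => (a i : F)) :
    IsConj (diagGL a) g := by
  rw [← isConj_val_iff, coe_diagGL]
  refine isConj_diagonal_of_charpoly_eq (fun i j hij => ha (Units.ext hij)) ?_
  rw [charpoly_of_isUpperTriangular _ hg]
  exact prod_congr rfl fun i _ => by rw [← congrFun hga i, diag_apply]

theorem diagGL_mem_borel (s : n → Fˣ) : diagGL s ∈ borel n F := blockTriangular_diagonal _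

theorem diag_conj_diagGL {b : GL n F} (hb : b ∈ borel n F) (s : n → Fˣ) :
    ((b * diagGL s * b⁻¹ : GL n F) : Matrix n n F).diag = fun i => (s i : F) := by
  rw [diag_mul_of_mem_borel (mul_mem hb (diagGL_mem_borel s)) (inv_mem hb),
    diag_mul_of_mem_borel hb (diagGL_mem_borel s), mul_right_comm,
    diag_mul_diag_inv_of_mem_borel hb, one_mul, coe_diagGL, diag_diagonal]

theorem diag_inv_conj_diagGL {b : GL n F} (hb : b ∈ borel n F) (s : n → Fˣ) :
    ((b⁻¹ * diagGL s * b : GL n F) : Matrix n n F).diag = fun i => (s i : F) := by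
  simpa only [inv_inv] using diag_conj_diagGL (inv_mem hb) s

theorem conj_diagGL_mem_borel {b : GL n F} (hb : b ∈ borel n F) (s : n → Fˣ) :
    b * diagGL s * b⁻¹ ∈ borel n F := mul_mem (mul_mem hb (diagGL_mem_borel s)) (inv_mem hb)

theorem inv_conj_diagGL_mem_borel {b : GL n F} (hb : b ∈ borel n F) (s : n → Fˣ) :
    b⁻¹ * diagGL s * b ∈ borel n F := mul_mem (mul_mem (inv_mem hb) (diagGL_mem_borel s)) hb

theorem conj_diagGL_mem_borel_iff {a : n → Fˣ} (ha : Function.Injective a) (p : GL n F) :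
    (p⁻¹ * diagGL a * p ∈ borel n F ∧
      ((p⁻¹ * diagGL a * p : GL n F) : Matrix n n F).diag = fun i => (a i : F)) ↔
      p ∈ borel n F := by
  refine ⟨fun ⟨hp, hpa⟩ => ?_,
    fun hp => ⟨inv_conj_diagGL_mem_borel hp a, diag_inv_conj_diagGL hp a⟩⟩
  suffices ∀ j, ∀ i, j < i → (p : Matrix n n F) i j = 0 from fun i j hji => this j i hji
  intro j
  induction j using WellFoundedLT.induction with
  | ind j ih =>
    intro i hji
    have column := mul_conj_diagGL_apply a p i j
    rw [mul_apply, Fintype.sum_eq_single j fun k hkj => ?_] at column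
    · have diag_j := congrFun hpa j
      rw [diag_apply] at diag_j
      have : (a j : F) - a i ≠ 0 := sub_ne_zero.mpr fun h => hji.ne (ha (Units.ext h))
      refine (mul_eq_zero.mp ?_).resolve_left this
      linear_combination column - (p : Matrix n n F) i j * diag_j
    · rcases hkj.lt_or_gt with hlt | hgt
      · rw [ih k hlt i (hlt.trans hji), zero_mul]
      · rw [hp hgt, mul_zero]

theorem borelInflation_single_apply (t : n → F) (g : GL n F) :
    borelInflation (Pi.single t 1) g =
      if g ∈ borel n F ∧ (g : Matrix n n F).diag = t then 1 else 0 := by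
  rw [borelInflation_apply, Pi.single_apply, ← ite_and]

variable [Fintype F]

theorem torusInduction_single {a : n → Fˣ} (ha : Function.Injective a) :
    torusInduction (Pi.single (fun i => (a i : F)) 1) =
      (Nat.card (borel n F) : ℚ) • (conjugatesOf (diagGL a)).indicator (1 : GL n F → ℚ) := by
  funext g
  rw [Pi.smul_apply, Set.indicator_apply, torusInduction_apply, smul_eq_mul, Pi.one_apply]
  split_ifs with hg
  · rw [← conjSum_eq_of_isConj _ hg, conjSum_apply]
    simp only [borelInflation_single_apply, conj_diagGL_mem_borel_iff ha]
    rw [sum_boole, mul_one, ← SetLike.coe_sort_coe, Nat.card_eq_card_toFinset]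
    congr 2
    ext p
    simp
  · rw [conjSum_apply, mul_zero]
    refine sum_eq_zero fun p _ => ?_
    rw [borelInflation_single_apply]
    refine if_neg fun ⟨hp, hpa⟩ => hg ?_
    exact (isConj_diagGL_of_mem_borel ha hp hpa).trans (isConj_iff.mpr ⟨p, by group⟩)

end Borel

end SemisimpleValues

section PrincipalSeriesValues

variable {m : ℕ} {F : Type*} [Field F]

open Polynomial in
theorem exists_perm_of_prod_X_sub_C_eq {ι : Type*} [Fintype ι] {f g : ι → F}
    (hg : Function.Injective g) (hfg : ∏ i, (X - C (f i)) = ∏ i, (X - C (g i))) :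
    ∃ σ : Equiv.Perm ι, f = g ∘ σ := by
  have hf : Function.Injective f :=
    separable_prod_X_sub_C_iff.mp (hfg ▸ separable_prod_X_sub_C_iff.mpr hg)
  have exists_preimage (i : ι) : ∃ k, f i = g k := by
    have root := congrArg (eval (f i)) hfg
    rw [eval_prod, eval_prod, prod_eq_zero (mem_univ i) (by simp), eq_comm,
      prod_eq_zero_iff] at root
    obtain ⟨k, -, hk⟩ := root
    exact ⟨k, sub_eq_zero.mp (by simpa using hk)⟩
  choose σ hσ using exists_preimage
  have hσ_inj : Function.Injective σ := fun i j hij => hf (by rw [hσ, hσ, hij])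
  exact ⟨Equiv.ofBijective σ hσ_inj.bijective_of_finite, funext hσ⟩

theorem exists_perm_of_isConj_of_mem_borel {a : Fin m → Fˣ} (ha : Function.Injective a)
    {h : GL (Fin m) F} (hah : IsConj (diagGL a) h) (hh : h ∈ borel (Fin m) F) :
    ∃ σ : Equiv.Perm (Fin m), (h : Matrix (Fin m) (Fin m) F).diag = fun i => (a (σ i) : F) := by
  have charpoly_eq : (h : Matrix (Fin m) (Fin m) F).charpoly =
      (diagonal fun i => (a i : F)).charpoly := by
    obtain ⟨p, rfl⟩ := isConj_iff.mp hah
    rw [Units.val_mul, Units.val_mul, coe_units_inv, charpoly_units_conj, coe_diagGL]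
  rw [charpoly_of_isUpperTriangular _ hh,
    charpoly_of_isUpperTriangular _ (blockTriangular_diagonal _)] at charpoly_eq
  simp only [diagonal_apply_eq] at charpoly_eq
  exact exists_perm_of_prod_X_sub_C_eq (Units.val_injective.comp ha) charpoly_eq

theorem torusInduction_diagGL [Fintype F] {a : Fin m → Fˣ} (ha : Function.Injective a)
    (θ : (Fin m → F) → ℚ) : torusInduction θ (diagGL a) =
      Nat.card (borel (Fin m) F) * ∑ σ : Equiv.Perm (Fin m), θ fun i => (a (σ i) : F) := by
  have coe_comp_injective :
      Function.Injective fun (σ : Equiv.Perm (Fin m)) i => (a (σ i) : F) :=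
    fun σ τ h => Equiv.ext fun i => ha (Units.ext (congrFun h i))
  have expand (p : GL (Fin m) F) : borelInflation θ (p⁻¹ * diagGL a * p) =
      ∑ σ : Equiv.Perm (Fin m), θ (fun i => (a (σ i) : F)) *
        borelInflation (Pi.single (fun i => (a (σ i) : F)) 1) (p⁻¹ * diagGL a * p) := by
    by_cases hp : p⁻¹ * diagGL a * p ∈ borel (Fin m) F
    · obtain ⟨σ, hσ⟩ := exists_perm_of_isConj_of_mem_borel ha
        (isConj_iff.mpr ⟨p⁻¹, by rw [inv_inv]⟩ : IsConj (diagGL a) _) hp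
      rw [borelInflation_of_mem _ hp, hσ, Fintype.sum_eq_single σ fun τ hτ => ?_]
      · rw [borelInflation_of_mem _ hp, hσ, Pi.single_eq_same, mul_one]
      · rw [borelInflation_of_mem _ hp, hσ,
          Pi.single_eq_of_ne fun h => hτ (coe_comp_injective h).symm, mul_zero]
    · simp only [borelInflation_of_notMem _ hp, mul_zero, sum_const_zero]
  have value (σ : Equiv.Perm (Fin m)) :
      torusInduction (Pi.single (fun i => (a (σ i) : F)) 1) (diagGL a) =
        Nat.card (borel (Fin m) F) := by
    have permute : (fun t => (Pi.single (fun i => (a i : F)) 1 : (Fin m → F) → ℚ) (t ∘ ⇑σ⁻¹)) =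
        Pi.single (fun i => (a (σ i) : F)) 1 := funext fun t => by
      simp only [Pi.single_apply, funext_iff]
      refine if_congr (σ.forall_congr fun {i} => ?_).symm rfl rfl
      simp
    rw [← permute, torusInduction_comp_perm, torusInduction_single ha, Pi.smul_apply,
      Set.indicator_of_mem (mem_conjugatesOf_self), Pi.one_apply, smul_eq_mul, mul_one]
  rw [torusInduction_apply, conjSum_apply, sum_congr rfl fun p _ => expand p, sum_comm, mul_sum]
  refine sum_congr rfl fun σ _ => ?_
  rw [← mul_sum, ← conjSum_apply, ← torusInduction_apply, value, mul_comm]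

end PrincipalSeriesValues

section Cuspidality

variable {n F : Type*} [Fintype n] [Field F]

theorem permGL_mul_diagGL [DecidableEq n] (w : Equiv.Perm n) (s : n → Fˣ) :
    permGL F w * diagGL (s ∘ w) = diagGL s * permGL F w := by
  refine Units.ext (Matrix.ext fun i j => ?_)
  rw [Units.val_mul, Units.val_mul, coe_permGL, PEquiv.toMatrix_toPEquiv_mul,
    PEquiv.mul_toMatrix_toPEquiv]
  simp only [coe_diagGL, submatrix_apply, diagonal_apply, id_eq, Function.comp_apply,
    Equiv.Perm.inv_def, Equiv.symm_symm, Equiv.symm_apply_eq, Equiv.apply_symm_apply]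

/-- The torus acts on both sides of a Bruhat cell through conjugates fixing `b * w * b'`. -/
theorem torus_translate_eq_self [DecidableEq n] (b b' : GL n F) (w : Equiv.Perm n) (s : n → Fˣ) :
    b * diagGL s⁻¹ * b⁻¹ * (b * permGL F w * b') * (b'⁻¹ * diagGL (s ∘ w) * b') =
      b * permGL F w * b' := by
  calc _ = b * diagGL s⁻¹ * (permGL F w * diagGL (s ∘ w)) * b' := by group
    _ = _ := by rw [permGL_mul_diagGL, map_inv]; group

theorem det_mul_mul_of_mul_mul_eq_self [DecidableEq n] {l g r : GL n F} (h : l * g * r = g)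
    (x : GL n F) : ((l * x * r : GL n F) : Matrix n n F).det = (x : Matrix n n F).det := by
  have det_h := congrArg GeneralLinearGroup.det h
  rw [map_mul, map_mul, mul_right_comm, mul_eq_right] at det_h
  have : GeneralLinearGroup.det (l * x * r) = GeneralLinearGroup.det x := by
    rw [map_mul, map_mul, mul_right_comm, det_h, one_mul]
  exact congrArg Units.val this

/-- The translate of `t` by the value at `c` of the coroot that maps `c` to the diagonal matrix with
entries `c⁻¹` at `i` and `c` at `j`. -/
def corootTranslate [DecidableEq n] (i j : n) (t : n → Fˣ) (c : Fˣ) : n → Fˣ :=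
  t * (Pi.mulSingle i c⁻¹ * Pi.mulSingle j c)

/-- A function of the diagonal torus is cuspidal if its sums along all the coroots vanish. -/
def IsCuspidal [DecidableEq n] [Fintype F] (θ : (n → F) → ℚ) : Prop :=
  ∀ i j, i ≠ j → ∀ t : n → Fˣ, ∑ c : Fˣ, θ (fun k => (corootTranslate i j t c k : F)) = 0

variable [LinearOrder n]

theorem exists_units_diag_eq_of_mem_borel {b : GL n F} (hb : b ∈ borel n F) :
    ∃ t : n → Fˣ, (b : Matrix n n F).diag = fun i => (t i : F) :=
  ⟨fun i => Units.mk0 _ (left_ne_zero_of_mul_eq_one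
    (congrFun (diag_mul_diag_inv_of_mem_borel hb) i)), rfl⟩

variable [Fintype F] {K : Finset (GL n F)} (hK : ∀ p, ∀ u ∈ K, p * u * p⁻¹ ∈ K)

include hK

theorem translateSum_indicator_bruhat {H : Subgroup (GL n F)} (hBH : borel n F ≤ H)
    {f : GL n F → ℚ} {b b' : GL n F} (hb : b ∈ borel n F) (hb' : b' ∈ borel n F)
    (w : Equiv.Perm n) (i : n) (hf : ∀ x ∈ H, ∑ c : Fˣ, f (b * diagGL (Pi.mulSingle i c)⁻¹ * b⁻¹ *
      x * (b'⁻¹ * diagGL (Pi.mulSingle i c ∘ w) * b')) = 0) :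
    translateSum K ((H : Set (GL n F)).indicator f) (b * permGL F w * b') = 0 := by
  refine translateSum_eq_zero_of_sum_translates_eq_zero hK _ _
    (fun c : Fˣ => torus_translate_eq_self b b' w (Pi.mulSingle i c)) fun x => ?_
  have mem_iff (c : Fˣ) : b * diagGL (Pi.mulSingle i c)⁻¹ * b⁻¹ * x *
      (b'⁻¹ * diagGL (Pi.mulSingle i c ∘ w) * b') ∈ H ↔ x ∈ H := by
    rw [H.mul_mem_cancel_right (hBH (inv_conj_diagGL_mem_borel hb' _)),
      H.mul_mem_cancel_left (hBH (conj_diagGL_mem_borel hb _))]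
  simp only [Set.indicator_apply, SetLike.mem_coe, mem_iff]
  by_cases hx : x ∈ H
  · simpa only [if_pos hx] using hf x hx
  · simp only [if_neg hx, sum_const_zero]

theorem translateSum_borelInflation_bruhat {θ : (n → F) → ℚ} (hθ : IsCuspidal θ) {b b' : GL n F}
    (hb : b ∈ borel n F) (hb' : b' ∈ borel n F) {w : Equiv.Perm n} (hw : w ≠ 1) :
    translateSum K (borelInflation θ) (b * permGL F w * b') = 0 := by
  obtain ⟨i, hi⟩ : ∃ i, w⁻¹ i ≠ i := by
    by_contra! h
    exact hw (inv_eq_one.mp (Equiv.ext h))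
  refine translateSum_indicator_bruhat hK le_rfl hb hb' w i fun x hx => ?_
  obtain ⟨t, ht⟩ := exists_units_diag_eq_of_mem_borel hx
  rw [← hθ i (w⁻¹ i) hi.symm t]
  refine sum_congr rfl fun c _ => congrArg θ ?_
  rw [diag_mul_of_mem_borel (mul_mem (conj_diagGL_mem_borel hb _) hx)
      (inv_conj_diagGL_mem_borel hb' _), diag_mul_of_mem_borel (conj_diagGL_mem_borel hb _) hx,
    diag_conj_diagGL hb, diag_inv_conj_diagGL hb', Pi.mulSingle_comp_equiv, ht]
  funext k
  simp only [corootTranslate, Pi.mul_apply, Units.val_mul, Pi.mulSingle_inv]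
  rw [mul_comm (_ : F) (t k : F), mul_assoc]
  rfl

theorem translateSum_indicator_lineCharacter_bruhat {H : Subgroup (GL n F)} {i : n}
    (hBH : borel n F ≤ H) (hHP : H ≤ lineStabilizer F i) {ξ : F → ℚ} (hξ : ∑ c : Fˣ, ξ c = 0)
    (δ : F → ℚ) {b b' : GL n F} (hb : b ∈ borel n F) (hb' : b' ∈ borel n F) {w : Equiv.Perm n}
    (hw : w i ≠ i) :
    translateSum K ((H : Set (GL n F)).indicator fun g =>
      ξ ((g : Matrix n n F) i i) * δ (g : Matrix n n F).det) (b * permGL F w * b') = 0 := by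
  have hBP : borel n F ≤ lineStabilizer F i := hBH.trans hHP
  refine translateSum_indicator_bruhat hK hBH hb hb' w i fun x hxH => ?_
  have hx := hHP hxH
  have x_ne_zero := left_ne_zero_of_mul_eq_one (lineStabilizer_mul_inv_apply_self hx)
  have term (c : Fˣ) : ξ (((b * diagGL (Pi.mulSingle i c)⁻¹ * b⁻¹ * x *
        (b'⁻¹ * diagGL (Pi.mulSingle i c ∘ w) * b') : GL n F) : Matrix n n F) i i) =
      ξ ((Units.mk0 _ x_ne_zero * c⁻¹ : Fˣ) : F) := by
    have left_entry := congrFun (diag_conj_diagGL hb (Pi.mulSingle i c)⁻¹) i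
    have right_entry := congrFun (diag_inv_conj_diagGL hb' (Pi.mulSingle i c ∘ w)) i
    rw [diag_apply] at left_entry right_entry
    rw [lineStabilizer_mul_apply_self (mul_mem (hBP (conj_diagGL_mem_borel hb _)) hx)
        (hBP (inv_conj_diagGL_mem_borel hb' _)),
      lineStabilizer_mul_apply_self (hBP (conj_diagGL_mem_borel hb _)) hx, left_entry, right_entry,
      Function.comp_apply, Pi.mulSingle_eq_of_ne hw, Pi.inv_apply, Pi.mulSingle_eq_same,
      Units.val_one, mul_one, Units.val_mul, mul_comm]
    rfl
  simp only [det_mul_mul_of_mul_mul_eq_self (torus_translate_eq_self b b' w _), ← sum_mul]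
  rw [sum_congr rfl fun c _ => term c, mul_eq_zero]
  exact .inl (.trans (Equiv.sum_comp
    ((Equiv.inv Fˣ).trans (Equiv.mulLeft (Units.mk0 _ x_ne_zero))) fun c : Fˣ => ξ c) hξ)

end Cuspidality

section RegularUnipotent

section Endomorphisms

variable {F V : Type*} [Field F] [AddCommGroup V] [Module F V] {f g : Module.End F V} {m : ℕ}

theorem linearIndependent_pow_apply {v : V} (hv : (f ^ (m + 1)) v = 0) (hv' : (f ^ m) v ≠ 0) :
    LinearIndependent F fun j : Fin (m + 1) => (f ^ (j : ℕ)) v := by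
  rw [Fintype.linearIndependent_iff]
  intro c hc i
  induction i using WellFoundedLT.induction with
  | _ i ih =>
    have image_eq_zero := congrArg (f ^ (m - i)) hc
    rw [map_sum, map_zero, Fintype.sum_eq_single i fun j hj => ?_, map_smul, ← Module.End.mul_apply,
      ← pow_add, Nat.sub_add_cancel (Nat.le_of_lt_succ i.isLt)] at image_eq_zero
    · exact (smul_eq_zero.mp image_eq_zero).resolve_right hv'
    · rcases hj.lt_or_gt with hlt | hgt
      · rw [ih j hlt, zero_smul, map_zero]
      · rw [map_smul, ← Module.End.mul_apply, ← pow_add,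
          Module.End.pow_map_zero_of_le (by omega) hv, smul_zero]

/-- Both endomorphisms are a single nilpotent Jordan block in the basis `(f ^ j) v`. -/
theorem isConj_of_pow_eq_zero (hV : Module.finrank F V = m + 1) (hf : f ^ (m + 1) = 0)
    (hf' : f ^ m ≠ 0) (hg : g ^ (m + 1) = 0) (hg' : g ^ m ≠ 0) : IsConj f g := by
  obtain ⟨v, hv⟩ := DFunLike.exists_ne hf'
  obtain ⟨w, hw⟩ := DFunLike.exists_ne hg'
  set basis_f := basisOfLinearIndependentOfCardEqFinrank
    (linearIndependent_pow_apply (LinearMap.congr_fun hf v) hv) (by rw [Fintype.card_fin, hV])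
  set basis_g := basisOfLinearIndependentOfCardEqFinrank
    (linearIndependent_pow_apply (LinearMap.congr_fun hg w) hw) (by rw [Fintype.card_fin, hV])
  set e : V ≃ₗ[F] V := basis_f.equiv basis_g (Equiv.refl _)
  have e_apply {j : ℕ} (hj : j ≤ m + 1) : e ((f ^ j) v) = (g ^ j) w := by
    rcases hj.lt_or_eq with hlt | rfl
    · simpa [basis_f, basis_g] using basis_f.equiv_apply ⟨j, hlt⟩ basis_g (Equiv.refl _)
    · rw [hf, hg, LinearMap.zero_apply, LinearMap.zero_apply, map_zero]
  refine ⟨(LinearMap.GeneralLinearGroup.generalLinearEquiv F V).symm e, basis_f.ext fun j => ?_⟩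
  have on_basis : e (f ((f ^ (j : ℕ)) v)) = g (e ((f ^ (j : ℕ)) v)) := by
    rw [e_apply j.isLt.le, ← Module.End.mul_apply, ← Module.End.mul_apply, ← pow_succ', ← pow_succ',
      e_apply j.isLt]
  rw [coe_basisOfLinearIndependentOfCardEqFinrank]
  exact on_basis

end Endomorphisms

variable {F : Type*} [Field F] {m : ℕ}

/-- Unipotent matrices consisting of a single Jordan block, characterized by the nilpotency index
of `M - 1`. -/
def IsRegularUnipotent (M : Matrix (Fin (m + 1)) (Fin (m + 1)) F) : Prop :=
  (M - 1) ^ (m + 1) = 0 ∧ (M - 1) ^ m ≠ 0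

theorem isConj_iff_isRegularUnipotent {J M : Matrix (Fin (m + 1)) (Fin (m + 1)) F}
    (hJ : IsRegularUnipotent J) : IsConj J M ↔ IsRegularUnipotent M := by
  refine ⟨fun ⟨c, hc⟩ => ?_, fun hM => ?_⟩
  · have pow_eq_zero_iff (k : ℕ) : (M - 1) ^ k = 0 ↔ (J - 1) ^ k = 0 := by
      have hk := (hc.sub_right (SemiconjBy.one_right _)).pow_right k
      rw [← Units.mul_left_eq_zero c, ← hk.eq, Units.mul_right_eq_zero]
    exact ⟨(pow_eq_zero_iff _).mpr hJ.1, mt (pow_eq_zero_iff _).mp hJ.2⟩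
  · have nilpotent_conj : IsConj (J - 1) (M - 1) := by
      have map_pow_eq_zero_iff (N : Matrix (Fin (m + 1)) (Fin (m + 1)) F) (k : ℕ) :
          toLinAlgEquiv' N ^ k = 0 ↔ N ^ k = 0 := by
        rw [← map_pow, map_eq_zero_iff _ toLinAlgEquiv'.injective]
      have := isConj_of_pow_eq_zero (Module.finrank_fin_fun F) ((map_pow_eq_zero_iff _ _).mpr hJ.1)
        (mt (map_pow_eq_zero_iff _ _).mp hJ.2) ((map_pow_eq_zero_iff _ _).mpr hM.1)
        (mt (map_pow_eq_zero_iff _ _).mp hM.2)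
      simpa using MonoidHom.map_isConj (toLinAlgEquiv' (R := F)).symm.toRingHom.toMonoidHom this
    obtain ⟨c, hc⟩ := nilpotent_conj
    exact ⟨c, by simpa using hc.add_right (SemiconjBy.one_right _)⟩

theorem IsRegularUnipotent.isUnit {M : Matrix (Fin (m + 1)) (Fin (m + 1)) F}
    (hM : IsRegularUnipotent M) : IsUnit M := by
  simpa using IsNilpotent.isUnit_add_one ⟨m + 1, hM.1⟩

section Unipotent

variable {n : Type*} [Fintype n] [DecidableEq n] {M : Matrix n n F} (hM : IsNilpotent (M - 1))

include hM

theorem det_eq_one_of_isNilpotent_sub_one : M.det = 1 := by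
  have charpoly_eq : (1 - M).charpoly = Polynomial.X ^ Fintype.card n := by
    have := isNilpotent_charpoly_sub_pow_of_isNilpotent hM.neg
    rwa [neg_sub, isNilpotent_iff_eq_zero, sub_eq_zero] at this
  simpa [eval_charpoly] using congrArg (Polynomial.eval 1) charpoly_eq

theorem apply_self_eq_one_of_isNilpotent_sub_one {α : Type*} [LinearOrder α] {b : n → α}
    (hMb : M.BlockTriangular b) {i : n} (hi : ∀ j, b j = b i → j = i) : M i i = 1 := by
  have sub_one : (M - 1).BlockTriangular b := hMb.sub blockTriangular_one
  have pow_apply (k : ℕ) : ((M - 1) ^ k) i i = (M i i - 1) ^ k := by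
    induction k with
    | zero => simp only [pow_zero, one_apply_eq]
    | succ k ih =>
      rw [pow_succ, blockTriangular_mul_apply_self (sub_one.pow k) sub_one hi, ih, pow_succ,
        Matrix.sub_apply, one_apply_eq]
  obtain ⟨k, hk⟩ := hM
  refine sub_eq_zero.mp (eq_zero_of_pow_eq_zero (n := k) ?_)
  rw [← pow_apply, hk, Matrix.zero_apply]

end Unipotent

end RegularUnipotent

section Cells

variable {F : Type*} [Field F]

theorem sub_one_pow_three_eq_zero_iff (M : Matrix (Fin 3) (Fin 3) F) :
    (M - 1) ^ 3 = 0 ↔ M.trace = 3 ∧ M.adjugate.trace = 3 ∧ M.det = 1 := by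
  have trace_sub : (M - 1).trace = M.trace - 3 := by
    rw [trace_sub, trace_one, Fintype.card_fin, Nat.cast_ofNat]
  have trace_adjugate_sub : (M - 1).adjugate.trace = M.adjugate.trace - 2 * M.trace + 3 := by
    simp only [adjugate_fin_three, trace_fin_three, Matrix.sub_apply, one_apply, of_apply,
      cons_val', cons_val_zero, cons_val_one, cons_val_fin_one, Matrix.cons_val, Fin.isValue,
      Fin.reduceEq, zero_ne_one, one_ne_zero, ↓reduceIte, sub_zero]
    ring
  have cayley_hamilton : (M - 1) ^ 3 =
      (M.trace - 3) • M ^ 2 - (M.adjugate.trace - 3) • M + (M.det - 1) • 1 := by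
    ext i j
    simp only [pow_succ, pow_zero, one_mul, adjugate_fin_three, trace_fin_three, det_fin_three,
      Matrix.sub_apply, Matrix.add_apply, Matrix.smul_apply, smul_eq_mul, one_apply,
      Matrix.mul_apply, Fin.sum_univ_three]
    fin_cases i <;> fin_cases j <;> simp <;> ring
  refine ⟨fun h => ?_, fun ⟨h₁, h₂, h₃⟩ => ?_⟩
  · have nilpotent : IsNilpotent (M - 1) := ⟨3, h⟩
    have adjugate_nilpotent : IsNilpotent (M - 1).adjugate :=
      ⟨3, by rw [← adjugate_pow, h, adjugate_zero]⟩
    have h₁ := (isNilpotent_trace_of_isNilpotent nilpotent).eq_zero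
    have h₂ := (isNilpotent_trace_of_isNilpotent adjugate_nilpotent).eq_zero
    exact ⟨by linear_combination h₁ - trace_sub,
      by linear_combination h₂ - trace_adjugate_sub + 2 * (h₁ - trace_sub),
      det_eq_one_of_isNilpotent_sub_one nilpotent⟩
  · rw [cayley_hamilton, h₁, h₂, h₃]
    simp only [sub_self, zero_smul, add_zero]

theorem isRegularUnipotent_fin_three_iff {M : Matrix (Fin 3) (Fin 3) F} :
    IsRegularUnipotent M ↔ M 0 0 + M 1 1 + M 2 2 = 3 ∧
      (M 1 1 * M 2 2 - M 1 2 * M 2 1) + (M 0 0 * M 2 2 - M 0 2 * M 2 0) +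
        (M 0 0 * M 1 1 - M 0 1 * M 1 0) = 3 ∧
      M 0 0 * M 1 1 * M 2 2 - M 0 0 * M 1 2 * M 2 1 - M 0 1 * M 1 0 * M 2 2 +
        M 0 1 * M 1 2 * M 2 0 + M 0 2 * M 1 0 * M 2 1 - M 0 2 * M 1 1 * M 2 0 = 1 ∧
      (M - 1) ^ 2 ≠ 0 := by
  rw [IsRegularUnipotent, sub_one_pow_three_eq_zero_iff, and_assoc, and_assoc, det_fin_three,
    adjugate_fin_three, trace_fin_three, trace_fin_three]
  simp

theorem isRegularUnipotent_of_entries {a b c d e f g h i : F} (trace_eq : a + e + i = 3)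
    (minors_eq : (e * i - f * h) + (a * i - c * g) + (a * e - b * d) = 3)
    (det_eq : a * e * i - a * f * h - b * d * i + b * f * g + c * d * h - c * e * g = 1)
    (sq_ne_zero : (!![a, b, c; d, e, f; g, h, i] - 1) ^ 2 ≠ 0) :
    IsRegularUnipotent !![a, b, c; d, e, f; g, h, i] :=
  isRegularUnipotent_fin_three_iff.mpr ⟨trace_eq, minors_eq, det_eq, sq_ne_zero⟩

/-- For `i = w⁻¹ 1` and `k = w⁻¹ 2`, the regular unipotent matrices `M` with `w M` upper
triangular. -/
def regularUnipotentCell (F : Type*) [Field F] (i k : Fin 3) : Set (Matrix (Fin 3) (Fin 3) F) :=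
  {M | IsRegularUnipotent M ∧ M i 0 = 0 ∧ M k 0 = 0 ∧ M k 1 = 0}

theorem eq_one_of_sum_eq_three {x t d : F} (h₁ : x + t = 3) (h₂ : d + x * t = 3) (h₃ : x * d = 1) :
    x = 1 := by
  refine sub_eq_zero.mp (eq_zero_of_pow_eq_zero (n := 3) ?_)
  linear_combination x ^ 2 * h₁ - x * h₂ + h₃

theorem exists_param_regularUnipotentCell_one :
    ∃ f : Fˣ × Fˣ × F → Matrix (Fin 3) (Fin 3) F,
      f.Injective ∧ Set.range f = regularUnipotentCell F 1 2 := by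
  refine ⟨fun p => !![1, p.1, p.2.2; 0, 1, p.2.1; 0, 0, 1],
    fun p p' h => ?_, Set.ext fun M => ⟨?_, fun ⟨hM, h10, h20, h21⟩ => ?_⟩⟩
  · have entry := congrFun₂ h
    exact Prod.ext (Units.ext (entry 0 1)) (Prod.ext (Units.ext (entry 1 2)) (entry 0 2))
  · rintro ⟨⟨a, b, x⟩, rfl⟩
    refine ⟨isRegularUnipotent_of_entries (by ring) (by ring) (by ring) fun h => ?_, rfl, rfl, rfl⟩
    simpa [pow_two, Matrix.mul_apply, Fin.sum_univ_three, one_apply] using congrFun₂ h 0 2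
  · obtain ⟨trace_eq, minors_eq, det_eq, regular⟩ := isRegularUnipotent_fin_three_iff.mp hM
    simp only [h10, h20, h21, zero_mul, mul_zero, add_zero, sub_zero] at trace_eq minors_eq det_eq
    have h00 : M 0 0 = 1 := eq_one_of_sum_eq_three (t := M 1 1 + M 2 2) (d := M 1 1 * M 2 2)
      (by linear_combination trace_eq) (by linear_combination minors_eq)
      (by linear_combination det_eq)
    have h11 : M 1 1 = 1 := eq_one_of_sum_eq_three (t := M 0 0 + M 2 2) (d := M 0 0 * M 2 2)
      (by linear_combination trace_eq) (by linear_combination minors_eq)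
      (by linear_combination det_eq)
    have h22 : M 2 2 = 1 := by linear_combination trace_eq - h00 - h11
    have superdiagonal_ne_zero : M 0 1 * M 1 2 ≠ 0 := fun h0 => by
      refine regular (Matrix.ext fun i j => ?_)
      fin_cases i <;> fin_cases j <;>
        simp [pow_two, Matrix.mul_apply, Fin.sum_univ_three, h10, h20, h21, h00, h11, h22, h0]
    refine ⟨(Units.mk0 _ (left_ne_zero_of_mul superdiagonal_ne_zero),
      Units.mk0 _ (right_ne_zero_of_mul superdiagonal_ne_zero), M 0 2),
      .trans ?_ M.eta_fin_three.symm⟩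
    simp only [Units.val_mk0, h10, h20, h21, h00, h11, h22]

theorem exists_param_regularUnipotentCell_swap_one_two :
    ∃ f : Fˣ × Fˣ × F → Matrix (Fin 3) (Fin 3) F,
      f.Injective ∧ Set.range f = regularUnipotentCell F 2 1 := by
  refine ⟨fun p => !![1, p.2.2, (p.2.2 + p.2.1) / p.1; 0, 0, -(p.1 : F)⁻¹; 0, p.1, 2],
    fun p p' h => ?_, Set.ext fun M => ⟨?_, fun ⟨hM, h20, h10, h11⟩ => ?_⟩⟩
  · have entry := congrFun₂ h
    have h21 : (p.1 : F) = p'.1 := entry 2 1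
    have h01 : p.2.2 = p'.2.2 := entry 0 1
    have h02 : (p.2.2 + p.2.1) / p.1 = (p'.2.2 + p'.2.1) / p'.1 := entry 0 2
    rw [h21, h01, div_left_inj' p'.1.ne_zero, add_right_inj] at h02
    exact Prod.ext (Units.ext h21) (Prod.ext (Units.ext h02) h01)
  · rintro ⟨⟨a, b, x⟩, rfl⟩
    refine ⟨isRegularUnipotent_of_entries (by ring) ?_ ?_ fun h => ?_, rfl, rfl, rfl⟩
    · field_simp
      ring
    · field_simp
      ring
    · simpa [pow_two, Matrix.mul_apply, Fin.sum_univ_three, one_apply] using congrFun₂ h 0 1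
  · obtain ⟨trace_eq, minors_eq, det_eq, regular⟩ := isRegularUnipotent_fin_three_iff.mp hM
    simp only [h20, h10, h11, zero_mul, mul_zero, add_zero, sub_zero, zero_sub]
      at trace_eq minors_eq det_eq
    have h00 : M 0 0 = 1 := eq_one_of_sum_eq_three trace_eq minors_eq
      (by linear_combination det_eq)
    have h22 : M 2 2 = 2 := by linear_combination trace_eq - h00
    have h21 : M 2 1 ≠ 0 := fun h0 => by simp [h0] at det_eq
    have h12 : M 1 2 = -(M 2 1)⁻¹ := by
      field_simp
      linear_combination -det_eq - M 1 2 * M 2 1 * h00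
    have param_ne_zero : M 2 1 * M 0 2 - M 0 1 ≠ 0 := fun h0 => by
      have h01 : M 0 1 = M 2 1 * M 0 2 := by linear_combination -h0
      refine regular (Matrix.ext fun i j => ?_)
      fin_cases i <;> fin_cases j <;>
        simp [pow_two, Matrix.mul_apply, Fin.sum_univ_three, h10, h20, h11, h00, h12, h22, h01] <;>
        field_simp <;> ring
    refine ⟨(Units.mk0 _ h21, Units.mk0 _ param_ne_zero, M 0 1), .trans ?_ M.eta_fin_three.symm⟩
    simp [h10, h20, h11, h00, h12, h22, h21]

theorem exists_param_regularUnipotentCell_swap_zero_one :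
    ∃ f : Fˣ × Fˣ × F → Matrix (Fin 3) (Fin 3) F,
      f.Injective ∧ Set.range f = regularUnipotentCell F 0 2 := by
  refine ⟨fun p => !![0, -(p.1 : F)⁻¹, p.2.2; p.1, 2, p.2.1 - p.1 * p.2.2; 0, 0, 1],
    fun p p' h => ?_, Set.ext fun M => ⟨?_, fun ⟨hM, h00, h20, h21⟩ => ?_⟩⟩
  · have entry := congrFun₂ h
    have h10 : (p.1 : F) = p'.1 := entry 1 0
    have h02 : p.2.2 = p'.2.2 := entry 0 2
    have h12 : (p.2.1 : F) - p.1 * p.2.2 = p'.2.1 - p'.1 * p'.2.2 := entry 1 2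
    rw [h10, h02, sub_left_inj] at h12
    exact Prod.ext (Units.ext h10) (Prod.ext (Units.ext h12) h02)
  · rintro ⟨⟨a, b, x⟩, rfl⟩
    refine ⟨isRegularUnipotent_of_entries (by ring) ?_ ?_ fun h => b.ne_zero ?_, rfl, rfl, rfl⟩
    · field_simp
      ring
    · field_simp
      ring
    · have entry : (a : F) * x + (2 - 1) * (b - a * x) = 0 := by
        simpa [pow_two, Matrix.mul_apply, Fin.sum_univ_three] using congrFun₂ h 1 2
      linear_combination entry
  · obtain ⟨trace_eq, minors_eq, det_eq, regular⟩ := isRegularUnipotent_fin_three_iff.mp hM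
    simp only [h00, h20, h21, zero_mul, mul_zero, zero_add, add_zero, sub_zero, zero_sub]
      at trace_eq minors_eq det_eq
    have h22 : M 2 2 = 1 := eq_one_of_sum_eq_three (t := M 1 1) (d := -(M 0 1 * M 1 0))
      (by linear_combination trace_eq) (by linear_combination minors_eq)
      (by linear_combination det_eq)
    have h11 : M 1 1 = 2 := by linear_combination trace_eq - h22
    have h10 : M 1 0 ≠ 0 := fun h0 => by simp [h0] at det_eq
    have h01 : M 0 1 = -(M 1 0)⁻¹ := by
      field_simp
      linear_combination -det_eq - M 0 1 * M 1 0 * h22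
    have param_ne_zero : M 1 2 + M 1 0 * M 0 2 ≠ 0 := fun h0 => by
      have h12 : M 1 2 = -(M 1 0 * M 0 2) := by linear_combination h0
      refine regular (Matrix.ext fun i j => ?_)
      fin_cases i <;> fin_cases j <;>
        simp [pow_two, Matrix.mul_apply, Fin.sum_univ_three, h00, h20, h21, h01, h11, h22, h12] <;>
        field_simp <;> ring
    refine ⟨(Units.mk0 _ h10, Units.mk0 _ param_ne_zero, M 0 2), .trans ?_ M.eta_fin_three.symm⟩
    simp only [Units.val_mk0, add_sub_cancel_right, h00, h20, h21, h01, h11, h22]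

theorem exists_param_regularUnipotentCell_cycle :
    ∃ f : Fˣ × Fˣ × F → Matrix (Fin 3) (Fin 3) F,
      f.Injective ∧ Set.range f = regularUnipotentCell F 0 1 := by
  refine ⟨fun p => !![0, p.2.1, -(3 + p.2.2 * (p.1 * p.2.1 : F)⁻¹) / p.1;
      0, 0, (p.1 * p.2.1 : F)⁻¹; p.1, p.2.2, 3],
    fun p p' h => ?_, Set.ext fun M => ⟨?_, fun ⟨hM, h00, h10, h11⟩ => ?_⟩⟩
  · have entry := congrFun₂ h
    exact Prod.ext (Units.ext (entry 2 0)) (Prod.ext (Units.ext (entry 0 1)) (entry 2 1))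
  · rintro ⟨⟨a, b, x⟩, rfl⟩
    refine ⟨isRegularUnipotent_of_entries (by ring) ?_ ?_ fun h => ?_, rfl, rfl, rfl⟩
    · field_simp
      ring
    · field_simp
      ring
    · simpa [pow_two, Matrix.mul_apply, Fin.sum_univ_three, one_apply] using congrFun₂ h 1 0
  · obtain ⟨trace_eq, minors_eq, det_eq, -⟩ := isRegularUnipotent_fin_three_iff.mp hM
    simp only [h00, h10, h11, zero_mul, mul_zero, zero_add, add_zero, sub_zero, zero_sub]
      at trace_eq minors_eq det_eq
    have h20 : M 2 0 ≠ 0 := fun h0 => by simp [h0] at det_eq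
    have h01 : M 0 1 ≠ 0 := fun h0 => by simp [h0] at det_eq
    have h12 : M 1 2 = (M 2 0 * M 0 1)⁻¹ := by
      field_simp
      linear_combination det_eq
    have h02 : M 0 2 = -(3 + M 2 1 * M 1 2) / M 2 0 := by
      field_simp
      linear_combination -minors_eq
    refine ⟨(Units.mk0 _ h20, Units.mk0 _ h01, M 2 1), .trans ?_ M.eta_fin_three.symm⟩
    simp only [Units.val_mk0, h00, h10, h11, trace_eq, ← h12, h02]

theorem exists_param_regularUnipotentCell_cycle_inv :
    ∃ f : Fˣ × Fˣ × F → Matrix (Fin 3) (Fin 3) F,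
      f.Injective ∧ Set.range f = regularUnipotentCell F 2 0 := by
  refine ⟨fun p => !![0, 0, (p.1 * p.2.1 : F)⁻¹;
      p.1, p.2.2, (p.2.2 * (3 - p.2.2) - 3) / p.2.1; 0, p.2.1, 3 - p.2.2],
    fun p p' h => ?_, Set.ext fun M => ⟨?_, fun ⟨hM, h20, h00, h01⟩ => ?_⟩⟩
  · have entry := congrFun₂ h
    exact Prod.ext (Units.ext (entry 1 0)) (Prod.ext (Units.ext (entry 2 1)) (entry 1 1))
  · rintro ⟨⟨a, b, x⟩, rfl⟩
    refine ⟨isRegularUnipotent_of_entries (by ring) ?_ ?_ fun h => ?_, rfl, rfl, rfl⟩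
    · field_simp
      ring
    · field_simp
      ring
    · simpa [pow_two, Matrix.mul_apply, Fin.sum_univ_three, one_apply] using congrFun₂ h 0 1
  · obtain ⟨trace_eq, minors_eq, det_eq, -⟩ := isRegularUnipotent_fin_three_iff.mp hM
    simp only [h20, h00, h01, zero_mul, mul_zero, zero_add, add_zero, sub_zero]
      at trace_eq minors_eq det_eq
    have h10 : M 1 0 ≠ 0 := fun h0 => by simp [h0] at det_eq
    have h21 : M 2 1 ≠ 0 := fun h0 => by simp [h0] at det_eq
    have h22 : M 2 2 = 3 - M 1 1 := by linear_combination trace_eq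
    have h02 : M 0 2 = (M 1 0 * M 2 1)⁻¹ := by
      field_simp
      linear_combination det_eq
    have h12 : M 1 2 = (M 1 1 * (3 - M 1 1) - 3) / M 2 1 := by
      field_simp
      linear_combination M 1 1 * trace_eq - minors_eq
    refine ⟨(Units.mk0 _ h10, Units.mk0 _ h21, M 1 1), .trans ?_ M.eta_fin_three.symm⟩
    simp only [Units.val_mk0, h00, h01, h20, ← h22, ← h02, h12]

theorem entries_of_mem_regularUnipotentCell_longest {M : Matrix (Fin 3) (Fin 3) F}
    (hM : M ∈ regularUnipotentCell F 1 0) :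
    M 2 0 ≠ 0 ∧ M 1 1 ≠ 0 ∧ M 2 2 = 3 - M 1 1 ∧ M 0 2 = -(M 2 0 * M 1 1)⁻¹ ∧
      (M 2 1 = 0 → M 1 1 = 1 ∧ M 1 2 ≠ 0) ∧
      (M 2 1 ≠ 0 → M 1 2 = (1 - M 1 1) ^ 3 / (M 1 1 * M 2 1)) := by
  obtain ⟨hreg, h10, h00, h01⟩ := hM
  obtain ⟨trace_eq, minors_eq, det_eq, regular⟩ := isRegularUnipotent_fin_three_iff.mp hreg
  simp only [h10, h00, h01, zero_mul, mul_zero, zero_add, add_zero, sub_zero, zero_sub]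
    at trace_eq minors_eq det_eq
  have h20 : M 2 0 ≠ 0 := fun h0 => by simp [h0] at det_eq
  have h11 : M 1 1 ≠ 0 := fun h0 => by simp [h0] at det_eq
  have h22 : M 2 2 = 3 - M 1 1 := by linear_combination trace_eq
  have h02 : M 0 2 = -(M 2 0 * M 1 1)⁻¹ := by
    field_simp
    linear_combination -det_eq
  refine ⟨h20, h11, h22, h02, fun h21 => ?_, fun h21 => ?_⟩
  · have h11' : M 1 1 = 1 := eq_one_of_sum_eq_three (t := M 2 2) (d := -(M 0 2 * M 2 0))
      trace_eq (by linear_combination minors_eq + M 1 2 * h21) (by linear_combination det_eq)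
    refine ⟨h11', fun h12 => regular (Matrix.ext fun i j => ?_)⟩
    fin_cases i <;> fin_cases j <;>
      simp [pow_two, Matrix.mul_apply, Fin.sum_univ_three, h10, h00, h01, h21, h11', h12, h22, h02,
        h20] <;> norm_num
  · field_simp
    linear_combination M 1 1 ^ 2 * trace_eq - M 1 1 * minors_eq + det_eq

theorem exists_param_regularUnipotentCell_longest :
    ∃ f : Fˣ × Fˣ × F → Matrix (Fin 3) (Fin 3) F,
      f.Injective ∧ Set.range f = regularUnipotentCell F 1 0 := by
  refine ⟨fun p => if p.2.2 = 0 then !![0, 0, -(p.1 : F)⁻¹; 0, 1, p.2.1; p.1, 0, 2] else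
      !![0, 0, -(p.1 * p.2.1 : F)⁻¹; 0, p.2.1, (1 - p.2.1) ^ 3 / (p.2.1 * p.2.2);
        p.1, p.2.2, 3 - p.2.1], ?_, Set.ext fun M => ⟨?_, fun hM => ?_⟩⟩
  · rintro ⟨a, b, x⟩ ⟨a', b', x'⟩ h
    by_cases hx : x = 0 <;> by_cases hx' : x' = 0 <;>
      simp only [hx, hx', if_true, if_false] at h <;> have entry := congrFun₂ h
    · exact Prod.ext (Units.ext (entry 2 0)) (Prod.ext (Units.ext (entry 1 2)) (hx.trans hx'.symm))
    · exact absurd (entry 2 1).symm hx'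
    · exact absurd (entry 2 1) hx
    · exact Prod.ext (Units.ext (entry 2 0)) (Prod.ext (Units.ext (entry 1 1)) (entry 2 1))
  · rintro ⟨⟨a, b, x⟩, rfl⟩
    by_cases hx : x = 0 <;> simp only [hx, if_true, if_false] <;>
      refine ⟨isRegularUnipotent_of_entries (by ring) ?_ ?_ fun h => ?_, rfl, rfl, rfl⟩
    · field_simp
      ring
    · field_simp
      ring
    · simpa [pow_two, Matrix.mul_apply, Fin.sum_univ_three, one_apply] using congrFun₂ h 1 0
    · field_simp
      ring
    · field_simp
      ring
    · simpa [pow_two, Matrix.mul_apply, Fin.sum_univ_three, one_apply, hx] using congrFun₂ h 0 1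
  · obtain ⟨h20, h11, h22, h02, of_eq_zero, of_ne_zero⟩ :=
      entries_of_mem_regularUnipotentCell_longest hM
    obtain ⟨-, h10, h00, h01⟩ := hM
    by_cases h21 : M 2 1 = 0
    · obtain ⟨h11', h12⟩ := of_eq_zero h21
      refine ⟨(Units.mk0 _ h20, Units.mk0 _ h12, 0),
        .trans (if_pos rfl) (.trans ?_ M.eta_fin_three.symm)⟩
      norm_num [h10, h00, h01, h21, h11', h22, h02]
    · refine ⟨(Units.mk0 _ h20, Units.mk0 _ h11, M 2 1),
        .trans (if_neg h21) (.trans ?_ M.eta_fin_three.symm)⟩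
      simp only [Units.val_mk0, h10, h00, h01, ← of_ne_zero h21, h22, h02]

theorem card_regularUnipotentCell [Fintype F] {i k : Fin 3} (hik : i ≠ k) :
    Nat.card (regularUnipotentCell F i k) = (Fintype.card F - 1) ^ 2 * Fintype.card F := by
  obtain ⟨f, f_injective, range_f⟩ : ∃ f : Fˣ × Fˣ × F → Matrix (Fin 3) (Fin 3) F,
      f.Injective ∧ Set.range f = regularUnipotentCell F i k := by
    fin_cases i <;> fin_cases k <;> first
      | exact absurd rfl hik
      | exact exists_param_regularUnipotentCell_one
      | exact exists_param_regularUnipotentCell_swap_one_two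
      | exact exists_param_regularUnipotentCell_swap_zero_one
      | exact exists_param_regularUnipotentCell_cycle
      | exact exists_param_regularUnipotentCell_cycle_inv
      | exact exists_param_regularUnipotentCell_longest
  rw [← range_f, Nat.card_congr (Equiv.ofInjective f f_injective).symm, Nat.card_eq_fintype_card,
    Fintype.card_prod, Fintype.card_prod, Fintype.card_units, ← mul_assoc, ← pow_two]

end Cells

section Bruhat

variable {n F : Type*} [Fintype n] [LinearOrder n] [Field F]

theorem exists_mem_borel_coe_eq_one_sub_vecMulVec {u v : n → F}
    (huv : ∀ r s, s ≤ r → u r * v s = 0) :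
    ∃ b ∈ borel n F, (b : Matrix n n F) = 1 - vecMulVec u v := by
  have triangular : (1 - vecMulVec u v).BlockTriangular id := fun r s hsr => by
    rw [Matrix.sub_apply, one_apply_ne (id_eq r ▸ hsr.ne'), vecMulVec_apply, huv r s hsr.le,
      sub_zero]
  have det_eq_one : (1 - vecMulVec u v).det = 1 := by
    rw [det_of_isUpperTriangular triangular]
    exact prod_eq_one fun r _ => by
      rw [Matrix.sub_apply, one_apply_eq, vecMulVec_apply, huv r r le_rfl, sub_zero]
  exact ⟨GeneralLinearGroup.mkOfDetNeZero _ (det_eq_one ▸ one_ne_zero), triangular, rfl⟩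

theorem exists_borel_pivot {g : GL n F} {i k : n} (hik : (g : Matrix n n F) i k ≠ 0)
    (hcol : ∀ r, i < r → (g : Matrix n n F) r k = 0)
    (hrow : ∀ l < k, (g : Matrix n n F) i l = 0) :
    ∃ b ∈ borel n F, ∃ b' ∈ borel n F, ∀ r l, ((b * g * b' : GL n F) : Matrix n n F) r l =
      if r = i then if l = k then g i k else 0
      else if l = k then 0 else g r l - g r k / g i k * g i l := by
  obtain ⟨b, hb, coe_b⟩ := exists_mem_borel_coe_eq_one_sub_vecMulVec
    (u := fun r => if r = i then 0 else g r k / g i k) (v := Pi.single i 1) fun r s hsr => by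
      rcases eq_or_ne s i with rfl | hs
      · rcases hsr.eq_or_lt with rfl | hlt
        · rw [if_pos rfl, zero_mul]
        · rw [if_neg hlt.ne', hcol r hlt, zero_div, zero_mul]
      · rw [Pi.single_eq_of_ne hs, mul_zero]
  obtain ⟨b', hb', coe_b'⟩ := exists_mem_borel_coe_eq_one_sub_vecMulVec
    (u := Pi.single k 1) (v := fun l => if l = k then 0 else g i l / g i k) fun r s hsr => by
      rcases eq_or_ne r k with rfl | hr
      · rcases hsr.eq_or_lt with rfl | hlt
        · rw [if_pos rfl, mul_zero]
        · rw [if_neg hlt.ne, hrow s hlt, zero_div, mul_zero]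
      · rw [Pi.single_eq_of_ne hr, zero_mul]
  refine ⟨b, hb, b', hb', fun r l => ?_⟩
  rw [Units.val_mul, Units.val_mul, coe_b, coe_b', Matrix.mul_sub, Matrix.mul_one, Matrix.sub_mul,
    Matrix.one_mul, vecMulVec_mul, single_one_vecMul, mul_vecMulVec, mulVec_single_one]
  by_cases hr : r = i <;> by_cases hl : l = k <;>
    simp [hr, hl, vecMulVec_apply, hik, mul_div_cancel₀]

/-- Column `j` has a nonzero entry which is the only nonzero entry of its row and of its column. -/
def HasIsolatedPivot (M : Matrix n n F) (j : n) : Prop :=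
  ∃ i, M i j ≠ 0 ∧ (∀ r ≠ i, M r j = 0) ∧ ∀ l ≠ j, M i l = 0

theorem exists_borel_hasIsolatedPivot_le (g : GL n F) (k : n)
    (hg : ∀ j < k, HasIsolatedPivot (g : Matrix n n F) j) :
    ∃ b ∈ borel n F, ∃ b' ∈ borel n F,
      ∀ j ≤ k, HasIsolatedPivot ((b * g * b' : GL n F) : Matrix n n F) j := by
  have column_ne_zero : ∃ i, (g : Matrix n n F) i k ≠ 0 := by
    by_contra! h
    exact (GeneralLinearGroup.det g).ne_zero (det_eq_zero_of_column_eq_zero k h)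
  obtain ⟨i, hik, i_max⟩ := {i | (g : Matrix n n F) i k ≠ 0}.toFinite.exists_maximal column_ne_zero
  have hcol : ∀ r, i < r → (g : Matrix n n F) r k = 0 := fun r hr => by
    by_contra h
    exact (i_max h hr.le).not_gt hr
  have hrow : ∀ j < k, (g : Matrix n n F) i j = 0 := fun j hj => by
    obtain ⟨p, -, column_eq_zero, row_eq_zero⟩ := hg j hj
    exact column_eq_zero i fun hip => hik (hip ▸ row_eq_zero k hj.ne')
  obtain ⟨b, hb, b', hb', entry⟩ := exists_borel_pivot hik hcol hrow
  refine ⟨b, hb, b', hb', fun j hj => ?_⟩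
  rcases hj.eq_or_lt with rfl | hlt
  · refine ⟨i, ?_, fun r hr => ?_, fun l hl => ?_⟩
    · rwa [entry, if_pos rfl, if_pos rfl]
    · rw [entry, if_neg hr, if_pos rfl]
    · rw [entry, if_pos rfl, if_neg hl]
  · obtain ⟨p, pivot_ne_zero, column_eq_zero, row_eq_zero⟩ := hg j hlt
    have hpi : p ≠ i := fun h => pivot_ne_zero (h ▸ hrow j hlt)
    refine ⟨p, ?_, fun r hr => ?_, fun l hl => ?_⟩
    · rwa [entry, if_neg hpi, if_neg hlt.ne, hrow j hlt, mul_zero, sub_zero]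
    · rw [entry, if_neg hlt.ne, if_neg hlt.ne, hrow j hlt, column_eq_zero r hr, mul_zero, sub_zero,
        ite_self]
    · rw [entry, if_neg hpi, row_eq_zero k hlt.ne', row_eq_zero l hl, zero_div, zero_mul, sub_zero,
        ite_self]

theorem exists_eq_diagGL_mul_permGL {g : GL n F}
    (hg : ∀ j, HasIsolatedPivot (g : Matrix n n F) j) :
    ∃ t : n → Fˣ, ∃ w : Equiv.Perm n, g = diagGL t * permGL F w := by
  choose p entry_ne_zero _ row_eq_zero using hg
  have p_injective : p.Injective := fun j l h => by
    by_contra hjl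
    exact entry_ne_zero l (h ▸ row_eq_zero j l (Ne.symm hjl))
  let w : Equiv.Perm n := Equiv.ofBijective p (Finite.injective_iff_bijective.mp p_injective)
  refine ⟨fun r => Units.mk0 (g (p (w.symm r)) (w.symm r)) (entry_ne_zero _), w,
    Units.ext (Matrix.ext fun r l => ?_)⟩
  obtain ⟨j, rfl⟩ := w.surjective r
  have p_eq : p j = w j := rfl
  rw [diagGL_mul_apply, Units.val_mk0, permGL_apply, w.symm_apply_apply, p_eq]
  rcases eq_or_ne l j with rfl | hlj
  · rw [if_pos rfl, mul_one]
  · rw [if_neg fun h => hlj (w.injective h).symm, mul_zero, ← p_eq, row_eq_zero j l hlj]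

theorem exists_bruhat (g : GL n F) :
    ∃ b ∈ borel n F, ∃ w : Equiv.Perm n, ∃ b' ∈ borel n F, g = b * permGL F w * b' := by
  suffices h : ∀ S : Finset n, (∀ k ∈ S, ∀ j ≤ k, j ∈ S) → ∃ b ∈ borel n F, ∃ b' ∈ borel n F,
      ∀ j ∈ S, HasIsolatedPivot ((b * g * b' : GL n F) : Matrix n n F) j by
    obtain ⟨b, hb, b', hb', pivots⟩ := h univ fun _ _ _ _ => mem_univ _
    obtain ⟨t, w, h_eq⟩ := exists_eq_diagGL_mul_permGL fun j => pivots j (mem_univ j)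
    refine ⟨b⁻¹ * diagGL t, mul_mem (inv_mem hb) (diagGL_mem_borel t), w, b'⁻¹, inv_mem hb', ?_⟩
    rw [mul_assoc b⁻¹, ← h_eq]
    group
  intro S
  induction S using Finset.induction_on_max with
  | empty => exact fun _ => ⟨1, one_mem _, 1, one_mem _, fun _ h => absurd h (notMem_empty _)⟩
  | insert k S S_lt ih =>
    intro lower
    have lt_mem : ∀ j < k, j ∈ S := fun j hj =>
      mem_of_mem_insert_of_ne (lower k (mem_insert_self k S) j hj.le) hj.ne
    obtain ⟨b, hb, b', hb', pivots⟩ := ih fun l hl j hj => lt_mem j (hj.trans_lt (S_lt l hl))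
    obtain ⟨c, hc, c', hc', pivots'⟩ := exists_borel_hasIsolatedPivot_le (b * g * b') k
      fun j hj => pivots j (lt_mem j hj)
    refine ⟨c * b, mul_mem hc hb, b' * c', mul_mem hb' hc', fun j hj => ?_⟩
    rw [← mul_assoc, mul_assoc c, mul_assoc c]
    exact pivots' j ((mem_insert.mp hj).elim le_of_eq fun h => (S_lt j h).le)

end Bruhat

section Equidistribution

variable {F : Type*} [Field F] [Fintype F]

omit [Fintype F] in
theorem permGL_mul_mem_borel_fin_three_iff {w : Equiv.Perm (Fin 3)} {u : GL (Fin 3) F} :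
    permGL F w * u ∈ borel (Fin 3) F ↔
      (u : Matrix (Fin 3) (Fin 3) F) (w⁻¹ 1) 0 = 0 ∧ (u : Matrix (Fin 3) (Fin 3) F) (w⁻¹ 2) 0 = 0 ∧
        (u : Matrix (Fin 3) (Fin 3) F) (w⁻¹ 2) 1 = 0 := by
  have entry (i k : Fin 3) : ((permGL F w * u : GL (Fin 3) F) : Matrix (Fin 3) (Fin 3) F) i k =
      (u : Matrix (Fin 3) (Fin 3) F) (w⁻¹ i) k := by
    rw [Units.val_mul, coe_permGL, PEquiv.toMatrix_toPEquiv_mul]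
    rfl
  refine ⟨fun h => ⟨?_, ?_, ?_⟩, fun ⟨h10, h20, h21⟩ i k hki => ?_⟩
  · rw [← entry]; exact h (by decide : (0 : Fin 3) < 1)
  · rw [← entry]; exact h (by decide : (0 : Fin 3) < 2)
  · rw [← entry]; exact h (by decide : (1 : Fin 3) < 2)
  · rw [entry]
    fin_cases i <;> fin_cases k <;> first
      | assumption
      | exact absurd hki (by decide)

/-- The regular unipotent elements of `GL₃(F)`, as a finset. -/
noncomputable def regularUnipotents (F : Type*) [Field F] [Fintype F] : Finset (GL (Fin 3) F) :=
  {u | IsRegularUnipotent (u : Matrix (Fin 3) (Fin 3) F)}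

theorem mem_regularUnipotents {u : GL (Fin 3) F} :
    u ∈ regularUnipotents F ↔ IsRegularUnipotent (u : Matrix (Fin 3) (Fin 3) F) :=
  mem_filter_univ u

theorem conj_mem_regularUnipotents (p u : GL (Fin 3) F) (hu : u ∈ regularUnipotents F) :
    p * u * p⁻¹ ∈ regularUnipotents F := by
  rw [mem_regularUnipotents] at hu ⊢
  exact (isConj_iff_isRegularUnipotent hu).mp ((isConj_val_iff _ _).mpr (isConj_iff.mpr ⟨p, rfl⟩))

theorem card_filter_permGL_mul_mem_borel (w : Equiv.Perm (Fin 3)) :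
    #{u ∈ regularUnipotents F | permGL F w * u ∈ borel (Fin 3) F} =
      (Fintype.card F - 1) ^ 2 * Fintype.card F := by
  rw [← card_regularUnipotentCell (w⁻¹.injective.ne (by decide : (1 : Fin 3) ≠ 2)),
    ← card_image_of_injective _ Units.val_injective, ← Set.ncard_coe_finset, ← Nat.card_coe_set_eq]
  congr! 2
  ext M
  simp only [coe_image, coe_filter, mem_regularUnipotents, permGL_mul_mem_borel_fin_three_iff]
  refine ⟨?_, fun hM => ⟨hM.1.isUnit.unit, hM, rfl⟩⟩
  rintro ⟨u, hu, rfl⟩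
  exact hu

theorem card_filter_mul_mem_borel (g : GL (Fin 3) F) :
    #{u ∈ regularUnipotents F | g * u ∈ borel (Fin 3) F} =
      (Fintype.card F - 1) ^ 2 * Fintype.card F := by
  obtain ⟨b, hb, w, b', hb', rfl⟩ := exists_bruhat g
  rw [← card_filter_permGL_mul_mem_borel w]
  refine card_equiv (MulAut.conj b').toEquiv fun u => ?_
  have mem_conj : b' * u * b'⁻¹ ∈ regularUnipotents F ↔ u ∈ regularUnipotents F := by
    refine ⟨fun h => ?_, conj_mem_regularUnipotents b' u⟩
    simpa only [mul_assoc, inv_inv, inv_mul_cancel_left, inv_mul_cancel, mul_one] using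
      conj_mem_regularUnipotents b'⁻¹ _ h
  have mem_borel_iff : b * permGL F w * b' * u ∈ borel (Fin 3) F ↔
      permGL F w * (b' * u * b'⁻¹) ∈ borel (Fin 3) F := by
    rw [← (borel (Fin 3) F).mul_mem_cancel_left hb (y := permGL F w * (b' * u * b'⁻¹)),
      ← (borel (Fin 3) F).mul_mem_cancel_right (inv_mem hb')]
    simp only [mul_assoc]
  exact (mem_filter.trans (and_congr mem_conj.symm mem_borel_iff)).trans mem_filter.symm

end Equidistribution

section Cardinalities

variable {n F : Type*} [Fintype n] [Field F] [Fintype F]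

theorem index_lineStabilizer [DecidableEq n] (i : n) :
    (lineStabilizer F i).index = ∑ k ∈ range (Fintype.card n), Fintype.card F ^ k := by
  let line : Projectivization F (n → F) :=
    .mk F (Pi.single i 1) (Pi.single_ne_zero_iff.mpr one_ne_zero)
  have : MulAction.IsPretransitive (SpecialLinearGroup n F) (Projectivization F (n → F)) :=
    MulAction.isPretransitive_of_is_two_pretransitive
  have : MulAction.IsPretransitive (GL n F) (Projectivization F (n → F)) :=
    .of_smul_eq (fun g : SpecialLinearGroup n F => (g : GL n F)) rfl
  have eq_stabilizer : lineStabilizer F i = MulAction.stabilizer (GL n F) line := by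
    ext g
    have image : g • (Pi.single i 1 : n → F) = (g : Matrix n n F).col i := mulVec_single_one _ _
    rw [mem_lineStabilizer, MulAction.mem_stabilizer_iff, Projectivization.smul_mk,
      Projectivization.mk_eq_mk_iff']
    simp only [image, funext_iff, Pi.smul_apply, col_apply, smul_eq_mul]
    refine ⟨fun h => ⟨(g : Matrix n n F) i i, fun j => ?_⟩, fun ⟨c, hc⟩ j hj => ?_⟩
    · rcases eq_or_ne j i with rfl | hj
      · rw [Pi.single_eq_same, mul_one]
      · rw [Pi.single_eq_of_ne hj, mul_zero, h j hj]
    · rw [← hc j, Pi.single_eq_of_ne hj, mul_zero]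
  rw [eq_stabilizer, MulAction.index_stabilizer_of_transitive,
    Projectivization.card_of_finrank F (n → F) (Module.finrank_fintype_fun_eq_card F),
    Nat.card_eq_fintype_card]

theorem card_borel [LinearOrder n] : Nat.card (borel n F) =
    ∏ i : n, ∏ j : n,
      if j < i then 1 else if j = i then Fintype.card F - 1 else Fintype.card F := by
  let entries (i j : n) : Finset F := if j < i then {0} else if j = i then {0}ᶜ else univ
  have card_entries (i j : n) : #(entries i j) =
      if j < i then 1 else if j = i then Fintype.card F - 1 else Fintype.card F := by
    simp only [entries]
    split_ifs
    · exact card_singleton 0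
    · rw [card_compl, card_singleton]
    · exact card_univ
  have image_eq : (univ.filter (· ∈ borel n F)).image (of.symm ∘ Units.val) =
      Fintype.piFinset fun i => Fintype.piFinset (entries i) := by
    ext M
    simp only [mem_image, mem_filter_univ, Fintype.mem_piFinset, Function.comp_apply]
    refine ⟨?_, fun hM => ?_⟩
    · rintro ⟨g, hg, rfl⟩ i j
      simp only [entries]
      split_ifs with hji h
      · exact mem_singleton.mpr (hg hji)
      · subst h
        rw [mem_compl, mem_singleton]
        exact left_ne_zero_of_mul_eq_one (congrFun (diag_mul_diag_inv_of_mem_borel hg) j)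
      · exact mem_univ _
    · have triangular : (of M).IsUpperTriangular := fun i j hji => by
        have entry := hM i j
        rwa [show entries i j = {0} from if_pos hji, mem_singleton] at entry
      have det_ne_zero : (of M).det ≠ 0 := by
        rw [det_of_isUpperTriangular triangular, prod_ne_zero_iff]
        exact fun i _ => by simpa [entries] using hM i i
      exact ⟨GeneralLinearGroup.mkOfDetNeZero _ det_ne_zero, triangular, rfl⟩
  rw [Nat.card_eq_fintype_card, Fintype.card_subtype,
    ← card_image_of_injective _ (of.symm.injective.comp Units.val_injective), image_eq]
  simp only [Fintype.card_piFinset, card_entries]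

theorem card_borel_fin_three :
    Nat.card (borel (Fin 3) F) = (Fintype.card F - 1) ^ 3 * Fintype.card F ^ 3 := by
  rw [card_borel, Fin.prod_univ_three]
  simp only [Fin.prod_univ_three, Fin.isValue, not_lt_zero, ↓reduceIte, one_ne_zero, Fin.reduceEq,
    Fin.lt_one_iff, one_mul, Fin.reduceLT, mul_one, lt_self_iff_false]
  ring

theorem card_GL_fin_three : Nat.card (GL (Fin 3) F) =
    (Fintype.card F + 1) * (Fintype.card F ^ 2 + Fintype.card F + 1) *
      Nat.card (borel (Fin 3) F) := by
  obtain ⟨r, hr⟩ : ∃ r, Fintype.card F = r + 1 := Nat.exists_eq_succ_of_ne_zero Fintype.card_ne_zero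
  rw [card_GL_field, card_borel_fin_three, Fin.prod_univ_three, hr, Nat.add_sub_cancel]
  have factor_zero : (r + 1) ^ 3 - (r + 1) ^ 0 = r * (r ^ 2 + 3 * r + 3) :=
    Nat.sub_eq_of_eq_add (by ring)
  have factor_one : (r + 1) ^ 3 - (r + 1) ^ 1 = (r + 1) * (r * (r + 2)) :=
    Nat.sub_eq_of_eq_add (by ring)
  have factor_two : (r + 1) ^ 3 - (r + 1) ^ 2 = (r + 1) ^ 2 * r :=
    Nat.sub_eq_of_eq_add (by ring)
  simp only [Fin.val_zero, Fin.val_one, Fin.val_two, factor_zero, factor_one, factor_two]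
  ring

theorem card_lineStabilizer_zero_fin_three :
    Nat.card (lineStabilizer F (0 : Fin 3)) =
      (Fintype.card F + 1) * Nat.card (borel (Fin 3) F) := by
  have card_eq := (lineStabilizer F (0 : Fin 3)).card_mul_index
  rw [index_lineStabilizer, card_GL_fin_three, Fintype.card_fin, sum_range_succ, sum_range_succ,
    sum_range_one] at card_eq
  refine Nat.eq_of_mul_eq_mul_right
    (by positivity : 0 < Fintype.card F ^ 2 + Fintype.card F + 1) ?_
  linear_combination card_eq

end Cardinalities

section Eigenfunctions

variable {n F : Type*} [Fintype n] [Field F]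

theorem mul_apply_self_of_unipotent [LinearOrder n] {h u : GL n F} {i : n}
    (hu : IsNilpotent ((u : Matrix n n F) - 1)) (hhP : h ∈ lineStabilizer F i)
    (huP : u ∈ lineStabilizer F i) :
    ((h * u : GL n F) : Matrix n n F) i i = (h : Matrix n n F) i i := by
  rw [lineStabilizer_mul_apply_self hhP huP, apply_self_eq_one_of_isNilpotent_sub_one hu huP,
    mul_one]
  exact fun j hj => by by_contra h; simp [h] at hj

theorem det_mul_of_unipotent [DecidableEq n] (h : GL n F) {u : GL n F}
    (hu : IsNilpotent ((u : Matrix n n F) - 1)) :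
    ((h * u : GL n F) : Matrix n n F).det = (h : Matrix n n F).det := by
  rw [Units.val_mul, det_mul, det_eq_one_of_isNilpotent_sub_one hu, mul_one]

variable [LinearOrder n]

theorem diag_mul_of_unipotent {h u : GL n F} (hu : IsNilpotent ((u : Matrix n n F) - 1))
    (hhB : h ∈ borel n F) (huB : u ∈ borel n F) :
    ((h * u : GL n F) : Matrix n n F).diag = (h : Matrix n n F).diag := by
  rw [diag_mul_of_mem_borel hhB huB]
  exact funext fun i => mul_right_eq_self₀.mpr
    (.inl (apply_self_eq_one_of_isNilpotent_sub_one hu huB fun _ => id))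

theorem prod_diag_of_mem_borel {g : GL n F} (hg : g ∈ borel n F) :
    ∏ i, (g : Matrix n n F).diag i = (g : Matrix n n F).det := (det_of_isUpperTriangular hg).symm

section Inflation

variable {K : Finset (GL n F)} {N : ℕ}

theorem translateSum_indicator_det (hunip : ∀ u ∈ K, IsNilpotent ((u : Matrix n n F) - 1))
    {H : Subgroup (GL n F)} (hN : ∀ g, #{u ∈ K | g * u ∈ H} = N) (δ : F → ℚ) :
    translateSum K ((H : Set (GL n F)).indicator fun g => δ (g : Matrix n n F).det) =
      (N : ℚ) • fun g : GL n F => δ (g : Matrix n n F).det := by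
  funext g
  rw [Pi.smul_apply, smul_eq_mul, mul_comm, ← hN g]
  exact translateSum_indicator (f := fun g : GL n F => δ (g : Matrix n n F).det) le_top
    (fun h _ u hu _ => congrArg δ (det_mul_of_unipotent h (hunip u hu))) (Subgroup.mem_top g)

variable [Fintype F]

theorem translateSum_borelInflation_of_isCuspidal (hK : ∀ p, ∀ u ∈ K, p * u * p⁻¹ ∈ K)
    (hunip : ∀ u ∈ K, IsNilpotent ((u : Matrix n n F) - 1))
    (hN : ∀ g, #{u ∈ K | g * u ∈ borel n F} = N) {θ : (n → F) → ℚ} (hθ : IsCuspidal θ) :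
    translateSum K (borelInflation θ) = (N : ℚ) • borelInflation θ := by
  funext g
  rw [Pi.smul_apply, smul_eq_mul]
  by_cases hg : g ∈ borel n F
  · rw [borelInflation_of_mem θ hg, mul_comm, ← hN g]
    exact translateSum_indicator (f := fun g : GL n F => θ (g : Matrix n n F).diag) le_rfl
      (fun h hh u hu huB => congrArg θ (diag_mul_of_unipotent (hunip u hu) hh huB)) hg
  · rw [borelInflation_of_notMem θ hg, mul_zero]
    obtain ⟨b, hb, w, b', hb', rfl⟩ := exists_bruhat g
    refine translateSum_borelInflation_bruhat hK hθ hb hb' ?_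
    rintro rfl
    exact hg (mul_mem (mul_mem hb (by rw [map_one]; exact one_mem _)) hb')

theorem translateSum_indicator_lineCharacter (hK : ∀ p, ∀ u ∈ K, p * u * p⁻¹ ∈ K)
    (hunip : ∀ u ∈ K, IsNilpotent ((u : Matrix n n F) - 1)) {H : Subgroup (GL n F)} {i : n}
    (hBH : borel n F ≤ H) (hHP : H ≤ lineStabilizer F i)
    (hN : ∀ g ∈ lineStabilizer F i, #{u ∈ K | g * u ∈ H} = N) {ξ : F → ℚ}
    (hξ : ∑ c : Fˣ, ξ c = 0) (δ : F → ℚ) :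
    translateSum K ((H : Set (GL n F)).indicator fun g =>
      ξ ((g : Matrix n n F) i i) * δ (g : Matrix n n F).det) = (N : ℚ) • lineInflation i ξ δ := by
  funext g
  rw [Pi.smul_apply, smul_eq_mul, lineInflation]
  by_cases hg : g ∈ lineStabilizer F i
  · rw [Set.indicator_of_mem (SetLike.mem_coe.mpr hg), mul_comm, ← hN g hg]
    refine translateSum_indicator hHP (fun h hh u hu huP => ?_) hg
    rw [mul_apply_self_of_unipotent (hunip u hu) hh huP, det_mul_of_unipotent h (hunip u hu)]
  · rw [Set.indicator_of_notMem (by simpa using hg), mul_zero]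
    obtain ⟨b, hb, w, b', hb', rfl⟩ := exists_bruhat g
    refine translateSum_indicator_lineCharacter_bruhat hK hBH hHP hξ δ hb hb' fun hw => hg ?_
    refine mul_mem (mul_mem (hBH.trans hHP hb) (mem_lineStabilizer.mpr fun j hj => ?_))
      (hBH.trans hHP hb')
    rw [permGL_apply, hw, if_neg hj]

end Inflation

section Induction

variable [Fintype F] {K : Finset (GL n F)} {N : ℕ}

theorem translateSum_translateSum_torusInduction_of_isCuspidal
    (hK : ∀ p, ∀ u ∈ K, p * u * p⁻¹ ∈ K)
    (hunip : ∀ u ∈ K, IsNilpotent ((u : Matrix n n F) - 1))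
    (hN : ∀ g, #{u ∈ K | g * u ∈ borel n F} = N) {θ : (n → F) → ℚ} (hθ : IsCuspidal θ) :
    translateSum K (translateSum K (torusInduction θ)) = (N ^ 2 : ℚ) • torusInduction θ := by
  simp only [torusInduction_apply, translateSum_conjSum hK,
    translateSum_borelInflation_of_isCuspidal hK hunip hN hθ, map_smul, smul_smul, sq]

theorem translateSum_translateSum_torusInduction_lineCharacter
    (hK : ∀ p, ∀ u ∈ K, p * u * p⁻¹ ∈ K)
    (hunip : ∀ u ∈ K, IsNilpotent ((u : Matrix n n F) - 1))
    (hN : ∀ g, #{u ∈ K | g * u ∈ borel n F} = N) {i : n} (hi : ∀ j, i ≤ j) {ξ : F → ℚ}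
    (hξ : ∑ c : Fˣ, ξ c = 0) (δ : F → ℚ) :
    translateSum K (translateSum K (torusInduction fun t => ξ (t i) * δ (∏ j, t j))) =
      (N * #{u ∈ K | u ∈ lineStabilizer F i} : ℚ) • conjSum (lineInflation i ξ δ) := by
  have hBP := borel_le_lineStabilizer (F := F) hi
  have line : translateSum K (lineInflation i ξ δ) =
      (#{u ∈ K | u ∈ lineStabilizer F i} : ℚ) • lineInflation i ξ δ :=
    translateSum_indicator_lineCharacter hK hunip hBP le_rfl
      (fun g hg => by simp only [Subgroup.mul_mem_cancel_left _ hg]) hξ δ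
  have inflation : borelInflation (fun t => ξ (t i) * δ (∏ j, t j)) =
      (borel n F : Set (GL n F)).indicator fun g =>
        ξ ((g : Matrix n n F) i i) * δ (g : Matrix n n F).det :=
    Set.indicator_congr fun _ hg => by rw [prod_diag_of_mem_borel hg, diag_apply]
  rw [torusInduction_apply, inflation, translateSum_conjSum hK,
    translateSum_indicator_lineCharacter hK hunip le_rfl hBP (fun g _ => hN g) hξ δ, map_smul,
    map_smul, translateSum_conjSum hK, line, map_smul, smul_smul]

theorem translateSum_translateSum_torusInduction_det
    (hK : ∀ p, ∀ u ∈ K, p * u * p⁻¹ ∈ K)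
    (hunip : ∀ u ∈ K, IsNilpotent ((u : Matrix n n F) - 1))
    (hN : ∀ g, #{u ∈ K | g * u ∈ borel n F} = N) (δ : F → ℚ) :
    translateSum K (translateSum K (torusInduction fun t => δ (∏ j, t j))) =
      (N * #K * Nat.card (GL n F) : ℚ) • fun g : GL n F => δ (g : Matrix n n F).det := by
  have inflation : borelInflation (fun t => δ (∏ j, t j)) =
      (borel n F : Set (GL n F)).indicator fun g => δ (g : Matrix n n F).det :=
    Set.indicator_congr fun _ hg => by rw [prod_diag_of_mem_borel hg]
  have top : translateSum K (fun g => δ (g : Matrix n n F).det) =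
      (#K : ℚ) • fun g : GL n F => δ (g : Matrix n n F).det := by
    simpa only [Subgroup.coe_top, Set.indicator_univ] using translateSum_indicator_det hunip
      (H := ⊤) (fun g => by simp only [Subgroup.mem_top, filter_true]) δ
  have conj : conjSum (fun g : GL n F => δ (g : Matrix n n F).det) =
      (Nat.card (GL n F) : ℚ) • fun g : GL n F => δ (g : Matrix n n F).det := by
    funext g
    simp only [conjSum_apply, Units.val_mul, det_units_conj', sum_const, nsmul_eq_mul, card_univ,
      Nat.card_eq_fintype_card, Pi.smul_apply, smul_eq_mul]
  rw [torusInduction_apply, inflation, translateSum_conjSum hK,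
    translateSum_indicator_det hunip hN, map_smul, map_smul, translateSum_conjSum hK, top,
    map_smul, conj, smul_smul, smul_smul]

end Induction

end Eigenfunctions

section Decomposition

variable {F : Type*} [Field F] [Fintype F]

/-- The indicator function of `b`, minus its mean over the multiplicative group. -/
noncomputable def centeredSingle (b : F) : F → ℚ := fun x =>
  Pi.single (M := fun _ => ℚ) b 1 x - (Fintype.card F - 1 : ℚ)⁻¹

theorem card_sub_one_ne_zero : (Fintype.card F - 1 : ℚ) ≠ 0 :=
  sub_ne_zero.mpr (Nat.cast_ne_one.mpr Fintype.one_lt_card.ne')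

theorem card_units_cast : (Fintype.card Fˣ : ℚ) = Fintype.card F - 1 := by
  rw [Fintype.card_units, Nat.cast_sub Fintype.card_pos, Nat.cast_one]

theorem sum_single_mul_units (b x : Fˣ) :
    ∑ c : Fˣ, Pi.single (M := fun _ => ℚ) (b : F) 1 ((x * c : Fˣ) : F) = 1 := by
  simp only [Pi.single_apply, Units.val_inj, ← eq_inv_mul_iff_mul_eq]
  rw [sum_ite_eq' univ, if_pos (mem_univ _)]

theorem sum_centeredSingle_mul_units (b x : Fˣ) :
    ∑ c : Fˣ, centeredSingle (b : F) ((x * c : Fˣ) : F) = 0 := by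
  simp only [centeredSingle, sum_sub_distrib, sum_single_mul_units, sum_const, card_univ,
    nsmul_eq_mul, card_units_cast]
  rw [mul_inv_cancel₀ card_sub_one_ne_zero, sub_self]

theorem sum_centeredSingle_units (b : Fˣ) : ∑ c : Fˣ, centeredSingle (b : F) c = 0 := by
  simpa only [one_mul] using sum_centeredSingle_mul_units b 1

theorem centeredSingle_of_ne {b x : Fˣ} (hxb : x ≠ b) :
    centeredSingle (b : F) x = -(Fintype.card F - 1 : ℚ)⁻¹ := by
  rw [centeredSingle, Pi.single_eq_of_ne (Units.val_injective.ne hxb), zero_sub]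

/-- The component of the indicator function of `β` orthogonal to the functions
`t ↦ ξ (t i) * δ (∏ j, t j)`. -/
noncomputable def cuspidalPart (β : Fin 3 → F) : (Fin 3 → F) → ℚ := fun t =>
  Pi.single (M := fun _ => ℚ) β 1 t -
    (Fintype.card F - 1 : ℚ)⁻¹ * ∑ i, centeredSingle (β i) (t i) *
      Pi.single (M := fun _ => ℚ) (∏ j, β j) 1 (∏ j, t j) -
    (Fintype.card F - 1 : ℚ)⁻¹ ^ 2 * Pi.single (M := fun _ => ℚ) (∏ j, β j) 1 (∏ j, t j)

theorem eq_of_prod_eq_prod {ι A : Type*} [Fintype ι] [CommGroup A] {f g : ι → A} {i : ι}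
    (hprod : ∏ j, f j = ∏ j, g j) (hoff : ∀ j ≠ i, f j = g j) : f = g := by
  rw [Fintype.prod_eq_mul_prod_compl i, Fintype.prod_eq_mul_prod_compl i g,
    prod_congr rfl fun j hj => hoff j (by simpa using hj), mul_left_inj] at hprod
  exact funext fun j => (eq_or_ne j i).elim (fun h => h ▸ hprod) (hoff j)

theorem cuspidalPart_coe_units (β s : Fin 3 → Fˣ) :
    cuspidalPart (fun i => (β i : F)) (fun i => (s i : F)) = if ∏ i, s i = ∏ i, β i then
      (if s = β then 1 else 0) - (Fintype.card F - 1 : ℚ)⁻¹ * ∑ i, centeredSingle (β i : F) (s i) -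
        (Fintype.card F - 1 : ℚ)⁻¹ ^ 2 else 0 := by
  have coe_eq : (fun i => (s i : F)) = (fun i => (β i : F)) ↔ s = β := by
    simp only [funext_iff, Units.val_inj]
  simp only [cuspidalPart, Pi.single_apply, coe_eq, ← Units.coe_prod, Units.val_inj]
  split_ifs with hs hprod hprod
  · simp only [mul_one]
  · exact absurd (hs ▸ rfl) hprod
  · simp only [mul_one]
  · simp only [mul_zero, sum_const_zero, sub_zero]

theorem sum_centeredSingle_mul_inv_units (b x : Fˣ) :
    ∑ c : Fˣ, centeredSingle (b : F) ((x * c⁻¹ : Fˣ) : F) = 0 :=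
  (Equiv.sum_comp (Equiv.inv Fˣ) fun c : Fˣ => centeredSingle (b : F) ((x * c : Fˣ) : F)).trans
    (sum_centeredSingle_mul_units b x)

omit [Fintype F] in
theorem prod_corootTranslate {n : Type*} [Fintype n] [DecidableEq n] (i j : n) (t : n → Fˣ)
    (c : Fˣ) : ∏ l, corootTranslate i j t c l = ∏ l, t l := by
  simp [corootTranslate, prod_mul_distrib]

omit [Fintype F] in
theorem corootTranslate_eq_iff {t β : Fin 3 → Fˣ} (hprod : ∏ l, t l = ∏ l, β l) {i j k : Fin 3}
    (hij : i ≠ j) (hki : k ≠ i) (hkj : k ≠ j) (c : Fˣ) :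
    corootTranslate i j t c = β ↔ c = (t j)⁻¹ * β j ∧ t k = β k := by
  have apply_j : corootTranslate i j t c j = t j * c := by simp [corootTranslate, hij.symm]
  have apply_k : corootTranslate i j t c k = t k := by simp [corootTranslate, hki, hkj]
  rw [eq_inv_mul_iff_mul_eq, ← apply_j, ← apply_k]
  refine ⟨fun h => h ▸ ⟨rfl, rfl⟩, fun ⟨hj, hk⟩ => ?_⟩
  refine eq_of_prod_eq_prod (i := i) ((prod_corootTranslate i j t c).trans hprod) fun l hli => ?_
  obtain rfl | rfl : l = j ∨ l = k := by omega
  · exact hj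
  · exact hk

theorem isCuspidal_cuspidalPart (β : Fin 3 → Fˣ) :
    IsCuspidal (cuspidalPart fun i => (β i : F)) := by
  intro i j hij t
  obtain ⟨k, hki, hkj, huniv⟩ : ∃ k, k ≠ i ∧ k ≠ j ∧ (univ : Finset (Fin 3)) = {i, j, k} := by
    revert i j; decide
  simp only [cuspidalPart_coe_units, prod_corootTranslate]
  split_ifs with hprod
  swap
  · exact sum_const_zero
  have sum_single : ∑ c, (if corootTranslate i j t c = β then 1 else 0 : ℚ) =
      if t k = β k then 1 else 0 := by
    simp only [corootTranslate_eq_iff hprod hij hki hkj, ite_and, sum_ite_eq', mem_univ, if_true]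
  have sum_i : ∑ c, centeredSingle (β i : F) (corootTranslate i j t c i : F) = 0 := by
    simpa [corootTranslate, hij] using sum_centeredSingle_mul_inv_units (β i) (t i)
  have sum_j : ∑ c, centeredSingle (β j : F) (corootTranslate i j t c j : F) = 0 := by
    simpa [corootTranslate, hij.symm] using sum_centeredSingle_mul_units (β j) (t j)
  have sum_k : ∑ c, centeredSingle (β k : F) (corootTranslate i j t c k : F) =
      (Fintype.card F - 1) * (if t k = β k then 1 else 0) - 1 := by
    simp only [corootTranslate, Pi.mul_apply, Pi.mulSingle_eq_of_ne hki, Pi.mulSingle_eq_of_ne hkj,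
      mul_one, sum_const, card_univ, nsmul_eq_mul, card_units_cast, centeredSingle, mul_sub,
      Pi.single_apply, Units.val_inj, mul_inv_cancel₀ card_sub_one_ne_zero]
  have sum_all : ∑ l, ∑ c, centeredSingle (β l : F) (corootTranslate i j t c l : F) =
      (Fintype.card F - 1) * (if t k = β k then 1 else 0) - 1 := by
    rw [huniv, sum_insert (by simp [hij, hki.symm]), sum_insert (by simpa using hkj.symm),
      sum_singleton, sum_i, sum_j, sum_k, zero_add, zero_add]
  rw [sum_sub_distrib, sum_sub_distrib, sum_single, ← mul_sum, sum_comm, sum_all, sum_const,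
    card_univ, nsmul_eq_mul, card_units_cast]
  field_simp [card_sub_one_ne_zero (F := F)]
  ring

theorem cuspidalPart_coe_units_of_ne {a β : Fin 3 → Fˣ} (hne : ∀ i j, a i ≠ β j)
    (hprod : ∏ i, a i = ∏ i, β i) : cuspidalPart (fun i => (β i : F)) (fun i => (a i : F)) =
      2 * (Fintype.card F - 1 : ℚ)⁻¹ ^ 2 := by
  rw [cuspidalPart_coe_units, if_pos hprod, if_neg fun h => hne 0 0 (congrFun h 0)]
  simp only [centeredSingle_of_ne (hne _ _), Fin.sum_univ_three]
  ring

theorem single_eq_cuspidalPart_add (β : Fin 3 → F) : Pi.single (M := fun _ => ℚ) β 1 =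
    cuspidalPart β + (Fintype.card F - 1 : ℚ)⁻¹ • ∑ i, (fun t : Fin 3 → F =>
      centeredSingle (β i) (t i) * Pi.single (M := fun _ => ℚ) (∏ j, β j) 1 (∏ j, t j)) +
    (Fintype.card F - 1 : ℚ)⁻¹ ^ 2 •
      fun t => Pi.single (M := fun _ => ℚ) (∏ j, β j) 1 (∏ j, t j) := by
  funext t
  simp only [cuspidalPart, Pi.add_apply, Pi.smul_apply, Finset.sum_apply, smul_eq_mul]
  ring

end Decomposition

section Counting

variable {F : Type*} [Field F] [Fintype F]

theorem isNilpotent_sub_one_of_mem_regularUnipotents (u : GL (Fin 3) F)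
    (hu : u ∈ regularUnipotents F) : IsNilpotent ((u : Matrix (Fin 3) (Fin 3) F) - 1) :=
  ⟨3, (mem_regularUnipotents.mp hu).1⟩

theorem card_regularUnipotents : #(regularUnipotents F) =
    (Fintype.card F - 1) ^ 2 * Fintype.card F *
      ((Fintype.card F + 1) * (Fintype.card F ^ 2 + Fintype.card F + 1)) := by
  have equidistributed := mul_card_eq_card_mul_of_equidistributed (le_top (a := borel (Fin 3) F))
    fun g _ => card_filter_mul_mem_borel g
  rw [Subgroup.card_top, card_GL_fin_three] at equidistributed
  simp only [Subgroup.mem_top, filter_true] at equidistributed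
  refine Nat.eq_of_mul_eq_mul_left (Nat.card_pos (α := borel (Fin 3) F)) ?_
  linear_combination -equidistributed

theorem card_regularUnipotents_lineStabilizer :
    #{u ∈ regularUnipotents F | u ∈ lineStabilizer F 0} =
      (Fintype.card F - 1) ^ 2 * Fintype.card F * (Fintype.card F + 1) := by
  have equidistributed := mul_card_eq_card_mul_of_equidistributed
    (borel_le_lineStabilizer (F := F) (Fin.zero_le (n := 3))) fun g _ => card_filter_mul_mem_borel g
  rw [card_lineStabilizer_zero_fin_three] at equidistributed
  refine Nat.eq_of_mul_eq_mul_left (Nat.card_pos (α := borel (Fin 3) F)) ?_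
  linear_combination -equidistributed

theorem torusInduction_lineCharacter {m : ℕ} (i : Fin (m + 1)) (ξ δ : F → ℚ) :
    torusInduction (fun t : Fin (m + 1) → F => ξ (t i) * δ (∏ j, t j)) =
      torusInduction fun t => ξ (t 0) * δ (∏ j, t j) := by
  rw [← torusInduction_comp_perm (fun t => ξ (t 0) * δ (∏ j, t j)) (Equiv.swap 0 i)]
  simp only [Function.comp_apply, Equiv.swap_apply_left, Equiv.prod_comp (Equiv.swap 0 i)]

theorem card_units_cast_nat : ((Fintype.card F - 1 : ℕ) : ℚ) = Fintype.card F - 1 :=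
  Nat.cast_pred Fintype.card_pos

section Values

variable {a β : Fin 3 → Fˣ} (ha : Function.Injective a)
  (hprod : ∏ i, a i = ∏ i, β i)

include hprod

theorem translateSum_translateSum_torusInduction_single_det :
    translateSum (regularUnipotents F) (translateSum (regularUnipotents F) (torusInduction fun t =>
      Pi.single (M := fun _ => ℚ) (∏ j, (β j : F)) 1 (∏ j, t j))) (diagGL a) =
    Nat.card (borel (Fin 3) F) * (Fintype.card F - 1 : ℚ) ^ 4 * Fintype.card F ^ 2 *
      ((Fintype.card F + 1) * (Fintype.card F ^ 2 + Fintype.card F + 1)) ^ 2 := by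
  have prod_val : ∏ k, (a k : F) = ∏ k, (β k : F) := by simp only [← Units.coe_prod, hprod]
  rw [translateSum_translateSum_torusInduction_det conj_mem_regularUnipotents
    isNilpotent_sub_one_of_mem_regularUnipotents card_filter_mul_mem_borel, Pi.smul_apply,
    coe_diagGL, det_diagonal, prod_val, Pi.single_eq_same, card_regularUnipotents,
    card_GL_fin_three]
  simp only [Nat.cast_mul, Nat.cast_add, Nat.cast_one, Nat.cast_pow, card_units_cast_nat,
    smul_eq_mul]
  ring

include ha

theorem translateSum_translateSum_torusInduction_cuspidalPart (hne : ∀ i j, a i ≠ β j) :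
    translateSum (regularUnipotents F) (translateSum (regularUnipotents F)
      (torusInduction (cuspidalPart fun i => (β i : F)))) (diagGL a) =
      Nat.card (borel (Fin 3) F) *
        (12 * (Fintype.card F - 1 : ℚ) ^ 2 * (Fintype.card F : ℚ) ^ 2) := by
  have value (σ : Equiv.Perm (Fin 3)) :
      cuspidalPart (fun i => (β i : F)) (fun i => (a (σ i) : F)) =
        2 * (Fintype.card F - 1 : ℚ)⁻¹ ^ 2 :=
    cuspidalPart_coe_units_of_ne (a := a ∘ σ) (fun i => hne (σ i))
      ((Equiv.prod_comp σ a).trans hprod)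
  rw [translateSum_translateSum_torusInduction_of_isCuspidal conj_mem_regularUnipotents
    isNilpotent_sub_one_of_mem_regularUnipotents card_filter_mul_mem_borel
    (isCuspidal_cuspidalPart β), Pi.smul_apply, torusInduction_diagGL ha]
  simp only [value, sum_const, card_univ, Fintype.card_perm, Fintype.card_fin, Nat.cast_mul,
    Nat.cast_pow, card_units_cast_nat, smul_eq_mul, nsmul_eq_mul]
  field_simp [card_sub_one_ne_zero (F := F)]
  norm_num [Nat.factorial]

theorem translateSum_translateSum_torusInduction_centeredSingle (hne : ∀ i j, a i ≠ β j)
    (i : Fin 3) :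
    translateSum (regularUnipotents F) (translateSum (regularUnipotents F) (torusInduction fun t =>
      centeredSingle (β i : F) (t i) * Pi.single (M := fun _ => ℚ) (∏ j, (β j : F)) 1 (∏ j, t j)))
      (diagGL a) =
    -3 * Nat.card (borel (Fin 3) F) * (Fintype.card F - 1 : ℚ) ^ 3 * Fintype.card F ^ 2 *
      (Fintype.card F + 1) ^ 2 := by
  have prod_val : ∏ k, (a k : F) = ∏ k, (β k : F) := by simp only [← Units.coe_prod, hprod]
  rw [torusInduction_lineCharacter, translateSum_translateSum_torusInduction_lineCharacter
    conj_mem_regularUnipotents isNilpotent_sub_one_of_mem_regularUnipotents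
    card_filter_mul_mem_borel Fin.zero_le (sum_centeredSingle_units (β i)), Pi.smul_apply,
    conjSum_lineInflation_diagGL ha, prod_val, Pi.single_eq_same,
    card_regularUnipotents_lineStabilizer, card_lineStabilizer_zero_fin_three]
  simp only [centeredSingle_of_ne (hne _ i), Fin.sum_univ_three, Nat.cast_mul, Nat.cast_add,
    Nat.cast_one, Nat.cast_pow, card_units_cast_nat, smul_eq_mul]
  field_simp [card_sub_one_ne_zero (F := F)]
  ring

theorem translateSum_translateSum_indicator_conjugatesOf (hβ : Function.Injective β)
    (hne : ∀ i j, a i ≠ β j) :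
    translateSum (regularUnipotents F) (translateSum (regularUnipotents F)
      ((conjugatesOf (diagGL β)).indicator 1)) (diagGL a) =
      (Fintype.card F - 1 : ℚ) ^ 2 * (Fintype.card F ^ 2 * (Fintype.card F + 1) ^ 2 *
        (Fintype.card F ^ 2 + Fintype.card F + 1) ^ 2 -
          9 * Fintype.card F ^ 2 * (Fintype.card F + 1) ^ 2 + 12 * Fintype.card F ^ 2) := by
  have card_ne_zero : (Nat.card (borel (Fin 3) F) : ℚ) ≠ 0 := Nat.cast_ne_zero.mpr Nat.card_pos.ne'
  refine mul_left_cancel₀ card_ne_zero ?_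
  have induction_eq := congrArg (fun f => translateSum (regularUnipotents F)
    (translateSum (regularUnipotents F) f) (diagGL a)) (torusInduction_single hβ)
  simp only [single_eq_cuspidalPart_add, map_add, map_smul, Pi.add_apply, Pi.smul_apply,
    smul_eq_mul, translateSum_translateSum_torusInduction_cuspidalPart ha hprod hne,
    translateSum_translateSum_torusInduction_centeredSingle ha hprod hne,
    translateSum_translateSum_torusInduction_single_det hprod, Fin.sum_univ_three]
    at induction_eq
  rw [← induction_eq]
  field_simp [card_sub_one_ne_zero (F := F)]
  ring

end Values

omit [Fintype F] in
theorem isRegularUnipotent_jordanBlock :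
    IsRegularUnipotent (!![1, 1, 0; 0, 1, 1; 0, 0, 1] : Matrix (Fin 3) (Fin 3) F) := by
  have sub_one : (!![1, 1, 0; 0, 1, 1; 0, 0, 1] : Matrix (Fin 3) (Fin 3) F) - 1 =
      !![0, 1, 0; 0, 0, 1; 0, 0, 0] := by
    ext i j
    fin_cases i <;> fin_cases j <;> simp
  refine ⟨?_, fun h => ?_⟩
  · rw [sub_one]
    ext i j
    fin_cases i <;> fin_cases j <;> simp [pow_succ, mul_apply, Fin.sum_univ_three]
  · have := congrFun (congrFun (sub_one ▸ h) 0) 2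
    simp [pow_succ, mul_apply, Fin.sum_univ_three] at this

theorem card_quadruples_diagGL {a b : Fin 3 → Fˣ} (ha : Function.Injective a)
    (hb : Function.Injective b) (hprod : (∏ i, a i) * ∏ i, b i = 1) (hgen : ∀ i j, a i * b j ≠ 1)
    {J : GL (Fin 3) F} (hJ : IsRegularUnipotent (J : Matrix (Fin 3) (Fin 3) F)) :
    (Nat.card {x : GL (Fin 3) F × GL (Fin 3) F × GL (Fin 3) F × GL (Fin 3) F //
      IsConj (diagGL a) x.1 ∧ IsConj (diagGL b) x.2.1 ∧ IsConj J x.2.2.1 ∧ IsConj J x.2.2.2 ∧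
        x.1 * x.2.1 * x.2.2.1 * x.2.2.2 = 1} : ℤ) =
      Nat.card (GL (Fin 3) F) / ((Fintype.card F : ℤ) - 1) *
        ((Fintype.card F : ℤ) ^ 2 * ((Fintype.card F : ℤ) + 1) ^ 2 *
          ((Fintype.card F : ℤ) ^ 2 + Fintype.card F + 1) ^ 2 -
            9 * (Fintype.card F : ℤ) ^ 2 * ((Fintype.card F : ℤ) + 1) ^ 2 +
              12 * (Fintype.card F : ℤ) ^ 2) := by
  have mem_iff (u : GL (Fin 3) F) : u ∈ regularUnipotents F ↔ IsConj J u := by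
    rw [mem_regularUnipotents, ← isConj_iff_isRegularUnipotent hJ, isConj_val_iff]
  have card_GL : (Nat.card (conjugatesOf (diagGL a)) * ((Fintype.card F : ℤ) - 1) ^ 2) *
      ((Fintype.card F : ℤ) - 1) = Nat.card (GL (Fin 3) F) := by
    rw [← card_conjugatesOf_diagGL ha, Fintype.card_fin]
    push_cast [Nat.cast_pred (R := ℤ) (Fintype.card_pos (α := F))]
    ring
  have sub_one_ne_zero : (Fintype.card F : ℤ) - 1 ≠ 0 :=
    sub_ne_zero.mpr (Nat.cast_ne_one.mpr Fintype.one_lt_card.ne')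
  rw [← card_GL, Int.mul_ediv_cancel _ sub_one_ne_zero, ← Int.cast_inj (α := ℚ), Int.cast_natCast,
    card_quadruples mem_iff, ← map_inv, translateSum_translateSum_indicator_conjugatesOf
      (β := b⁻¹) ha (by simpa using eq_inv_of_mul_eq_one_left hprod) (inv_injective.comp hb)
      fun i j => (hgen i j).imp eq_inv_iff_mul_eq_one.mp]
  push_cast
  ring

end Counting

end QuadrupleCount

open QuadrupleCount in
theorem GL3_quadruple_count_two_ss_two_unipotent_general
    {F : Type*} [Field F] [Fintype F] {a b : Fin 3 → F} (ha : Function.Injective a)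
    (hb : Function.Injective b) (hprod : (∏ i, a i) * ∏ i, b i = 1)
    (hgen : ∀ i j, a i * b j ≠ 1) :
    (Nat.card {x : Matrix (Fin 3) (Fin 3) F × Matrix (Fin 3) (Fin 3) F ×
        Matrix (Fin 3) (Fin 3) F × Matrix (Fin 3) (Fin 3) F //
        IsConj (Matrix.diagonal a) x.1 ∧ IsConj (Matrix.diagonal b) x.2.1 ∧
        IsConj (!![1, 1, 0; 0, 1, 1; 0, 0, 1] : Matrix (Fin 3) (Fin 3) F) x.2.2.1 ∧
        IsConj (!![1, 1, 0; 0, 1, 1; 0, 0, 1] : Matrix (Fin 3) (Fin 3) F) x.2.2.2 ∧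
        x.1 * x.2.1 * x.2.2.1 * x.2.2.2 = 1} : ℤ) =
      Nat.card (Matrix (Fin 3) (Fin 3) F)ˣ / ((Fintype.card F : ℤ) - 1) *
        ((Fintype.card F : ℤ) ^ 2 * ((Fintype.card F : ℤ) + 1) ^ 2 *
          ((Fintype.card F : ℤ) ^ 2 + Fintype.card F + 1) ^ 2 -
            9 * (Fintype.card F : ℤ) ^ 2 * ((Fintype.card F : ℤ) + 1) ^ 2 +
              12 * (Fintype.card F : ℤ) ^ 2) := by
  have a_ne_zero (i : Fin 3) : a i ≠ 0 :=
    Finset.prod_ne_zero_iff.mp (left_ne_zero_of_mul_eq_one hprod) i (Finset.mem_univ i)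
  have b_ne_zero (i : Fin 3) : b i ≠ 0 :=
    Finset.prod_ne_zero_iff.mp (right_ne_zero_of_mul_eq_one hprod) i (Finset.mem_univ i)
  lift a to Fin 3 → Fˣ using fun i => (a_ne_zero i).isUnit
  lift b to Fin 3 → Fˣ using fun i => (b_ne_zero i).isUnit
  obtain ⟨J, hJ⟩ := (isRegularUnipotent_jordanBlock (F := F)).isUnit
  rw [← hJ, ← coe_diagGL, ← coe_diagGL, card_quadruples_val]
  exact card_quadruples_diagGL ha.of_comp hb.of_comp (Units.ext (by simpa using hprod))
    (fun i j h => hgen i j (congrArg Units.val h)) (hJ ▸ isRegularUnipotent_jordanBlock)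

/-- Genus 0, four punctures, `GL₃`, two generic regular semisimple classes and two regular
unipotent classes: the number of quadruples `(S₁,S₂,S₃,S₄) ∈ C₁ × C₂ × C₃ × C₄` with
`S₁S₂S₃S₄ = 1` is `(|GL₃(F)|/(q−1))·(q²(q+1)²(q²+q+1)² − 9q²(q+1)² + 12q²)`. -/
theorem GL3_quadruple_count_two_ss_two_unipotent
    {F : Type*} [Field F] [Fintype F] (hchar2 : ringChar F ≠ 2) (hchar3 : ringChar F ≠ 3)
    (q : ℕ) (hq : q = Fintype.card F)
    (a₁ a₂ a₃ b₁ b₂ b₃ : F)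
    (ha0 : a₁ ≠ 0) (ha0' : a₂ ≠ 0) (ha0'' : a₃ ≠ 0)
    (hb0 : b₁ ≠ 0) (hb0' : b₂ ≠ 0) (hb0'' : b₃ ≠ 0)
    (ha : Function.Injective ![a₁, a₂, a₃]) (hb : Function.Injective ![b₁, b₂, b₃])
    (hprod : (a₁ * a₂ * a₃) * (b₁ * b₂ * b₃) = 1)
    (hgen : ∀ i j : Fin 3, ![a₁, a₂, a₃] i * ![b₁, b₂, b₃] j ≠ 1) :
    (Nat.card {x : Matrix (Fin 3) (Fin 3) F × Matrix (Fin 3) (Fin 3) F ×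
        Matrix (Fin 3) (Fin 3) F × Matrix (Fin 3) (Fin 3) F //
        IsConj (Matrix.diagonal ![a₁, a₂, a₃]) x.1 ∧
        IsConj (Matrix.diagonal ![b₁, b₂, b₃]) x.2.1 ∧
        IsConj (!![1, 1, 0; 0, 1, 1; 0, 0, 1] : Matrix (Fin 3) (Fin 3) F) x.2.2.1 ∧
        IsConj (!![1, 1, 0; 0, 1, 1; 0, 0, 1] : Matrix (Fin 3) (Fin 3) F) x.2.2.2 ∧
        x.1 * x.2.1 * x.2.2.1 * x.2.2.2 = 1} : ℤ) =
      ((Nat.card (Matrix (Fin 3) (Fin 3) F)ˣ : ℤ) / ((q : ℤ) - 1)) *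
        ((q : ℤ) ^ 2 * ((q : ℤ) + 1) ^ 2 * ((q : ℤ) ^ 2 + q + 1) ^ 2 -
          9 * (q : ℤ) ^ 2 * ((q : ℤ) + 1) ^ 2 + 12 * (q : ℤ) ^ 2) := by
  subst hq
  exact GL3_quadruple_count_two_ss_two_unipotent_general ha hb
    (by simpa [Fin.prod_univ_three] using hprod) hgen
end
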